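/- There exists a universal constant C > 0 such that for every n ≥ 2 and every convex body K ⊆ ℝⁿ in isotropic position, M(K) ≤ C·κ_n·√(log(n+1))/√n. -/

import Mathlib

/-!
The bound is proved by a discrete form of stochastic localization.

Start from the uniform measure on `K` and repeatedly multiply it by an affine factor
`1 + ⟨v, x - a⟩`, with `a` the current barycentre and `v = ε A⁻¹ g`, where `A` is the current
covariance and `g` a standard Gaussian vector. The tilted measure is again a log-concave probability
measure on `K`, its barycentre is `a + ε g`, and its covariance changes to first order by the
contraction of the third-moment tensor with `v` (`LocState.tilt`, `LocState.bary_tilt`,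
`LocState.covMat_tilt`). Hence the barycentre performs a Gaussian random walk which stays in `K`, as
long as `A` remains close to the identity.

Closeness is measured by `Φ = tr (A - 1)^m` with `m` even of order `log n`. After whitening, the
definition of `κₙ` bounds the third-moment tensor (`LocState.whitened_le`, `trace_contract_le`), and
so the mean growth of `Φ` in a step is at most of order `ε² m² κₙ² tr (A - 1)^(m-2)` plus `O(ε³)`
(`sum_trace_contract_le`, `LocState.step`). Finiteness of the supremum defining `κₙ` comes from
`exists_third_moment_bound`, and `κₙ ≥ 2` from products of exponential laws.

Let `U = √T · E ‖G‖_K` with `G` a standard Gaussian vector. While `Φ < 2^{-m}`, the walk stays in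
`K`, where the gauge is at most `1`; once `Φ ≥ 2^{-m}`, subadditivity of the gauge bounds the
remaining Gaussian average by `1 + U`. As `ε → 0` this yields `U ≤ 1 + U · 2^m e^{λT} c` with
`λ` of order `m² κₙ²` and `c` tiny (`gau_mean_le`). For `T` of order `1 / (κₙ² log n)` the factor is
at most `1/2`, so `U ≤ 2`. Finally, integration in polar coordinates gives
`M(K) · E |G| = E ‖G‖_K`, and `E |G|` is at least of order `√n`.
-/

open MeasureTheory Real Pointwise RealInnerProductSpace
open scoped ENNReal

noncomputable section

/-- A convex body: a compact convex set with non-empty interior. -/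
def IsConvexBody {n : ℕ} (K : Set (EuclideanSpace ℝ (Fin n))) : Prop :=
  IsCompact K ∧ Convex ℝ K ∧ (interior K).Nonempty

/-- The uniform probability measure on a set `K`. -/
def unifOn {n : ℕ} (K : Set (EuclideanSpace ℝ (Fin n))) : Measure (EuclideanSpace ℝ (Fin n)) :=
  (volume K)⁻¹ • volume.restrict K

/-- A probability measure `μ` on `ℝⁿ` is isotropic: its barycenter vanishes and its
covariance matrix is the identity. -/
def IsIsotropicMeasure {n : ℕ} (μ : Measure (EuclideanSpace ℝ (Fin n))) : Prop :=
  (∀ i, ∫ x, x i ∂μ = 0) ∧ ∀ i j, ∫ x, x i * x j ∂μ = if i = j then 1 else 0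

/-- A convex body is in isotropic position if the uniform probability measure on it
is isotropic. -/
def IsIsotropicBody {n : ℕ} (K : Set (EuclideanSpace ℝ (Fin n))) : Prop :=
  IsIsotropicMeasure (unifOn K)

/-- A log-concave density: nonnegative, and multiplicatively convex. This is equivalent to:
`{p > 0}` is convex and `log (1/p)` is convex on it. -/
def IsLogConcaveDensity {n : ℕ} (p : EuclideanSpace ℝ (Fin n) → ℝ) : Prop :=
  (∀ x, 0 ≤ p x) ∧ ∀ x y : EuclideanSpace ℝ (Fin n), ∀ t : ℝ, 0 ≤ t → t ≤ 1 →
    p x ^ t * p y ^ (1 - t) ≤ p (t • x + (1 - t) • y)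

/-- A measure on `ℝⁿ` is log-concave if it has a log-concave density w.r.t. Lebesgue. -/
def IsLogConcaveMeasure {n : ℕ} (μ : Measure (EuclideanSpace ℝ (Fin n))) : Prop :=
  ∃ p : EuclideanSpace ℝ (Fin n) → ℝ, Measurable p ∧ IsLogConcaveDensity p ∧
    μ = volume.withDensity fun x => ENNReal.ofReal (p x)

/-- The standard Gaussian probability measure on `ℝⁿ`. -/
def stdGaussian (n : ℕ) : Measure (EuclideanSpace ℝ (Fin n)) :=
  volume.withDensity fun x => ENNReal.ofReal ((2 * π) ^ (-(n : ℝ) / 2) * Real.exp (-‖x‖ ^ 2 / 2))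

/-- The Poincaré constant of a measure: the least `A ≥ 0` such that
`Var f ≤ A ⬝ E |∇ f|²` for all locally Lipschitz `f`. -/
def poincareConst {n : ℕ} (μ : Measure (EuclideanSpace ℝ (Fin n))) : ℝ :=
  sInf {A : ℝ | 0 ≤ A ∧ ∀ f : EuclideanSpace ℝ (Fin n) → ℝ, LocallyLipschitz f →
    ∫ x, (f x - ∫ y, f y ∂μ) ^ 2 ∂μ ≤ A * ∫ x, ‖gradient f x‖ ^ 2 ∂μ}

/-- The KLS constant `ψₙ`. -/
def KLSConst (n : ℕ) : ℝ :=
  sSup {s : ℝ | ∃ μ : Measure (EuclideanSpace ℝ (Fin n)), IsProbabilityMeasure μ ∧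
    IsLogConcaveMeasure μ ∧ IsIsotropicMeasure μ ∧ s = Real.sqrt (poincareConst μ)}

/-- The Hilbert-Schmidt norm of a matrix. -/
def hsNorm {n : ℕ} (M : Matrix (Fin n) (Fin n) ℝ) : ℝ :=
  Real.sqrt (∑ i, ∑ j, (M i j) ^ 2)

/-- The coefficient `κₙ`, the supremum of `‖E [X₁ (X ⊗ X)]‖_HS` over all isotropic
log-concave random vectors `X` in `ℝⁿ`. -/
def kappaConst (n : ℕ) : ℝ :=
  sSup {s : ℝ | ∃ μ : Measure (EuclideanSpace ℝ (Fin n)), IsProbabilityMeasure μ ∧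
    IsLogConcaveMeasure μ ∧ IsIsotropicMeasure μ ∧ ∃ h : 0 < n,
    s = hsNorm (Matrix.of fun i j => ∫ x, x ⟨0, h⟩ * (x i * x j) ∂μ)}

/-- A gauge function on `ℝⁿ`: non-negative, convex, positively homogeneous. -/
def IsGauge {n : ℕ} (f : EuclideanSpace ℝ (Fin n) → ℝ) : Prop :=
  (∀ x, 0 ≤ f x) ∧ ConvexOn ℝ Set.univ f ∧
    ∀ (c : ℝ), 0 ≤ c → ∀ x, f (c • x) = c * f x

/-- `M(K)`: the mean of the Minkowski functional of `K` over the unit sphere, w.r.t. the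
uniform probability measure on the sphere. -/
def Mparam (n : ℕ) (K : Set (EuclideanSpace ℝ (Fin n))) : ℝ :=
  ∫ x : Metric.sphere (0 : EuclideanSpace ℝ (Fin n)) 1,
    gauge K x ∂(((volume : Measure (EuclideanSpace ℝ (Fin n))).toSphere Set.univ)⁻¹ •
      (volume : Measure (EuclideanSpace ℝ (Fin n))).toSphere)

/-- The polar body. -/
def polarBody {n : ℕ} (K : Set (EuclideanSpace ℝ (Fin n))) : Set (EuclideanSpace ℝ (Fin n)) :=
  {x | ∀ y ∈ K, ⟪x, y⟫ ≤ 1}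

/-- `R(K)`: the maximal Euclidean norm of a point of `K`. -/
def Rparam {n : ℕ} (K : Set (EuclideanSpace ℝ (Fin n))) : ℝ :=
  sSup {r : ℝ | ∃ x ∈ K, r = ‖x‖}

/-- The operator norm `‖A : K → T‖ = sup_{x ≠ 0} ‖Ax‖_T / ‖x‖_K` (Minkowski functionals). -/
def mapNorm {n : ℕ} (K T : Set (EuclideanSpace ℝ (Fin n)))
    (A : Matrix (Fin n) (Fin n) ℝ) : ℝ :=
  sSup {r : ℝ | ∃ x : EuclideanSpace ℝ (Fin n), x ≠ 0 ∧
    r = gauge T (Matrix.toEuclideanLin A x) / gauge K x}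

/-- The ℓ₂ operator norm of a matrix. -/
def matOpNorm {n : ℕ} (M : Matrix (Fin n) (Fin n) ℝ) : ℝ :=
  ‖LinearMap.toContinuousLinearMap (Matrix.toEuclideanLin M)‖

/-! ### Traces of powers of symmetric matrices -/

section MatrixTrace

open Matrix

variable {n : ℕ}

lemma exists_orthogonal_diag (B : Matrix (Fin n) (Fin n) ℝ) (hB : B.IsHermitian) :
    ∃ (U : Matrix (Fin n) (Fin n) ℝ) (l : Fin n → ℝ), Uᵀ * U = 1 ∧ U * Uᵀ = 1 ∧
      B = U * diagonal l * Uᵀ := by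
  refine ⟨hB.eigenvectorUnitary, hB.eigenvalues, ?_, ?_, ?_⟩
  · have := Unitary.coe_star_mul_self hB.eigenvectorUnitary
    simpa [star_eq_conjTranspose] using this
  · have := Unitary.coe_mul_star_self hB.eigenvectorUnitary
    simpa [star_eq_conjTranspose] using this
  · conv_lhs => rw [hB.spectral_theorem, Unitary.conjStarAlgAut_apply]
    simp [star_eq_conjTranspose]

lemma conj_diag_pow {U : Matrix (Fin n) (Fin n) ℝ} {l : Fin n → ℝ} (h : Uᵀ * U = 1)
    (h' : U * Uᵀ = 1) (k : ℕ) :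
    (U * diagonal l * Uᵀ) ^ k = U * diagonal (fun i => l i ^ k) * Uᵀ := by
  induction k with
  | zero => simp [h']
  | succ k ih =>
    rw [pow_succ, ih]
    calc U * diagonal (fun i => l i ^ k) * Uᵀ * (U * diagonal l * Uᵀ)
        = U * diagonal (fun i => l i ^ k) * (Uᵀ * U) * diagonal l * Uᵀ := by noncomm_ring
      _ = U * (diagonal (fun i => l i ^ k) * diagonal l) * Uᵀ := by rw [h]; noncomm_ring
      _ = _ := by rw [diagonal_mul_diagonal]; simp [pow_succ]

lemma trace_conj_diag {U : Matrix (Fin n) (Fin n) ℝ} {l : Fin n → ℝ} (h : Uᵀ * U = 1) :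
    trace (U * diagonal l * Uᵀ) = ∑ i, l i := by
  rw [trace_mul_comm, ← Matrix.mul_assoc, h, Matrix.one_mul, trace_diagonal]

lemma scalar_mixed {x y : ℝ} {a b : ℕ} (hab : Even (a + b)) :
    x ^ a * y ^ b + y ^ a * x ^ b ≤ x ^ (a + b) + y ^ (a + b) := by
  have h1 : x ^ (a + b) = |x| ^ a * |x| ^ b := by rw [← pow_add, hab.pow_abs]
  have h2 : y ^ (a + b) = |y| ^ a * |y| ^ b := by rw [← pow_add, hab.pow_abs]
  have h3 : x ^ a * y ^ b ≤ |x| ^ a * |y| ^ b := by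
    rw [← abs_pow, ← abs_pow, ← abs_mul]; exact le_abs_self _
  have h4 : y ^ a * x ^ b ≤ |y| ^ a * |x| ^ b := by
    rw [← abs_pow, ← abs_pow, ← abs_mul]; exact le_abs_self _
  have h5 : 0 ≤ (|x| ^ a - |y| ^ a) * (|x| ^ b - |y| ^ b) := by
    rcases le_total |x| |y| with h | h
    · exact mul_nonneg_of_nonpos_of_nonpos
        (sub_nonpos.2 (pow_le_pow_left₀ (abs_nonneg _) h _))
        (sub_nonpos.2 (pow_le_pow_left₀ (abs_nonneg _) h _))
    · exact mul_nonneg (sub_nonneg.2 (pow_le_pow_left₀ (abs_nonneg _) h _))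
        (sub_nonneg.2 (pow_le_pow_left₀ (abs_nonneg _) h _))
  rw [h1, h2]
  nlinarith

lemma trace_diag_mixed (l r : Fin n → ℝ) (D : Matrix (Fin n) (Fin n) ℝ) (hD : Dᵀ = D) :
    trace (diagonal l * D * diagonal r * D) = ∑ i, ∑ j, l i * r j * D i j ^ 2 := by
  simp only [trace, diag_apply, Matrix.mul_apply (M := diagonal l * D * diagonal r),
    mul_diagonal, diagonal_mul]
  refine Finset.sum_congr rfl fun i _ => Finset.sum_congr rfl fun j _ => ?_
  have : D j i = D i j := by conv_lhs => rw [← hD, transpose_apply]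
  rw [this]; ring

/-- In an eigenbasis of `B` both sides are weighted sums of the `D i j ^ 2`, and the weights compare
by the rearrangement inequality `scalar_mixed`. -/
lemma trace_mixed_le {B D : Matrix (Fin n) (Fin n) ℝ} (hB : B.IsHermitian) (hD : Dᵀ = D)
    {a b : ℕ} (hab : Even (a + b)) :
    trace (B ^ a * D * B ^ b * D) ≤ trace (B ^ (a + b) * D * D) := by
  obtain ⟨U, l, h1, h2, rfl⟩ := exists_orthogonal_diag B hB
  set D' := Uᵀ * D * U with hD'
  have hsymm : D'ᵀ = D' := by simp [hD', hD, Matrix.mul_assoc]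
  have key : ∀ a b : ℕ, trace ((U * diagonal l * Uᵀ) ^ a * D * (U * diagonal l * Uᵀ) ^ b * D)
      = ∑ i, ∑ j, l i ^ a * l j ^ b * D' i j ^ 2 := by
    intro a b
    rw [conj_diag_pow h1 h2, conj_diag_pow h1 h2, ← trace_diag_mixed _ _ D' hsymm, hD']
    have : U * diagonal (fun i => l i ^ a) * Uᵀ * D * (U * diagonal (fun i => l i ^ b) * Uᵀ) * D
        = U * (diagonal (fun i => l i ^ a) * (Uᵀ * D * U) * diagonal (fun i => l i ^ b) *
          (Uᵀ * D)) := by noncomm_ring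
    rw [this, trace_mul_comm]
    congr 1
    noncomm_ring
  have hk0 := key (a + b) 0
  simp only [pow_zero, mul_one] at hk0
  rw [key, hk0]
  have sw : ∀ (f : Fin n → Fin n → ℝ), ∑ i, ∑ j, f i j * D' i j ^ 2
      = ∑ i, ∑ j, (f i j + f j i) / 2 * D' i j ^ 2 := by
    intro f
    have e1 : ∑ i, ∑ j, f j i * D' i j ^ 2 = ∑ i, ∑ j, f i j * D' i j ^ 2 := by
      rw [Finset.sum_comm]
      refine Finset.sum_congr rfl fun i _ => Finset.sum_congr rfl fun j _ => ?_
      have : D' j i = D' i j := by conv_lhs => rw [← hsymm, transpose_apply]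
      rw [this]
    have e2 : ∑ i, ∑ j, (f i j + f j i) / 2 * D' i j ^ 2
        = (∑ i, ∑ j, f i j * D' i j ^ 2 + ∑ i, ∑ j, f j i * D' i j ^ 2) / 2 := by
      rw [← Finset.sum_add_distrib, Finset.sum_div]
      refine Finset.sum_congr rfl fun i _ => ?_
      rw [← Finset.sum_add_distrib, Finset.sum_div]
      exact Finset.sum_congr rfl fun j _ => by ring
    rw [e2, e1]; ring
  rw [sw (fun i j => l i ^ a * l j ^ b), sw (fun i j => l i ^ (a + b))]
  refine Finset.sum_le_sum fun i _ => Finset.sum_le_sum fun j _ => ?_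
  refine mul_le_mul_of_nonneg_right ?_ (sq_nonneg _)
  have := scalar_mixed (x := l i) (y := l j) hab
  linarith

lemma trace_pow_compare {B : Matrix (Fin n) (Fin n) ℝ} (hB : B.IsHermitian) {k : ℕ} (hk : Even k)
    {x : ℝ} (hx : 0 < x) :
    x ^ 2 * trace (B ^ k) ≤ trace (B ^ (k + 2)) + n * x ^ (k + 2) := by
  obtain ⟨U, l, h1, h2, rfl⟩ := exists_orthogonal_diag B hB
  rw [conj_diag_pow h1 h2, conj_diag_pow h1 h2, trace_conj_diag h1, trace_conj_diag h1,
    Finset.mul_sum]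
  have : (n : ℝ) * x ^ (k + 2) = ∑ _i : Fin n, x ^ (k + 2) := by simp
  rw [this, ← Finset.sum_add_distrib]
  refine Finset.sum_le_sum fun i _ => ?_
  have := scalar_mixed (x := x) (y := l i) (a := 2) (b := k) (by
    rw [Nat.even_add]; simp [hk])
  have h3 : 0 ≤ l i ^ 2 * x ^ k := by positivity
  rw [add_comm k 2]
  linarith

/-- A small trace of an even power forces all eigenvalues into `(-1/2, 1/2)`. -/
lemma eigen_of_trace_lt {B : Matrix (Fin n) (Fin n) ℝ} (hB : B.IsHermitian) {m : ℕ} (hm : Even m)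
    (h : trace (B ^ m) < (1 / 2) ^ m) :
    ∃ (U : Matrix (Fin n) (Fin n) ℝ) (l : Fin n → ℝ), Uᵀ * U = 1 ∧ U * Uᵀ = 1 ∧
      B = U * diagonal l * Uᵀ ∧ ∀ i, |l i| < 1 / 2 := by
  obtain ⟨U, l, h1, h2, rfl⟩ := exists_orthogonal_diag B hB
  refine ⟨U, l, h1, h2, rfl, fun i => ?_⟩
  rw [conj_diag_pow h1 h2, trace_conj_diag h1] at h
  have h3 : l i ^ m ≤ ∑ i, l i ^ m :=
    Finset.single_le_sum (f := fun i => l i ^ m) (fun j _ => hm.pow_nonneg _) (Finset.mem_univ i)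
  have h4 : |l i| ^ m < (1 / 2) ^ m := by rw [hm.pow_abs]; linarith
  exact lt_of_pow_lt_pow_left₀ m (by norm_num) h4

lemma trace_pow_even_nonneg {B : Matrix (Fin n) (Fin n) ℝ} (hB : B.IsHermitian) {m : ℕ}
    (hm : Even m) : 0 ≤ trace (B ^ m) := by
  obtain ⟨U, l, h1, h2, rfl⟩ := exists_orthogonal_diag B hB
  rw [conj_diag_pow h1 h2, trace_conj_diag h1]
  exact Finset.sum_nonneg fun i _ => hm.pow_nonneg _

end MatrixTrace

/-! ### Second-order expansion of `(B + D) ^ m` -/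

section Expansion

variable {R : Type*} [Ring R]

/-- The part of `(B + D) ^ m` of degree one in `D`. -/
def powLin (B D : R) : ℕ → R
  | 0 => 0
  | m + 1 => powLin B D m * B + B ^ m * D

/-- The part of `(B + D) ^ m` of degree two in `D`. -/
def powQuad (B D : R) : ℕ → R
  | 0 => 0
  | m + 1 => powQuad B D m * B + powLin B D m * D

lemma powLin_bound {R : Type*} [NormedRing R] [NormOneClass R] (r : ℝ) (hr : 1 ≤ r) (m : ℕ) :
    ∃ C : ℝ, 0 ≤ C ∧ ∀ B D : R, ‖B‖ ≤ r → ‖D‖ ≤ r → ‖powLin B D m‖ ≤ C * ‖D‖ := by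
  induction m with
  | zero => exact ⟨0, le_rfl, fun B D _ _ => by simp [powLin]⟩
  | succ m ih =>
    obtain ⟨C, hC, h⟩ := ih
    refine ⟨C * r + r ^ m, by positivity, fun B D hB hD => ?_⟩
    have h1 := h B D hB hD
    calc ‖powLin B D m * B + B ^ m * D‖ ≤ ‖powLin B D m‖ * ‖B‖ + ‖B‖ ^ m * ‖D‖ := by
          refine (norm_add_le _ _).trans (add_le_add (norm_mul_le _ _) ?_)
          refine (norm_mul_le _ _).trans ?_
          gcongr
          exact norm_pow_le _ _
      _ ≤ (C * ‖D‖) * r + r ^ m * ‖D‖ := by gcongr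
      _ = _ := by ring

lemma powQuad_bound {R : Type*} [NormedRing R] [NormOneClass R] (r : ℝ) (hr : 1 ≤ r) (m : ℕ) :
    ∃ C : ℝ, 0 ≤ C ∧ ∀ B D : R, ‖B‖ ≤ r → ‖D‖ ≤ r → ‖powQuad B D m‖ ≤ C * ‖D‖ ^ 2 := by
  induction m with
  | zero => exact ⟨0, le_rfl, fun B D _ _ => by simp [powQuad]⟩
  | succ m ih =>
    obtain ⟨C, hC, h⟩ := ih
    obtain ⟨C', hC', h'⟩ := powLin_bound (R := R) r hr m
    refine ⟨C * r + C', by positivity, fun B D hB hD => ?_⟩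
    have h1 := h B D hB hD
    have h2 := h' B D hB hD
    calc ‖powQuad B D m * B + powLin B D m * D‖
        ≤ ‖powQuad B D m‖ * ‖B‖ + ‖powLin B D m‖ * ‖D‖ :=
          (norm_add_le _ _).trans (add_le_add (norm_mul_le _ _) (norm_mul_le _ _))
      _ ≤ (C * ‖D‖ ^ 2) * r + (C' * ‖D‖) * ‖D‖ := by gcongr
      _ = _ := by ring

lemma pow_add_expansion {R : Type*} [NormedRing R] [NormOneClass R] (r : ℝ) (hr : 1 ≤ r) (m : ℕ) :
    ∃ C : ℝ, 0 ≤ C ∧ ∀ B D : R, ‖B‖ ≤ r → ‖D‖ ≤ r →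
      ‖(B + D) ^ m - B ^ m - powLin B D m - powQuad B D m‖ ≤ C * ‖D‖ ^ 3 := by
  induction m with
  | zero => exact ⟨0, le_rfl, fun B D _ _ => by simp [powQuad, powLin]⟩
  | succ m ih =>
    obtain ⟨C, hC, h⟩ := ih
    obtain ⟨C', hC', h'⟩ := powQuad_bound (R := R) r hr m
    refine ⟨C * (r + r) + C', by positivity, fun B D hB hD => ?_⟩
    have h1 := h B D hB hD
    have h2 := h' B D hB hD
    have e : (B + D) ^ (m + 1) - B ^ (m + 1) - powLin B D (m + 1) - powQuad B D (m + 1)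
        = ((B + D) ^ m - B ^ m - powLin B D m - powQuad B D m) * (B + D)
          + powQuad B D m * D := by
      simp only [powLin, powQuad, pow_succ]
      noncomm_ring
    rw [e]
    calc _ ≤ ‖(B + D) ^ m - B ^ m - powLin B D m - powQuad B D m‖ * ‖B + D‖
          + ‖powQuad B D m‖ * ‖D‖ :=
          (norm_add_le _ _).trans (add_le_add (norm_mul_le _ _) (norm_mul_le _ _))
      _ ≤ (C * ‖D‖ ^ 3) * (r + r) + (C' * ‖D‖ ^ 2) * ‖D‖ := by
          gcongr
          exact (norm_add_le _ _).trans (add_le_add hB hD)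
      _ = _ := by ring

open Matrix

variable {n : ℕ}

lemma trace_powLin (B D : Matrix (Fin n) (Fin n) ℝ) (m : ℕ) :
    ∀ r, trace (powLin B D m * B ^ r) = m * trace (B ^ (m + r - 1) * D) := by
  induction m with
  | zero => intro r; simp [powLin]
  | succ m ih =>
    intro r
    have e : powLin B D (m + 1) * B ^ r = powLin B D m * B ^ (r + 1) + B ^ m * (D * B ^ r) := by
      simp only [powLin, pow_succ']; noncomm_ring
    have e2 : trace (B ^ m * (D * B ^ r)) = trace (B ^ (m + r) * D) := by
      rw [← Matrix.mul_assoc, trace_mul_comm, ← Matrix.mul_assoc, ← pow_add, add_comm r m]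
    rw [e, trace_add, ih, e2]
    have : m + (r + 1) - 1 = m + r := by omega
    have h' : m + 1 + r - 1 = m + r := by omega
    rw [this, h']; push_cast; ring

lemma trace_powLin_mixed {B D : Matrix (Fin n) (Fin n) ℝ} (hB : B.IsHermitian) (hD : Dᵀ = D)
    (m : ℕ) : ∀ q r, Even (m + 1 + q + r) →
      trace (powLin B D m * B ^ q * D * B ^ r) ≤ m * trace (B ^ (m + q + r - 1) * D * D) := by
  induction m with
  | zero => intro q r _; simp [powLin]
  | succ m ih =>
    intro q r hqr
    have e : powLin B D (m + 1) * B ^ q * D * B ^ r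
        = powLin B D m * B ^ (q + 1) * D * B ^ r + B ^ m * D * B ^ q * D * B ^ r := by
      simp only [powLin, pow_succ']; noncomm_ring
    have e2 : trace (B ^ m * D * B ^ q * D * B ^ r) = trace (B ^ (r + m) * D * B ^ q * D) := by
      rw [trace_mul_comm, pow_add]; congr 1; noncomm_ring
    rw [e, trace_add, e2]
    have h1 := ih (q + 1) r (by convert hqr using 1; ring)
    have h2 := trace_mixed_le hB hD (a := r + m) (b := q) (by
      have : m + 1 + 1 + q + r = (r + m + q) + 2 := by ring
      rw [this] at hqr
      exact (Nat.even_add.1 hqr).2 (by decide))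
    have e3 : m + (q + 1) + r - 1 = r + m + q := by omega
    have e4 : m + 1 + q + r - 1 = r + m + q := by omega
    rw [e3] at h1; rw [e4]; push_cast
    linarith

lemma trace_powQuad_le {B D : Matrix (Fin n) (Fin n) ℝ} (hB : B.IsHermitian) (hD : Dᵀ = D)
    (m : ℕ) : ∀ r, Even (m + r) →
      trace (powQuad B D m * B ^ r) ≤ m * (m - 1) / 2 * trace (B ^ (m + r - 2) * D * D) := by
  induction m with
  | zero => intro r _; simp [powQuad]
  | succ m ih =>
    intro r hr
    rcases Nat.eq_zero_or_pos m with rfl | hm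
    · simp [powQuad, powLin]
    have e : powQuad B D (m + 1) * B ^ r
        = powQuad B D m * B ^ (r + 1) + powLin B D m * B ^ 0 * D * B ^ r := by
      simp only [powQuad, pow_succ']; noncomm_ring
    have h1 := ih (r + 1) (by convert hr using 1; ring)
    have h2 := trace_powLin_mixed hB hD m 0 r (by convert hr using 1)
    rw [e, trace_add]
    have e3 : m + (r + 1) - 2 = m + r - 1 := by omega
    have e4 : m + 1 + r - 2 = m + r - 1 := by omega
    rw [e3] at h1; rw [add_zero] at h2; rw [e4]; push_cast
    linarith

end Expansion

section MatrixStep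

open Matrix

attribute [local instance] Matrix.linftyOpNormedRing

variable {n : ℕ}

lemma linfty_norm_le {M : Matrix (Fin n) (Fin n) ℝ} {c : ℝ} (hc : 0 ≤ c)
    (h : ∀ i j, |M i j| ≤ c) : ‖M‖ ≤ n * c := by
  rw [Matrix.linfty_opNorm_def]
  have : (Finset.univ.sup fun i : Fin n => ∑ j, ‖M i j‖₊) ≤ Real.toNNReal (n * c) := by
    refine Finset.sup_le fun i _ => ?_
    rw [← NNReal.coe_le_coe, Real.coe_toNNReal _ (by positivity)]
    push_cast
    calc ∑ j, ‖M i j‖ ≤ ∑ _j : Fin n, c := Finset.sum_le_sum fun j _ => h i j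
      _ = n * c := by simp
  have h2 := NNReal.coe_le_coe.2 this
  rwa [Real.coe_toNNReal _ (by positivity)] at h2

lemma abs_trace_le (M : Matrix (Fin n) (Fin n) ℝ) : |trace M| ≤ n * ‖M‖ := by
  have h1 : ∀ i, |M i i| ≤ ‖M‖ := by
    intro i
    rw [Matrix.linfty_opNorm_def]
    have h2 : ‖M i i‖₊ ≤ ∑ j, ‖M i j‖₊ :=
      Finset.single_le_sum (f := fun j => ‖M i j‖₊) (fun _ _ => zero_le) (Finset.mem_univ i)
    have h3 : ∑ j, ‖M i j‖₊ ≤ Finset.univ.sup fun i : Fin n => ∑ j, ‖M i j‖₊ :=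
      Finset.le_sup (f := fun i => ∑ j, ‖M i j‖₊) (Finset.mem_univ i)
    exact NNReal.coe_le_coe.2 (h2.trans h3)
  calc |trace M| ≤ ∑ i, |M i i| := Finset.abs_sum_le_sum_abs _ _
    _ ≤ ∑ _i : Fin n, ‖M‖ := Finset.sum_le_sum fun i _ => h1 i
    _ = n * ‖M‖ := by simp

/-- Second-order expansion of an even trace power along `B ↦ B + e T - e² Q`, with a cubic error
that is uniform over bounded data. -/
lemma trace_pow_step (hn : 0 < n) (k : ℕ) (hk : Even k) (b : ℝ) (hb : 0 ≤ b) :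
    ∃ C : ℝ, 0 ≤ C ∧ ∀ (B T Q : Matrix (Fin n) (Fin n) ℝ) (s e : ℝ), B.IsHermitian → Tᵀ = T →
      Qᵀ = Q → 0 ≤ s → 0 ≤ e → e * s ≤ 1 → (∀ i j, |B i j| ≤ b) → (∀ i j, |T i j| ≤ b * s) →
      (∀ i j, |Q i j| ≤ b * s ^ 2) →
      trace ((B + (e • T - e ^ 2 • Q)) ^ (k + 2)) ≤ trace (B ^ (k + 2))
        + e * ((k + 2) * trace (B ^ (k + 1) * T))
        + e ^ 2 * (-(k + 2) * trace (B ^ (k + 1) * Q)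
          + (k + 2) * (k + 1) / 2 * trace (B ^ k * T * T)) + C * (e * s) ^ 3 := by
  have : Nonempty (Fin n) := ⟨⟨0, hn⟩⟩
  have : NormOneClass (Matrix (Fin n) (Fin n) ℝ) := Matrix.linfty_opNormOneClass
  set c : ℝ := n * b with hc
  have hc0 : 0 ≤ c := by positivity
  set r : ℝ := 2 * c + 1 with hr
  obtain ⟨C, hC, hexp⟩ := pow_add_expansion (R := Matrix (Fin n) (Fin n) ℝ) r (by linarith) (k + 2)
  refine ⟨n * (C * (2 * c) ^ 3) + (k + 2) * (k + 1) / 2 * (n * (c ^ k * (3 * c ^ 2))),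
    by positivity, ?_⟩
  intro B T Q s e hB hT hQ hs he hes hBb hTb hQb
  have nB : ‖B‖ ≤ c := linfty_norm_le hb hBb
  have nT : ‖T‖ ≤ c * s := by
    have := linfty_norm_le (by positivity) hTb; rw [hc]; linarith
  have nQ : ‖Q‖ ≤ c * s ^ 2 := by
    have := linfty_norm_le (by positivity) hQb; rw [hc]; linarith
  set D := e • T - e ^ 2 • Q with hD
  have hDs : Dᵀ = D := by simp [hD, hT, hQ]
  set u := e * s with hu
  have hu0 : 0 ≤ u := by positivity
  have neT : ‖e • T‖ ≤ c * u := by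
    have := linfty_norm_le (M := e • T) (c := e * (b * s)) (by positivity) fun i j => by
      rw [Matrix.smul_apply, smul_eq_mul, abs_mul, abs_of_nonneg he]
      exact mul_le_mul_of_nonneg_left (hTb i j) he
    refine this.trans (le_of_eq ?_)
    rw [hu, hc]; ring
  have neQ : ‖e ^ 2 • Q‖ ≤ c * u ^ 2 := by
    have := linfty_norm_le (M := e ^ 2 • Q) (c := e ^ 2 * (b * s ^ 2)) (by positivity)
      fun i j => by
        rw [Matrix.smul_apply, smul_eq_mul, abs_mul, abs_of_nonneg (sq_nonneg e)]
        exact mul_le_mul_of_nonneg_left (hQb i j) (sq_nonneg e)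
    refine this.trans (le_of_eq ?_)
    rw [hu, hc]; ring
  have huu : u ^ 2 ≤ u := by nlinarith
  have nD : ‖D‖ ≤ 2 * c * u := by
    refine (norm_sub_le _ _).trans ?_
    nlinarith
  have h1 := hexp B D (by linarith) (nD.trans (by nlinarith))
  have h2 := abs_trace_le ((B + D) ^ (k + 2) - B ^ (k + 2) - powLin B D (k + 2)
    - powQuad B D (k + 2))
  have h3 : trace ((B + D) ^ (k + 2)) - trace (B ^ (k + 2)) - trace (powLin B D (k + 2))
      - trace (powQuad B D (k + 2)) ≤ n * (C * (2 * c) ^ 3) * u ^ 3 := by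
    rw [← trace_sub, ← trace_sub, ← trace_sub]
    refine (le_abs_self _).trans (h2.trans ?_)
    calc n * ‖_‖ ≤ n * (C * ‖D‖ ^ 3) := by gcongr
      _ ≤ n * (C * (2 * c * u) ^ 3) := by gcongr
      _ = _ := by ring
  have h4 := trace_powLin B D (k + 2) 0
  have h5 := trace_powQuad_le hB hDs (k + 2) 0 (by
    rw [add_zero, Nat.even_add]; simp [hk])
  simp only [pow_zero, mul_one, add_zero] at h4 h5
  have e1 : k + 2 - 1 = k + 1 := by omega
  have e2 : k + 2 - 2 = k := by omega
  rw [e1] at h4; rw [e2] at h5; push_cast at h4 h5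
  have h6 : trace (B ^ (k + 1) * D) = e * trace (B ^ (k + 1) * T)
      - e ^ 2 * trace (B ^ (k + 1) * Q) := by
    simp [hD, Matrix.mul_sub, trace_sub]
  have h7 : trace (B ^ k * D * D) ≤ e ^ 2 * trace (B ^ k * T * T)
      + n * (c ^ k * (3 * c ^ 2)) * u ^ 3 := by
    have e3 : B ^ k * D * D = e ^ 2 • (B ^ k * T * T) + B ^ k *
        (e ^ 2 • Q * (e ^ 2 • Q) - (e • T) * (e ^ 2 • Q) - (e ^ 2 • Q) * (e • T)) := by
      have : e ^ 2 • (B ^ k * T * T) = B ^ k * ((e • T) * (e • T)) := by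
        simp [smul_smul, Matrix.mul_assoc, sq]
      rw [this, hD]
      generalize e • T = X
      generalize e ^ 2 • Q = Y
      noncomm_ring
    rw [e3, trace_add, trace_smul, smul_eq_mul]
    have h8 := abs_trace_le (B ^ k *
        (e ^ 2 • Q * (e ^ 2 • Q) - (e • T) * (e ^ 2 • Q) - (e ^ 2 • Q) * (e • T)))
    have h9 : ‖B ^ k * (e ^ 2 • Q * (e ^ 2 • Q) - (e • T) * (e ^ 2 • Q)
        - (e ^ 2 • Q) * (e • T))‖ ≤ c ^ k * (3 * c ^ 2) * u ^ 3 := by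
      calc _ ≤ ‖B‖ ^ k * (‖e ^ 2 • Q‖ * ‖e ^ 2 • Q‖ + ‖e • T‖ * ‖e ^ 2 • Q‖
            + ‖e ^ 2 • Q‖ * ‖e • T‖) := by
            refine (norm_mul_le _ _).trans ?_
            refine mul_le_mul (norm_pow_le _ _) ?_ (norm_nonneg _) (by positivity)
            refine (norm_sub_le _ _).trans (add_le_add ((norm_sub_le _ _).trans
              (add_le_add ?_ ?_)) ?_) <;> exact norm_mul_le _ _
        _ ≤ c ^ k * ((c * u ^ 2) * (c * u ^ 2) + (c * u) * (c * u ^ 2)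
            + (c * u ^ 2) * (c * u)) := by gcongr
        _ = c ^ k * c ^ 2 * u ^ 3 * (u + 2) := by ring
        _ ≤ c ^ k * c ^ 2 * u ^ 3 * 3 := by gcongr; linarith
        _ = _ := by ring
    have := (le_abs_self _).trans h8
    have h10 : (n : ℝ) * ‖B ^ k * (e ^ 2 • Q * (e ^ 2 • Q) - (e • T) * (e ^ 2 • Q)
        - (e ^ 2 • Q) * (e • T))‖ ≤ n * (c ^ k * (3 * c ^ 2) * u ^ 3) := by gcongr
    linarith
  have h11 : ((k : ℝ) + 2) * (k + 2 - 1) / 2 * trace (B ^ k * D * D)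
      ≤ (k + 2) * (k + 1) / 2 * (e ^ 2 * trace (B ^ k * T * T)
      + n * (c ^ k * (3 * c ^ 2)) * u ^ 3) := by
    have : ((k : ℝ) + 2 - 1) = k + 1 := by ring
    rw [this]
    gcongr
  rw [h4, h6] at h3
  linarith

end MatrixStep

/-! ### Uniform moment bounds for isotropic log-concave measures -/

section MomentBound

variable {n : ℕ}

lemma volume_homothety_image (x : EuclideanSpace ℝ (Fin n)) (r : ℝ) (hr : 0 ≤ r)
    (s : Set (EuclideanSpace ℝ (Fin n))) :
    volume (AffineMap.homothety x r '' s) = ENNReal.ofReal (r ^ n) * volume s := by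
  rw [Measure.addHaar_image_homothety]
  simp [abs_of_nonneg (pow_nonneg hr n)]

lemma IsLogConcaveDensity.half {p : EuclideanSpace ℝ (Fin n) → ℝ} (hp : IsLogConcaveDensity p)
    {c : ℝ} (hc : 0 ≤ c) {x y : EuclideanSpace ℝ (Fin n)} {t : ℝ} (h0 : 0 ≤ t) (h1 : t ≤ 1)
    (hx : c ≤ p x) (hy : c ≤ p y) : c ≤ p (AffineMap.homothety y t x) := by
  have h := hp.2 x y t h0 h1
  have e : AffineMap.homothety y t x = t • x + (1 - t) • y := by
    rw [AffineMap.homothety_apply, vsub_eq_sub, vadd_eq_add, smul_sub, sub_smul, one_smul]; abel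
  rw [e]
  refine le_trans ?_ h
  rcases hc.eq_or_lt with rfl | hc
  · exact mul_nonneg (rpow_nonneg (hp.1 _) _) (rpow_nonneg (hp.1 _) _)
  calc c = c ^ t * c ^ (1 - t) := by rw [← rpow_add hc]; simp
    _ ≤ _ := mul_le_mul (rpow_le_rpow hc.le hx h0) (rpow_le_rpow hc.le hy (by linarith))
      (by positivity) (rpow_nonneg (hp.1 _) _)

/-- A huge value at `x` would force large values on the homothetic copy, centred at `x`, of a set
of positive measure on which `p` is bounded below. -/
lemma IsLogConcaveDensity.bddAbove {p : EuclideanSpace ℝ (Fin n) → ℝ} (hp : IsLogConcaveDensity p)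
    (hm : Measurable p) (h1 : ∫⁻ x, ENNReal.ofReal (p x) = 1) : ∃ H, ∀ x, p x ≤ H := by
  have hpos : ∃ d : ℝ, 0 < d ∧ volume {x | d ≤ p x} ≠ 0 := by
    by_contra hcon
    push Not at hcon
    have h0 : volume {x | 0 < p x} = 0 := by
      have : {x | 0 < p x} ⊆ ⋃ k : ℕ, {x | 1 / ((k : ℝ) + 1) ≤ p x} := by
        intro x hx
        obtain ⟨k, hk⟩ := exists_nat_one_div_lt (show 0 < p x from hx)
        exact Set.mem_iUnion.2 ⟨k, (show 1 / ((k : ℝ) + 1) ≤ p x from hk.le)⟩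
      exact measure_mono_null this (measure_iUnion_null fun k => hcon _ (by positivity))
    have h2 : ∫⁻ x, ENNReal.ofReal (p x) = 0 := by
      rw [lintegral_eq_zero_iff (by fun_prop)]
      have : ∀ᵐ x, ¬ 0 < p x := by
        rw [ae_iff]; simpa using h0
      filter_upwards [this] with x hx
      simp only [Pi.zero_apply, ENNReal.ofReal_eq_zero]
      exact not_lt.1 hx
    rw [h2] at h1
    exact zero_ne_one h1
  obtain ⟨d, hd, hS⟩ := hpos
  have markov : ∀ c : ℝ, ENNReal.ofReal c * volume {x | c ≤ p x} ≤ 1 := by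
    intro c
    rw [← h1]
    refine le_trans ?_ (mul_meas_ge_le_lintegral (by fun_prop) (ENNReal.ofReal c))
    exact mul_le_mul' le_rfl (measure_mono fun x hx => ENNReal.ofReal_le_ofReal hx)
  have hfin : volume {x | d ≤ p x} ≠ ⊤ := by
    intro htop
    have := markov d
    rw [htop, ENNReal.mul_top (by simpa using hd)] at this
    simp at this
  set V := (volume {x | d ≤ p x}).toReal with hV
  have hVpos : 0 < V := ENNReal.toReal_pos hS hfin
  have hVe : volume {x | d ≤ p x} = ENNReal.ofReal V := (ENNReal.ofReal_toReal hfin).symm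
  refine ⟨(2 ^ n / V) ^ 2 / d, fun x => ?_⟩
  rcases (hp.1 x).eq_or_lt with h0 | hx
  · rw [← h0]; positivity
  set c := sqrt (d * p x) with hc
  have hsub : AffineMap.homothety x (1 / 2 : ℝ) '' {y | d ≤ p y} ⊆ {y | c ≤ p y} := by
    rintro _ ⟨y, hy, rfl⟩
    have h := hp.2 y x (1 / 2) (by norm_num) (by norm_num)
    have e : AffineMap.homothety x (1 / 2 : ℝ) y
        = (1 / 2 : ℝ) • y + (1 - 1 / 2 : ℝ) • x := by
      rw [AffineMap.homothety_apply, vsub_eq_sub, vadd_eq_add, smul_sub, sub_smul, one_smul]; abel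
    simp only [Set.mem_ofPred_eq] at hy ⊢
    rw [e]
    refine le_trans ?_ h
    rw [hc, show (1 - 1 / 2 : ℝ) = 1 / 2 by norm_num, ← sqrt_eq_rpow, ← sqrt_eq_rpow,
      sqrt_mul hd.le]
    gcongr
  have h2 := measure_mono (μ := volume) hsub
  rw [volume_homothety_image _ _ (by norm_num), hVe] at h2
  have h3 := (mul_le_mul_right h2 (ENNReal.ofReal c)).trans (markov c)
  rw [← ENNReal.ofReal_mul (by positivity), ← ENNReal.ofReal_mul (by positivity),
    ENNReal.ofReal_le_one] at h3
  have h4 : c ≤ 2 ^ n / V := by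
    rw [le_div_iff₀ hVpos]
    have : c * ((1 / 2) ^ n * V) = c * V / 2 ^ n := by rw [one_div, inv_pow]; ring
    rw [this, div_le_one (by positivity)] at h3
    exact h3
  have h5 : c ^ 2 = d * p x := sq_sqrt (by positivity)
  rw [le_div_iff₀ hd]
  calc p x * d = c ^ 2 := by rw [h5]; ring
    _ ≤ _ := by gcongr

lemma summable_exp_poly (k : ℕ) :
    Summable fun j : ℕ => exp (-(j : ℝ)) * ((j : ℝ) + 1) ^ k := by
  have h := Real.summable_pow_mul_exp_neg_nat_mul k (r := 1) one_pos
  have h2 := (summable_nat_add_iff 1).2 h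
  refine (h2.mul_left (exp 1)).congr fun j => ?_
  push_cast
  rw [show -1 * ((j : ℝ) + 1) = -j + -1 by ring, exp_add, exp_neg 1]
  field_simp

/-- Slicing along the level sets `{p ≥ e⁻ᵏ M}`, each contained in the `k`-fold dilate of the
level set for `k = 2` about a near-maximum point `x₀`. -/
lemma lintegral_slices {p : EuclideanSpace ℝ (Fin n) → ℝ} (hp : IsLogConcaveDensity p)
    (hm : Measurable p) {M : ℝ} (hM : 0 < M) (hpM : ∀ x, p x ≤ M)
    {x0 : EuclideanSpace ℝ (Fin n)} (hx0 : exp (-1) * M ≤ p x0)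
    (w : EuclideanSpace ℝ (Fin n) → ℝ≥0∞) (c : ℕ → ℝ≥0∞)
    (hw : ∀ k : ℕ, ∀ y, exp (-2) * M ≤ p y →
      w (AffineMap.homothety x0 ((k : ℝ) + 1) y) ≤ c k) :
    ∫⁻ x, w x * ENNReal.ofReal (p x) ≤
      ∑' k : ℕ, c k * ENNReal.ofReal (exp (-(k : ℝ)) * ((k : ℝ) + 1) ^ n * M)
        * volume {x | exp (-2) * M ≤ p x} := by
  have hincl : ∀ k : ℕ, ∀ x, exp (-((k : ℝ) + 1)) * M ≤ p x →
      ∃ y, exp (-2) * M ≤ p y ∧ AffineMap.homothety x0 ((k : ℝ) + 1) y = x := by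
    intro k x hx
    have hk : (0 : ℝ) < (k : ℝ) + 1 := by positivity
    refine ⟨AffineMap.homothety x0 ((k : ℝ) + 1)⁻¹ x, ?_, ?_⟩
    · set t : ℝ := ((k : ℝ) + 1)⁻¹ with ht
      have ht0 : 0 ≤ t := by positivity
      have ht1 : t ≤ 1 := inv_le_one_of_one_le₀ (by linarith [(Nat.cast_nonneg k : (0 : ℝ) ≤ k)])
      have h := hp.2 x x0 t ht0 ht1
      have e : AffineMap.homothety x0 t x = t • x + (1 - t) • x0 := by
        rw [AffineMap.homothety_apply, vsub_eq_sub, vadd_eq_add, smul_sub, sub_smul, one_smul]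
        abel
      rw [e]
      refine le_trans ?_ h
      calc exp (-2) * M ≤ exp (-((k : ℝ) + 1) * t + -1 * (1 - t)) * M := by
            gcongr
            have : ((k : ℝ) + 1) * t = 1 := mul_inv_cancel₀ hk.ne'
            linarith
        _ = (exp (-((k : ℝ) + 1)) * M) ^ t * (exp (-1) * M) ^ (1 - t) := by
            rw [mul_rpow (exp_pos _).le hM.le, mul_rpow (exp_pos _).le hM.le, ← exp_mul, ← exp_mul,
              exp_add]
            have : M = M ^ t * M ^ (1 - t) := by rw [← rpow_add hM]; simp
            conv_lhs => rw [this]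
            ring
        _ ≤ _ := by
            refine mul_le_mul (rpow_le_rpow (by positivity) hx ht0)
              (rpow_le_rpow (by positivity) hx0 (by linarith)) (by positivity)
              (rpow_nonneg (hp.1 _) _)
    · simp only [AffineMap.homothety_apply, vsub_eq_sub, vadd_eq_add, add_sub_cancel_right,
        smul_smul, mul_inv_cancel₀ hk.ne', one_smul, sub_add_cancel]
  have hpt : ∀ x, w x * ENNReal.ofReal (p x) ≤ ∑' k : ℕ,
      Set.indicator {x | exp (-((k : ℝ) + 1)) * M ≤ p x}
        (fun _ => c k * ENNReal.ofReal (exp (-(k : ℝ)) * M)) x := by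
    intro x
    rcases (hp.1 x).eq_or_lt with h0 | hx
    · rw [← h0]; simp
    have hl : 0 ≤ log (M / p x) := log_nonneg (by rw [one_le_div hx]; exact hpM x)
    set k := ⌊log (M / p x)⌋₊ with hk
    have hk1 : (k : ℝ) ≤ log (M / p x) := Nat.floor_le hl
    have hk2 : log (M / p x) < k + 1 := Nat.lt_floor_add_one _
    have hpe : p x = exp (-log (M / p x)) * M := by
      rw [exp_neg, exp_log (by positivity)]; field_simp
    have hmem : exp (-((k : ℝ) + 1)) * M ≤ p x := by
      rw [hpe]; gcongr
    refine le_trans ?_ (ENNReal.le_tsum k)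
    rw [Set.indicator_of_mem (by exact hmem)]
    obtain ⟨y, hy, hyx⟩ := hincl k x hmem
    have h3 := hw k y hy
    rw [hyx] at h3
    refine mul_le_mul' h3 (ENNReal.ofReal_le_ofReal ?_)
    conv_lhs => rw [hpe]
    gcongr
  have hms : ∀ a : ℝ, MeasurableSet {x | a ≤ p x} := fun a => measurableSet_le measurable_const hm
  calc _ ≤ ∫⁻ x, ∑' k : ℕ, Set.indicator {x | exp (-((k : ℝ) + 1)) * M ≤ p x}
        (fun _ => c k * ENNReal.ofReal (exp (-(k : ℝ)) * M)) x := lintegral_mono hpt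
    _ = ∑' k : ℕ, c k * ENNReal.ofReal (exp (-(k : ℝ)) * M)
        * volume {x | exp (-((k : ℝ) + 1)) * M ≤ p x} := by
        rw [lintegral_tsum fun k => (measurable_const.indicator (hms _)).aemeasurable]
        refine tsum_congr fun k => ?_
        rw [lintegral_indicator (hms _), setLIntegral_const]
    _ ≤ _ := by
        refine ENNReal.tsum_le_tsum fun k => ?_
        have : volume {x | exp (-((k : ℝ) + 1)) * M ≤ p x} ≤
            ENNReal.ofReal (((k : ℝ) + 1) ^ n) * volume {x | exp (-2) * M ≤ p x} := by
          rw [← volume_homothety_image x0 ((k : ℝ) + 1) (by positivity)]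
          refine measure_mono fun x hx => ?_
          obtain ⟨y, hy, hyx⟩ := hincl k x hx
          exact ⟨y, hy, hyx⟩
        refine (mul_le_mul_right this _).trans (le_of_eq ?_)
        have : exp (-(k : ℝ)) * ((k : ℝ) + 1) ^ n * M
          = exp (-(k : ℝ)) * M * ((k : ℝ) + 1) ^ n := by ring
        rw [this, ENNReal.ofReal_mul (p := exp (-(k : ℝ)) * M) (q := ((k : ℝ) + 1) ^ n) (by positivity)]
        ring

/-- The constants `Sₖ = ∑ⱼ e⁻ʲ (j + 1)ᵏ`. -/
def expPoly (k : ℕ) : ℝ := ∑' j : ℕ, exp (-(j : ℝ)) * ((j : ℝ) + 1) ^ k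

lemma expPoly_nonneg (k : ℕ) : 0 ≤ expPoly k := tsum_nonneg fun _ => by positivity

lemma tsum_expPoly (k : ℕ) {a : ℝ} (ha : 0 ≤ a) (v : ℝ≥0∞) :
    ∑' j : ℕ, ENNReal.ofReal (a * (exp (-(j : ℝ)) * ((j : ℝ) + 1) ^ k)) * v
      = ENNReal.ofReal (a * expPoly k) * v := by
  rw [ENNReal.tsum_mul_right, ← ENNReal.ofReal_tsum_of_nonneg (fun j => by positivity)
    ((summable_exp_poly k).mul_left a), tsum_mul_left, expPoly]

lemma lintegral_norm_sq_isotropic {μ : Measure (EuclideanSpace ℝ (Fin n))}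
    (h : IsIsotropicMeasure μ) : ∫⁻ x, ENNReal.ofReal (‖x‖ ^ 2) ∂μ = n := by
  have h1 : ∀ i, ∫⁻ x : EuclideanSpace ℝ (Fin n), ENNReal.ofReal (x i * x i) ∂μ = 1 := by
    intro i
    have h2 := h.2 i i
    simp only [if_true] at h2
    have hi : Integrable (fun x : EuclideanSpace ℝ (Fin n) => x i * x i) μ := by
      by_contra hc
      rw [integral_undef hc] at h2
      exact zero_ne_one h2
    rw [← ofReal_integral_eq_lintegral_ofReal hi (ae_of_all _ fun x => mul_self_nonneg _), h2]
    simp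
  have h2 : ∀ x : EuclideanSpace ℝ (Fin n),
      ENNReal.ofReal (‖x‖ ^ 2) = ∑ i, ENNReal.ofReal (x i * x i) := by
    intro x
    rw [← ENNReal.ofReal_sum_of_nonneg fun i _ => mul_self_nonneg _, EuclideanSpace.norm_sq_eq]
    simp [sq]
  simp_rw [h2]
  rw [lintegral_finsetSum _ fun i _ => by fun_prop]
  simp [h1]

/-- A bound on `E |X|³` depending on the dimension only; it shows that the supremum defining
`κₙ` is finite. -/
lemma exists_third_moment_bound (n : ℕ) : ∃ C : ℝ, 0 ≤ C ∧
    ∀ μ : Measure (EuclideanSpace ℝ (Fin n)), IsProbabilityMeasure μ → IsLogConcaveMeasure μ →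
      IsIsotropicMeasure μ → ∫⁻ x, ENNReal.ofReal (‖x‖ ^ 3) ∂μ ≤ ENNReal.ofReal C := by
  set D : ℝ := sqrt (16 * (expPoly n * exp 2 * (1 + 2 ^ n) * n)) with hD
  have hS := expPoly_nonneg n
  have hS3 := expPoly_nonneg (n + 3)
  refine ⟨27 * D ^ 3 * expPoly (n + 3) * exp 2, by positivity, ?_⟩
  rintro μ hμ ⟨p, hm, hp, rfl⟩ hiso
  have h1 : ∫⁻ x, ENNReal.ofReal (p x) = 1 := by
    have := hμ.measure_univ
    rwa [withDensity_apply _ MeasurableSet.univ, setLIntegral_univ] at this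
  have hdens : ∀ w : EuclideanSpace ℝ (Fin n) → ℝ≥0∞, Measurable w →
      ∫⁻ x, w x ∂(volume.withDensity fun x => ENNReal.ofReal (p x))
        = ∫⁻ x, w x * ENNReal.ofReal (p x) := by
    intro w hw
    rw [lintegral_withDensity_eq_lintegral_mul _ (by fun_prop) hw]
    simp only [Pi.mul_apply, mul_comm]
  obtain ⟨H, hH⟩ := hp.bddAbove hm h1
  have hbdd : BddAbove (Set.range p) := ⟨H, by rintro _ ⟨x, rfl⟩; exact hH x⟩
  set M := sSup (Set.range p) with hMdef
  have hpM : ∀ x, p x ≤ M := fun x => le_csSup hbdd ⟨x, rfl⟩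
  have hM : 0 < M := by
    by_contra hcon
    have : ∀ x, p x = 0 := fun x => le_antisymm ((hpM x).trans (not_lt.1 hcon)) (hp.1 x)
    simp [this] at h1
  obtain ⟨_, ⟨x0, rfl⟩, hx0⟩ : ∃ a ∈ Set.range p, exp (-1) * M < a :=
    exists_lt_of_lt_csSup (Set.range_nonempty p)
      (mul_lt_of_lt_one_left hM (by rw [exp_lt_one_iff]; norm_num))
  set L := {x | exp (-2) * M ≤ p x} with hL
  have hLm : MeasurableSet L := measurableSet_le measurable_const hm
  have markov : ENNReal.ofReal (exp (-2) * M) * volume L ≤ 1 := by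
    rw [← h1]
    refine le_trans ?_ (mul_meas_ge_le_lintegral (by fun_prop) (ENNReal.ofReal (exp (-2) * M)))
    exact mul_le_mul' le_rfl (measure_mono fun x hx => ENNReal.ofReal_le_ofReal hx)
  have hfin : volume L ≠ ⊤ := by
    intro htop
    rw [htop, ENNReal.mul_top (by simp; positivity)] at markov
    simp at markov
  set v := (volume L).toReal with hv
  have hvL : volume L = ENNReal.ofReal v := (ENNReal.ofReal_toReal hfin).symm
  have hv0 : 0 ≤ v := ENNReal.toReal_nonneg
  have hMv : M * v ≤ exp 2 := by
    rw [hvL, ← ENNReal.ofReal_mul (by positivity), ENNReal.ofReal_le_one, exp_neg] at markov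
    have h3 : (exp 2)⁻¹ * M * v = (M * v) / exp 2 := by ring
    rw [h3, div_le_one (exp_pos _)] at markov
    exact markov
  have hlow : 1 ≤ M * expPoly n * v := by
    have h := lintegral_slices hp hm hM hpM hx0.le (fun _ => 1) (fun _ => 1)
      (fun _ _ _ => le_rfl)
    simp only [one_mul] at h
    rw [h1] at h
    have e : ∀ k : ℕ, exp (-(k : ℝ)) * ((k : ℝ) + 1) ^ n * M
      = M * (exp (-(k : ℝ)) * ((k : ℝ) + 1) ^ n) := fun k => by ring
    simp only [e] at h
    rw [tsum_expPoly n hM.le, hvL, ← ENNReal.ofReal_mul (by positivity), ENNReal.one_le_ofReal] at h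
    exact h
  have hnorm : ∀ y ∈ L, ‖y‖ ≤ D := by
    intro y hy
    set r := ‖y‖ / 4 with hr
    have hr0 : 0 ≤ r := by positivity
    set N := L ∩ {z | r ≤ ‖z‖} with hN
    have hNm : MeasurableSet N := hLm.inter (measurableSet_le measurable_const measurable_norm)
    have hNfin : volume N ≠ ⊤ := ne_top_of_le_ne_top hfin (measure_mono Set.inter_subset_left)
    have hsplit : volume L ≤ ENNReal.ofReal (1 + 2 ^ n) * volume N := by
      have hA : AffineMap.homothety y (1 / 2 : ℝ) '' (L \ {z | r ≤ ‖z‖}) ⊆ N := by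
        rintro _ ⟨z, ⟨hz, hz2⟩, rfl⟩
        refine ⟨hp.half (by positivity) (by norm_num) (by norm_num) hz hy, ?_⟩
        have hz3 : ‖z‖ < r := not_le.1 hz2
        have e : AffineMap.homothety y (1 / 2 : ℝ) z = (1 / 2 : ℝ) • (y + z) := by
          rw [AffineMap.homothety_apply, vsub_eq_sub, vadd_eq_add]
          module
        show r ≤ ‖AffineMap.homothety y (1 / 2 : ℝ) z‖
        rw [e, norm_smul]
        have := norm_sub_le (y + z) z
        rw [add_sub_cancel_right] at this
        norm_num
        linarith
      have hB := measure_mono (μ := volume) hA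
      rw [volume_homothety_image _ _ (by norm_num)] at hB
      have hC : volume (L \ {z | r ≤ ‖z‖}) ≤ ENNReal.ofReal (2 ^ n) * volume N := by
        calc volume (L \ {z | r ≤ ‖z‖}) = ENNReal.ofReal (2 ^ n) *
              (ENNReal.ofReal ((1 / 2) ^ n) * volume (L \ {z | r ≤ ‖z‖})) := by
              rw [← mul_assoc, ← ENNReal.ofReal_mul (by positivity), ← mul_pow]; norm_num
          _ ≤ _ := mul_le_mul' le_rfl hB
      rw [← measure_inter_add_sdiff L (measurableSet_le measurable_const measurable_norm)]
      rw [ENNReal.ofReal_add (by norm_num) (by positivity), add_mul, ENNReal.ofReal_one, one_mul]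
      exact add_le_add le_rfl hC
    have hmom : ENNReal.ofReal (r ^ 2 * (exp (-2) * M)) * volume N ≤ n := by
      rw [← lintegral_norm_sq_isotropic hiso, hdens _ (by fun_prop), ← setLIntegral_const]
      refine (setLIntegral_mono' hNm fun x hx => ?_).trans (setLIntegral_le_lintegral N _)
      rw [ENNReal.ofReal_mul (by positivity)]
      refine mul_le_mul' (ENNReal.ofReal_le_ofReal ?_) (ENNReal.ofReal_le_ofReal hx.1)
      have : r ≤ ‖x‖ := hx.2
      gcongr
    set q := (volume N).toReal with hq
    have hqN : volume N = ENNReal.ofReal q := (ENNReal.ofReal_toReal hNfin).symm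
    have hq0 : 0 ≤ q := ENNReal.toReal_nonneg
    rw [hvL, hqN, ← ENNReal.ofReal_mul (by positivity),
      ENNReal.ofReal_le_ofReal_iff (by positivity)] at hsplit
    rw [hqN, ← ENNReal.ofReal_mul (by positivity), ← ENNReal.ofReal_natCast,
      ENNReal.ofReal_le_ofReal_iff (by positivity)] at hmom
    have hfinal : r ^ 2 ≤ expPoly n * exp 2 * (1 + 2 ^ n) * n := by
      calc r ^ 2 = r ^ 2 * 1 := by ring
        _ ≤ r ^ 2 * (M * expPoly n * v) := by gcongr
        _ ≤ r ^ 2 * (M * expPoly n * ((1 + 2 ^ n) * q)) := by gcongr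
        _ = expPoly n * exp 2 * (1 + 2 ^ n) * (r ^ 2 * (exp (-2) * M) * q) := by
            rw [exp_neg]; field_simp
        _ ≤ _ := by gcongr
    rw [hD]
    apply le_sqrt_of_sq_le
    rw [hr] at hfinal
    nlinarith
  have hD0 : 0 ≤ D := sqrt_nonneg _
  rw [hdens _ (by fun_prop)]
  have hx0L : x0 ∈ L := by
    refine le_trans ?_ hx0.le
    gcongr
    norm_num
  have h := lintegral_slices hp hm hM hpM hx0.le (fun x => ENNReal.ofReal (‖x‖ ^ 3))
    (fun k => ENNReal.ofReal ((3 * ((k : ℝ) + 1) * D) ^ 3)) (by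
      intro k y hy
      refine ENNReal.ofReal_le_ofReal ?_
      gcongr
      rw [AffineMap.homothety_apply, vsub_eq_sub, vadd_eq_add]
      have ha := norm_add_le (((k : ℝ) + 1) • (y - x0)) x0
      rw [norm_smul, norm_of_nonneg (by positivity)] at ha
      have hb := norm_sub_le y x0
      have hc := hnorm y hy
      have hd := hnorm x0 hx0L
      have hk : (0 : ℝ) ≤ k := by positivity
      nlinarith [mul_le_mul_of_nonneg_left (hb.trans (add_le_add hc hd))
        (by positivity : (0 : ℝ) ≤ k + 1), mul_nonneg hk hD0])
  refine h.trans ?_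
  have e : ∀ k : ℕ, ENNReal.ofReal ((3 * ((k : ℝ) + 1) * D) ^ 3) *
      ENNReal.ofReal (exp (-(k : ℝ)) * ((k : ℝ) + 1) ^ n * M)
      = ENNReal.ofReal ((27 * D ^ 3 * M) * (exp (-(k : ℝ)) * ((k : ℝ) + 1) ^ (n + 3))) := by
    intro k
    rw [← ENNReal.ofReal_mul (by positivity)]
    congr 1
    ring
  simp only [e]
  rw [tsum_expPoly _ (by positivity), hvL, ← ENNReal.ofReal_mul (by positivity)]
  refine ENNReal.ofReal_le_ofReal ?_
  calc 27 * D ^ 3 * M * expPoly (n + 3) * v = 27 * D ^ 3 * expPoly (n + 3) * (M * v) := by ring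
    _ ≤ _ := by gcongr

lemma bddAbove_kappa (n : ℕ) :
    BddAbove {s : ℝ | ∃ μ : Measure (EuclideanSpace ℝ (Fin n)), IsProbabilityMeasure μ ∧
    IsLogConcaveMeasure μ ∧ IsIsotropicMeasure μ ∧ ∃ h : 0 < n,
    s = hsNorm (Matrix.of fun i j => ∫ x, x ⟨0, h⟩ * (x i * x j) ∂μ)} := by
  obtain ⟨C, hC0, hC⟩ := exists_third_moment_bound n
  refine ⟨sqrt (∑ _i : Fin n, ∑ _j : Fin n, C ^ 2), ?_⟩
  rintro _ ⟨μ, h1, h2, h3, h, rfl⟩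
  unfold hsNorm
  refine sqrt_le_sqrt (Finset.sum_le_sum fun i _ => Finset.sum_le_sum fun j _ => ?_)
  rw [Matrix.of_apply]
  refine sq_le_sq' ?_ ?_ <;> [refine neg_le_of_abs_le ?_; refine le_of_abs_le ?_]
  all_goals
    rw [← Real.norm_eq_abs]
    refine (norm_integral_le_lintegral_norm _).trans ?_
    refine ENNReal.toReal_le_of_le_ofReal hC0 (le_trans (lintegral_mono fun x => ?_) (hC μ h1 h2 h3))
    refine ENNReal.ofReal_le_ofReal ?_
    rw [norm_mul, norm_mul]
    have hx : ∀ i, ‖x i‖ ≤ ‖x‖ := fun i => PiLp.norm_apply_le x i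
    calc _ ≤ ‖x‖ * (‖x‖ * ‖x‖) := by gcongr <;> exact hx _
      _ = _ := by ring

end MomentBound

/-! ### A lower bound for `κₙ` from the product of centred exponential laws -/

section KappaLower

/-- The density of the exponential law, centred: `e^{-(t+1)}` on `t > -1`. -/
def expDens (t : ℝ) : ℝ := if -1 < t then exp (-(t + 1)) else 0

lemma expDens_nonneg (t : ℝ) : 0 ≤ expDens t := by
  unfold expDens; split_ifs <;> positivity

lemma measurable_expDens : Measurable expDens :=
  Measurable.ite (measurableSet_lt measurable_const measurable_id) (by fun_prop) measurable_const

lemma integrable_pow_exp (k : ℕ) :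
    IntegrableOn (fun s : ℝ => exp (-s) * s ^ k) (Set.Ioi 0) := by
  have := Real.GammaIntegral_convergent (s := (k : ℝ) + 1) (by positivity)
  simpa using this

lemma integral_pow_exp (k : ℕ) :
    ∫ s in Set.Ioi (0 : ℝ), exp (-s) * s ^ k = k.factorial := by
  have h := Real.Gamma_eq_integral (s := (k : ℝ) + 1) (by positivity)
  rw [Real.Gamma_nat_eq_factorial] at h
  rw [h]
  simp

lemma integral_expDens (k : ℕ) :
    ∫ t, t ^ k * expDens t = ∫ s in Set.Ioi (0 : ℝ), (s - 1) ^ k * exp (-s) := by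
  rw [← integral_indicator measurableSet_Ioi, ← integral_sub_right_eq_self _ (1 : ℝ)]
  congr 1
  ext s
  by_cases hs : 0 < s
  · rw [Set.indicator_of_mem (by exact hs), expDens, if_pos (by linarith)]
    simp
  · rw [Set.indicator_of_notMem (by exact hs), expDens, if_neg (by linarith)]
    simp

lemma expDens_moments : (∫ t, expDens t = 1) ∧ (∫ t, t * expDens t = 0) ∧
    (∫ t, t ^ 2 * expDens t = 1) ∧ (∫ t, t ^ 3 * expDens t = 2) := by
  have i0 := integrable_pow_exp 0
  have i1 := integrable_pow_exp 1
  have i2 := integrable_pow_exp 2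
  have i3 := integrable_pow_exp 3
  have h0 := integral_pow_exp 0
  have h1 := integral_pow_exp 1
  have h2 := integral_pow_exp 2
  have h3 := integral_pow_exp 3
  refine ⟨?_, ?_, ?_, ?_⟩
  · have := integral_expDens 0
    simp only [pow_zero, one_mul] at this
    rw [this]
    simpa using h0
  · have := integral_expDens 1
    simp only [pow_one] at this
    rw [this]
    have e : ∀ s : ℝ, (s - 1) * exp (-s) = exp (-s) * s ^ 1 - exp (-s) * s ^ 0 := fun s => by ring
    simp_rw [e]
    rw [integral_sub i1 i0, h0, h1]
    norm_num
  · rw [integral_expDens 2]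
    have e : ∀ s : ℝ, (s - 1) ^ 2 * exp (-s)
        = exp (-s) * s ^ 2 - 2 * (exp (-s) * s ^ 1) + exp (-s) * s ^ 0 := fun s => by ring
    simp_rw [e]
    rw [integral_add (Integrable.sub' i2 (i1.const_mul 2)) i0, integral_sub i2 (i1.const_mul 2),
      integral_const_mul, h0, h1, h2]
    norm_num [Nat.factorial]
  · rw [integral_expDens 3]
    have e : ∀ s : ℝ, (s - 1) ^ 3 * exp (-s)
        = exp (-s) * s ^ 3 - 3 * (exp (-s) * s ^ 2) + (3 * (exp (-s) * s ^ 1) - exp (-s) * s ^ 0) :=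
      fun s => by ring
    simp_rw [e]
    rw [integral_add (Integrable.sub' i3 (i2.const_mul 3)) (Integrable.sub' (i1.const_mul 3) i0),
      integral_sub i3 (i2.const_mul 3), integral_sub (i1.const_mul 3) i0,
      integral_const_mul, integral_const_mul, h0, h1, h2, h3]
    norm_num [Nat.factorial]

lemma expDens_logconcave (x y t : ℝ) (h0 : 0 ≤ t) (h1 : t ≤ 1) :
    expDens x ^ t * expDens y ^ (1 - t) ≤ expDens (t * x + (1 - t) * y) := by
  rcases h0.eq_or_lt with rfl | h0
  · simp
  rcases h1.eq_or_lt with rfl | h1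
  · simp
  by_cases hx : -1 < x
  · by_cases hy : -1 < y
    · rw [expDens, expDens, expDens, if_pos hx, if_pos hy, if_pos (by nlinarith), ← exp_mul,
        ← exp_mul, ← exp_add]
      apply le_of_eq
      congr 1
      ring
    · have : expDens y = 0 := if_neg hy
      rw [this, zero_rpow (by linarith), mul_zero]
      exact expDens_nonneg _
  · have : expDens x = 0 := if_neg hx
    rw [this, zero_rpow (by linarith), zero_mul]
    exact expDens_nonneg _

/-- The product density on `ℝⁿ`. -/
def expDensN (n : ℕ) (x : EuclideanSpace ℝ (Fin n)) : ℝ := ∏ i, expDens (x i)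

lemma expDensN_nonneg {n : ℕ} (x : EuclideanSpace ℝ (Fin n)) : 0 ≤ expDensN n x :=
  Finset.prod_nonneg fun _ _ => expDens_nonneg _

lemma measurable_expDensN (n : ℕ) : Measurable (expDensN n) :=
  Finset.measurable_prod _ fun i _ => measurable_expDens.comp (by fun_prop)

lemma integral_expDensN {n : ℕ} (a : Fin n → ℕ) :
    ∫ x : EuclideanSpace ℝ (Fin n), (∏ i, x i ^ a i) * expDensN n x
      = ∏ i, ∫ t, t ^ a i * expDens t := by
  rw [← (EuclideanSpace.volume_preserving_symm_measurableEquiv_toLp (Fin n)).symm.integral_comp'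
    (g := fun x : EuclideanSpace ℝ (Fin n) => (∏ i, x i ^ a i) * expDensN n x)]
  rw [← integral_fintype_prod_volume_eq_prod (fun i (t : ℝ) => t ^ a i * expDens t)]
  congr 1
  ext x
  simp [expDensN, Finset.prod_mul_distrib]

lemma two_le_kappa {n : ℕ} (hn : 0 < n) : 2 ≤ kappaConst n := by
  obtain ⟨m0, m1, m2, m3⟩ := expDens_moments
  set μ : Measure (EuclideanSpace ℝ (Fin n)) :=
    volume.withDensity fun x => ENNReal.ofReal (expDensN n x) with hμ
  have hInt : ∀ φ : EuclideanSpace ℝ (Fin n) → ℝ, ∫ x, φ x ∂μ = ∫ x, φ x * expDensN n x := by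
    intro φ
    rw [hμ, integral_withDensity_eq_integral_toReal_smul
      ((measurable_expDensN n).ennreal_ofReal) (ae_of_all _ fun x => ENNReal.ofReal_lt_top)]
    congr 1
    ext x
    rw [ENNReal.toReal_ofReal (expDensN_nonneg x), smul_eq_mul, mul_comm]
  have hmom : ∀ a : Fin n → ℕ, ∫ x, (∏ i, x i ^ a i) ∂μ = ∏ i, ∫ t, t ^ a i * expDens t :=
    fun a => by rw [hInt, integral_expDensN]
  have hprod : ∀ (i : Fin n) (k : ℕ) (x : EuclideanSpace ℝ (Fin n)),
      ∏ l, x l ^ (if l = i then k else 0) = x i ^ k := by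
    intro i k x
    rw [Finset.prod_eq_single i] <;> simp +contextual
  have hone : ∀ (i : Fin n) (k : ℕ), ∫ x, x i ^ k ∂μ = ∫ t, t ^ k * expDens t := by
    intro i k
    have := hmom fun l => if l = i then k else 0
    simp_rw [hprod] at this
    rw [this, Finset.prod_eq_single i]
    · simp
    · intro b _ hb
      simp [hb, m0]
    · simp
  have hprob : IsProbabilityMeasure μ := by
    constructor
    have h1 : ∫ x, expDensN n x = 1 := by
      have := integral_expDensN (n := n) fun _ => 0
      simpa [m0] using this
    have hi : Integrable (expDensN n) := by
      by_contra hc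
      rw [integral_undef hc] at h1
      exact zero_ne_one h1
    rw [hμ, withDensity_apply _ MeasurableSet.univ, setLIntegral_univ,
      ← ofReal_integral_eq_lintegral_ofReal hi (ae_of_all _ expDensN_nonneg), h1]
    simp
  have hlc : IsLogConcaveMeasure μ := by
    refine ⟨expDensN n, measurable_expDensN n, ⟨expDensN_nonneg, ?_⟩, rfl⟩
    intro x y t h0 h1
    unfold expDensN
    rw [← Real.finsetProd_rpow _ _ (fun i _ => expDens_nonneg _),
      ← Real.finsetProd_rpow _ _ (fun i _ => expDens_nonneg _), ← Finset.prod_mul_distrib]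
    refine Finset.prod_le_prod (fun i _ => mul_nonneg (rpow_nonneg (expDens_nonneg _) _)
      (rpow_nonneg (expDens_nonneg _) _)) fun i _ => ?_
    simpa using expDens_logconcave (x i) (y i) t h0 h1
  have hiso : IsIsotropicMeasure μ := by
    refine ⟨fun i => ?_, fun i j => ?_⟩
    · simpa [m1] using hone i 1
    · by_cases hij : i = j
      · subst hij
        simpa [m2, ← sq] using hone i 2
      · rw [if_neg hij]
        have := hmom fun l => (if l = i then 1 else 0) + (if l = j then 1 else 0)
        simp_rw [pow_add, Finset.prod_mul_distrib, hprod, pow_one] at this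
        rw [this]
        refine Finset.prod_eq_zero (Finset.mem_univ i) ?_
        simp [hij, m1]
  refine le_trans ?_ (le_csSup (bddAbove_kappa n) ⟨μ, hprob, hlc, hiso, hn, rfl⟩)
  unfold hsNorm
  refine le_sqrt_of_sq_le ?_
  have e : ∫ x, x ⟨0, hn⟩ * (x ⟨0, hn⟩ * x ⟨0, hn⟩) ∂μ = 2 := by
    rw [← m3, ← hone ⟨0, hn⟩ 3]
    congr 1
    ext x
    ring
  calc (2 : ℝ) ^ 2 = (Matrix.of (fun i j => ∫ x, x ⟨0, hn⟩ * (x i * x j) ∂μ)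
        ⟨0, hn⟩ ⟨0, hn⟩) ^ 2 := by rw [Matrix.of_apply, e]
    _ ≤ ∑ j, (Matrix.of (fun i j => ∫ x, x ⟨0, hn⟩ * (x i * x j) ∂μ) ⟨0, hn⟩ j) ^ 2 :=
        Finset.single_le_sum (f := fun j => (Matrix.of (fun i j =>
          ∫ x, x ⟨0, hn⟩ * (x i * x j) ∂μ) ⟨0, hn⟩ j) ^ 2) (fun _ _ => sq_nonneg _)
          (Finset.mem_univ _)
    _ ≤ _ := Finset.single_le_sum (f := fun i => ∑ j, (Matrix.of (fun i j =>
          ∫ x, x ⟨0, hn⟩ * (x i * x j) ∂μ) i j) ^ 2)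
          (fun _ _ => Finset.sum_nonneg fun _ _ => sq_nonneg _) (Finset.mem_univ _)

end KappaLower

/-! ### Algebra of the third-moment tensor -/

section TensorAlgebra

open Matrix

variable {n : ℕ}

/-- Contraction of a three-tensor with a vector in the first slot. -/
def contract (τ : Fin n → Fin n → Fin n → ℝ) (v : Fin n → ℝ) : Matrix (Fin n) (Fin n) ℝ :=
  Matrix.of fun i j => ∑ a, v a * τ a i j

/-- Full symmetry of a three-tensor, stated through two generating transpositions. -/
def SymmTensor (τ : Fin n → Fin n → Fin n → ℝ) : Prop :=
  (∀ a b c, τ a b c = τ b a c) ∧ ∀ a b c, τ a b c = τ a c b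

lemma contract_transpose {τ : Fin n → Fin n → Fin n → ℝ} (h : SymmTensor τ) (v : Fin n → ℝ) :
    (contract τ v)ᵀ = contract τ v := by
  ext i j
  simp only [contract, transpose_apply, of_apply]
  exact Finset.sum_congr rfl fun a _ => by rw [h.2]

lemma contract_smul (τ : Fin n → Fin n → Fin n → ℝ) (c : ℝ) (v : Fin n → ℝ) :
    contract τ (c • v) = c • contract τ v := by
  ext i j
  simp [contract, Finset.mul_sum, mul_assoc]

lemma trace_mul_transpose_self (M : Matrix (Fin n) (Fin n) ℝ) :
    trace (M * Mᵀ) = ∑ i, ∑ j, M i j ^ 2 := by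
  simp only [trace, diag_apply, Matrix.mul_apply, transpose_apply, sq]

lemma trace_sq_sq (M T : Matrix (Fin n) (Fin n) ℝ) (hM : Mᵀ = M) (hT : Tᵀ = T) :
    trace (M * M * T * T) = ∑ i, ∑ j, (M * T) i j ^ 2 := by
  have h1 : trace (M * M * T * T) = trace ((M * T) * (M * T)ᵀ) := by
    rw [transpose_mul, hM, hT, Matrix.mul_assoc, Matrix.mul_assoc M M, trace_mul_comm M]
    simp only [Matrix.mul_assoc]
  rw [h1]
  exact trace_mul_transpose_self _

/-- Both sides are the squared norm of the tensor obtained by applying `J` and `W` in two slots. -/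
lemma tensor_exchange {τ : Fin n → Fin n → Fin n → ℝ} (h : SymmTensor τ)
    {W J : Matrix (Fin n) (Fin n) ℝ} (hW : Wᵀ = W) (hJ : Jᵀ = J) :
    ∑ i, trace (W * W * contract τ (J i) * contract τ (J i))
      = ∑ j, trace (J * J * contract τ (W j) * contract τ (W j)) := by
  simp_rw [trace_sq_sq W _ hW (contract_transpose h _), trace_sq_sq J _ hJ (contract_transpose h _)]
  rw [Finset.sum_comm]
  refine Finset.sum_congr rfl fun j _ => Finset.sum_congr rfl fun i _ =>
    Finset.sum_congr rfl fun r _ => ?_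
  congr 1
  simp only [contract, Matrix.mul_apply, of_apply, Finset.mul_sum]
  rw [Finset.sum_comm]
  refine Finset.sum_congr rfl fun a _ => Finset.sum_congr rfl fun b _ => ?_
  rw [h.1 a b r]
  ring

lemma conj_mul_conj {U : Matrix (Fin n) (Fin n) ℝ} (h : Uᵀ * U = 1) (d e : Fin n → ℝ) :
    (U * diagonal d * Uᵀ) * (U * diagonal e * Uᵀ) = U * diagonal (fun i => d i * e i) * Uᵀ := by
  calc _ = U * (diagonal d * (Uᵀ * U) * diagonal e) * Uᵀ := by simp only [Matrix.mul_assoc]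
    _ = _ := by rw [h, Matrix.mul_one, diagonal_mul_diagonal]

lemma trace_conj_mixed {U : Matrix (Fin n) (Fin n) ℝ} (d e : Fin n → ℝ)
    (T : Matrix (Fin n) (Fin n) ℝ) (hT : Tᵀ = T) :
    trace ((U * diagonal d * Uᵀ) * T * (U * diagonal e * Uᵀ) * T)
      = ∑ i, ∑ j, d i * e j * (Uᵀ * T * U) i j ^ 2 := by
  rw [← trace_diag_mixed d e (Uᵀ * T * U) (by simp [hT, Matrix.mul_assoc])]
  calc _ = trace (U * (diagonal d * (Uᵀ * T * U) * diagonal e * (Uᵀ * T))) := by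
        simp only [Matrix.mul_assoc]
    _ = _ := by rw [trace_mul_comm]; simp only [Matrix.mul_assoc]

lemma trace_sq_le_three {U : Matrix (Fin n) (Fin n) ℝ} (h1 : Uᵀ * U = 1) (h2 : U * Uᵀ = 1)
    (d : Fin n → ℝ) (hd0 : ∀ i, 0 < d i) (hd : ∀ i j, d i ≤ 3 * d j)
    (T : Matrix (Fin n) (Fin n) ℝ) (hT : Tᵀ = T) :
    trace ((U * diagonal d * Uᵀ) * (U * diagonal d * Uᵀ) * T * T)
      ≤ 3 * trace ((U * diagonal d * Uᵀ) * T * (U * diagonal d * Uᵀ) * T) := by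
  have e1 : (U * diagonal d * Uᵀ) * (U * diagonal d * Uᵀ) * T * T
      = (U * diagonal (fun i => d i * d i) * Uᵀ) * T * (U * diagonal (fun _ => 1) * Uᵀ) * T := by
    rw [conj_mul_conj h1]
    simp [h2]
  rw [e1, trace_conj_mixed _ _ _ hT, trace_conj_mixed _ _ _ hT, Finset.mul_sum]
  refine Finset.sum_le_sum fun i _ => ?_
  rw [Finset.mul_sum]
  refine Finset.sum_le_sum fun j _ => ?_
  have := mul_le_mul_of_nonneg_left (hd i j) (hd0 i).le
  nlinarith [sq_nonneg ((Uᵀ * T * U) i j)]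

/-- A whitening matrix with prescribed first row. -/
lemma exists_whitening (hn : 0 < n) {U : Matrix (Fin n) (Fin n) ℝ} (h1 : Uᵀ * U = 1)
    (h2 : U * Uᵀ = 1) (d : Fin n → ℝ) (hd : ∀ i, 0 < d i) (w : Fin n → ℝ)
    (hw : w ⬝ᵥ ((U * diagonal d * Uᵀ) *ᵥ w) = 1) :
    ∃ S : Matrix (Fin n) (Fin n) ℝ, S * (U * diagonal d * Uᵀ) * Sᵀ = 1 ∧ S ⟨0, hn⟩ = w := by
  set P := U * diagonal (fun i => sqrt (d i)) * Uᵀ with hP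
  set Q := U * diagonal (fun i => (sqrt (d i))⁻¹) * Uᵀ with hQ
  have hPt : Pᵀ = P := by simp [hP, Matrix.mul_assoc]
  have hQt : Qᵀ = Q := by simp [hQ, Matrix.mul_assoc]
  have hs : ∀ i, sqrt (d i) ≠ 0 := fun i => (sqrt_pos.2 (hd i)).ne'
  have hPP : P * P = U * diagonal d * Uᵀ := by
    rw [hP, conj_mul_conj h1]
    congr 3
    ext i
    exact mul_self_sqrt (hd i).le
  have hPQ : P * Q = 1 := by
    rw [hP, hQ, conj_mul_conj h1]
    simp [hs, h2]
  have hQP : Q * P = 1 := by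
    rw [hP, hQ, conj_mul_conj h1]
    simp [hs, h2]
  set u : EuclideanSpace ℝ (Fin n) := WithLp.toLp 2 (P *ᵥ w) with hu
  have hunorm : ‖u‖ = 1 := by
    have : ‖u‖ ^ 2 = 1 := by
      rw [EuclideanSpace.norm_sq_eq, ← hw, ← hPP, ← Matrix.mulVec_mulVec,
        Matrix.dotProduct_mulVec, ← Matrix.mulVec_transpose, hPt]
      simp [dotProduct, sq, hu]
    exact (pow_eq_one_iff_of_nonneg (norm_nonneg _) two_ne_zero).1 this
  have hon : Orthonormal ℝ (({⟨0, hn⟩} : Set (Fin n)).domRestrict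
      (fun _ : Fin n => u)) := by
    constructor
    · intro i; exact hunorm
    · rintro ⟨i, hi⟩ ⟨j, hj⟩ hij
      exact absurd (Subtype.ext (hi.trans hj.symm)) hij
  obtain ⟨b, hb⟩ := hon.exists_orthonormalBasis_extension_of_card_eq (by simp)
  set O : Matrix (Fin n) (Fin n) ℝ := Matrix.of fun i j => b i j with hO
  have hOO : O * Oᵀ = 1 := by
    ext i j
    have := orthonormal_iff_ite.1 b.orthonormal j i
    rw [Matrix.mul_apply, Matrix.one_apply]
    simp only [hO, of_apply, transpose_apply]
    rw [PiLp.inner_apply] at this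
    simp only [RCLike.inner_apply, conj_trivial] at this
    rw [this]
    simp [eq_comm]
  refine ⟨O * Q, ?_, ?_⟩
  · rw [transpose_mul, hQt, ← hPP]
    calc _ = O * (Q * P) * (P * Q) * Oᵀ := by simp only [Matrix.mul_assoc]
      _ = 1 := by rw [hPQ, hQP, Matrix.mul_one, Matrix.mul_one, hOO]
  · have hrow : O ⟨0, hn⟩ = P *ᵥ w := by
      ext j
      simp only [hO, of_apply]
      rw [hb ⟨0, hn⟩ rfl, hu]
    rw [Matrix.mul_apply_eq_vecMul, hrow, ← Matrix.mulVec_transpose, hQt, Matrix.mulVec_mulVec, hQP,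
      Matrix.one_mulVec]

lemma whitening_inv {S A J : Matrix (Fin n) (Fin n) ℝ} (h : S * A * Sᵀ = 1) (hAJ : A * J = 1) :
    Sᵀ * S = J := by
  have h3 : A * (Sᵀ * S) = 1 := by
    have h2 : A * Sᵀ * S = 1 := by
      rw [Matrix.mul_assoc] at h
      exact mul_eq_one_comm.1 h
    rw [← Matrix.mul_assoc, h2]
  have h4 : J * A = 1 := mul_eq_one_comm.1 hAJ
  calc Sᵀ * S = J * A * (Sᵀ * S) := by rw [h4, Matrix.one_mul]
    _ = J := by rw [Matrix.mul_assoc, h3, Matrix.mul_one]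

/-- The defining bound of `κₙ` for whitened measures, turned into a whitening-free inequality. -/
lemma trace_contract_le (hn : 0 < n) {τ : Fin n → Fin n → Fin n → ℝ} (hτ : SymmTensor τ)
    {U : Matrix (Fin n) (Fin n) ℝ} (h1 : Uᵀ * U = 1)
    (h2 : U * Uᵀ = 1) (d : Fin n → ℝ) (hd : ∀ i, 0 < d i) {κ : ℝ}
    (hκ : ∀ S : Matrix (Fin n) (Fin n) ℝ, S * (U * diagonal d * Uᵀ) * Sᵀ = 1 →
      ∑ i, ∑ j, (S * contract τ (S ⟨0, hn⟩) * Sᵀ) i j ^ 2 ≤ κ ^ 2) (w : Fin n → ℝ) :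
    trace ((U * diagonal (fun i => (d i)⁻¹) * Uᵀ) * contract τ w *
      (U * diagonal (fun i => (d i)⁻¹) * Uᵀ) * contract τ w)
      ≤ κ ^ 2 * (w ⬝ᵥ ((U * diagonal d * Uᵀ) *ᵥ w)) := by
  set J := U * diagonal (fun i => (d i)⁻¹) * Uᵀ with hJ
  set A := U * diagonal d * Uᵀ with hA
  have hAJ : A * J = 1 := by
    rw [hA, hJ, conj_mul_conj h1]
    simp [(hd _).ne', h2]
  have unit : ∀ w : Fin n → ℝ, w ⬝ᵥ (A *ᵥ w) = 1 →
      trace (J * contract τ w * J * contract τ w) ≤ κ ^ 2 := by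
    intro w hw
    obtain ⟨S, hS, hS0⟩ := exists_whitening hn h1 h2 d hd w hw
    have h := hκ S hS
    rw [hS0] at h
    have hJS := whitening_inv hS hAJ
    refine le_trans (le_of_eq ?_) h
    set T := contract τ w
    have hT : Tᵀ = T := contract_transpose hτ w
    have e : ∑ i, ∑ j, (S * T * Sᵀ) i j ^ 2 = trace ((S * T * Sᵀ) * (S * T * Sᵀ)ᵀ) := by
      exact (trace_mul_transpose_self _).symm
    rw [e, ← hJS]
    simp only [transpose_mul, transpose_transpose, hT]
    rw [show Sᵀ * S * T * (Sᵀ * S) * T = Sᵀ * (S * T * (Sᵀ * S) * T) by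
      simp only [Matrix.mul_assoc], trace_mul_comm]
    simp only [Matrix.mul_assoc]
  set q := w ⬝ᵥ (A *ᵥ w) with hq
  have hq' : q = ∑ i, d i * (Uᵀ *ᵥ w) i ^ 2 := by
    rw [hq, hA, ← Matrix.mulVec_mulVec, ← Matrix.mulVec_mulVec, Matrix.dotProduct_mulVec,
      ← Matrix.mulVec_transpose]
    simp only [dotProduct, mulVec_diagonal]
    exact Finset.sum_congr rfl fun i _ => by ring
  rcases eq_or_ne w 0 with rfl | hw0
  · have : contract τ (0 : Fin n → ℝ) = 0 := by ext i j; simp [contract]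
    simp [this, hq]
  have hqpos : 0 < q := by
    rw [hq']
    have hne : Uᵀ *ᵥ w ≠ 0 := by
      intro h0
      apply hw0
      have : U *ᵥ (Uᵀ *ᵥ w) = w := by rw [Matrix.mulVec_mulVec, h2, Matrix.one_mulVec]
      rw [← this, h0, Matrix.mulVec_zero]
    obtain ⟨i, hi⟩ := Function.ne_iff.1 hne
    refine Finset.sum_pos' (fun i _ => mul_nonneg (hd i).le (sq_nonneg _))
      ⟨i, Finset.mem_univ i, mul_pos (hd i) (sq_pos_of_ne_zero hi)⟩
  have h3 := unit ((sqrt q)⁻¹ • w) (by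
    rw [Matrix.mulVec_smul, smul_dotProduct, dotProduct_smul, ← hq, smul_eq_mul, smul_eq_mul,
      ← mul_assoc, ← mul_inv, mul_self_sqrt hqpos.le, inv_mul_cancel₀ hqpos.ne'])
  rw [contract_smul] at h3
  simp only [Matrix.mul_smul, Matrix.smul_mul, trace_smul, smul_eq_mul] at h3
  rw [← mul_assoc, ← mul_inv, mul_self_sqrt hqpos.le, inv_mul_le_iff₀ hqpos] at h3
  linarith

/-- The quadratic variation estimate: averaging `tr (Bᵏ T(A⁻¹ g)²)` over directions `g` costs
`κ²` times `tr Bᵏ`. -/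
lemma sum_trace_contract_le (hn : 0 < n) {τ : Fin n → Fin n → Fin n → ℝ} (hτ : SymmTensor τ)
    {U : Matrix (Fin n) (Fin n) ℝ} (h1 : Uᵀ * U = 1)
    (h2 : U * Uᵀ = 1) (l : Fin n → ℝ) (hl : ∀ i, |l i| < 1 / 2) {κ : ℝ}
    (hκ : ∀ S : Matrix (Fin n) (Fin n) ℝ, S * (1 + U * diagonal l * Uᵀ) * Sᵀ = 1 →
      ∑ i, ∑ j, (S * contract τ (S ⟨0, hn⟩) * Sᵀ) i j ^ 2 ≤ κ ^ 2) {k : ℕ} (hk : Even k) :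
    ∑ i, trace ((U * diagonal l * Uᵀ) ^ k *
        contract τ ((U * diagonal (fun i => (1 + l i)⁻¹) * Uᵀ) i) *
        contract τ ((U * diagonal (fun i => (1 + l i)⁻¹) * Uᵀ) i))
      ≤ 9 / 2 * κ ^ 2 * trace ((U * diagonal l * Uᵀ) ^ k) := by
  obtain ⟨r, hr⟩ := hk
  set J := U * diagonal (fun i => (1 + l i)⁻¹) * Uᵀ with hJ
  have hA : 1 + U * diagonal l * Uᵀ = U * diagonal (fun i => 1 + l i) * Uᵀ := by
    have : diagonal (fun i => 1 + l i) = 1 + diagonal l := by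
      rw [← diagonal_one, diagonal_add]
    rw [this, Matrix.mul_add, Matrix.add_mul, Matrix.mul_one, h2]
  have hl' : ∀ i, -(1 / 2) < l i ∧ l i < 1 / 2 := fun i => abs_lt.1 (hl i)
  have hd : ∀ i, 0 < 1 + l i := fun i => by linarith [(hl' i).1]
  rw [hA] at hκ
  set W := (U * diagonal l * Uᵀ) ^ r with hW
  have hWd : W = U * diagonal (fun i => l i ^ r) * Uᵀ := conj_diag_pow h1 h2 r
  have hWt : Wᵀ = W := by rw [hWd]; simp [Matrix.mul_assoc]
  have hJt : Jᵀ = J := by simp [hJ, Matrix.mul_assoc]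
  have hBk : (U * diagonal l * Uᵀ) ^ k = W * W := by rw [hr, pow_add]
  rw [hBk, tensor_exchange hτ hWt hJt]
  calc _ ≤ ∑ j, 3 * (κ ^ 2 * (W j ⬝ᵥ ((U * diagonal (fun i => 1 + l i) * Uᵀ) *ᵥ W j))) := by
        refine Finset.sum_le_sum fun j _ => ?_
        refine (trace_sq_le_three h1 h2 (fun i => (1 + l i)⁻¹) (fun i => inv_pos.2 (hd i)) ?_ _
          (contract_transpose hτ _)).trans ?_
        · intro i j
          rw [inv_le_iff_one_le_mul₀ (hd i), mul_assoc, inv_mul_eq_div, mul_div_assoc',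
            le_div_iff₀ (hd j)]
          linarith [(hl' i).1, (hl' j).2]
        · gcongr
          exact trace_contract_le hn hτ h1 h2 (fun i => 1 + l i) hd hκ (W j)
    _ = 3 * κ ^ 2 * trace (W * (U * diagonal (fun i => 1 + l i) * Uᵀ) * W) := by
        rw [trace, Finset.mul_sum]
        refine Finset.sum_congr rfl fun j _ => ?_
        have : (W * (U * diagonal (fun i => 1 + l i) * Uᵀ) * W).diag j
            = W j ⬝ᵥ ((U * diagonal (fun i => 1 + l i) * Uᵀ) *ᵥ W j) := by
          have e : ∀ b, W b j = W j b := fun b => by conv_lhs => rw [← hWt, transpose_apply]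
          rw [diag_apply, Matrix.mul_assoc, Matrix.mul_apply]
          simp only [dotProduct, mulVec, Matrix.mul_apply (M := U * diagonal (fun i => 1 + l i) * Uᵀ),
            e]
        rw [this]
        ring
    _ ≤ _ := by
        rw [hWd, conj_mul_conj h1, conj_mul_conj h1, conj_mul_conj h1, trace_conj_diag h1,
          trace_conj_diag h1]
        have : ∑ i, l i ^ r * (1 + l i) * l i ^ r ≤ 3 / 2 * ∑ i, l i ^ r * l i ^ r := by
          rw [Finset.mul_sum]
          refine Finset.sum_le_sum fun i _ => ?_
          nlinarith [mul_self_nonneg (l i ^ r), (hl' i).2]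
        nlinarith [sq_nonneg κ]

end TensorAlgebra

/-! ### Log-concave measures on a convex body: affine images and affine tilts -/

section States

open Matrix

variable {n : ℕ}

lemma IsLogConcaveMeasure.map_affine {μ : Measure (EuclideanSpace ℝ (Fin n))}
    (h : IsLogConcaveMeasure μ) (L : EuclideanSpace ℝ (Fin n) ≃L[ℝ] EuclideanSpace ℝ (Fin n))
    (a : EuclideanSpace ℝ (Fin n)) : IsLogConcaveMeasure (μ.map fun x => L (x - a)) := by
  obtain ⟨p, hm, ⟨hp0, hp⟩, rfl⟩ := h
  set φ : EuclideanSpace ℝ (Fin n) ≃ᵐ EuclideanSpace ℝ (Fin n) :=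
    ((Homeomorph.subRight a).trans L.toHomeomorph).toMeasurableEquiv with hφ
  have hφa : ∀ x, φ x = L (x - a) := fun x => rfl
  have hφs : ∀ y, φ.symm y = L.symm y + a := fun y => rfl
  set f : EuclideanSpace ℝ (Fin n) →ₗ[ℝ] EuclideanSpace ℝ (Fin n) :=
    L.toLinearEquiv.toLinearMap with hf
  have hdet : LinearMap.det f ≠ 0 := (LinearEquiv.isUnit_det' L.toLinearEquiv).ne_zero
  set c : ℝ := |(LinearMap.det f)⁻¹| with hc
  have hc0 : 0 < c := abs_pos.2 (inv_ne_zero hdet)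
  have hvol : (volume : Measure (EuclideanSpace ℝ (Fin n))).map φ = ENNReal.ofReal c • volume := by
    have h1 : (volume : Measure (EuclideanSpace ℝ (Fin n))).map φ
        = ((volume : Measure (EuclideanSpace ℝ (Fin n))).map (fun x => x - a)).map f := by
      rw [Measure.map_map (show Measurable f from L.continuous.measurable) (by fun_prop)]
      rfl
    rw [h1, (measurePreserving_sub_right volume a).map_eq,
      Measure.map_linearMap_addHaar_eq_smul_addHaar _ hdet]
  refine ⟨fun y => c * p (φ.symm y), (hm.comp φ.symm.measurable).const_mul c, ⟨fun y =>
    mul_nonneg hc0.le (hp0 _), ?_⟩, ?_⟩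
  · intro x y t h0 h1
    rw [mul_rpow hc0.le (hp0 _), mul_rpow hc0.le (hp0 _)]
    have e1 : c ^ t * c ^ (1 - t) = c := by rw [← rpow_add hc0]; simp
    have e2 : φ.symm (t • x + (1 - t) • y) = t • φ.symm x + (1 - t) • φ.symm y := by
      rw [hφs, hφs, hφs, map_add, map_smul, map_smul]
      module
    simp only [e2]
    calc _ = (c ^ t * c ^ (1 - t)) * (p (φ.symm x) ^ t * p (φ.symm y) ^ (1 - t)) := by ring
      _ ≤ _ := by rw [e1]; exact mul_le_mul_of_nonneg_left (hp _ _ t h0 h1) hc0.le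
  · have h2 : (volume.withDensity fun x => ENNReal.ofReal (p x)).map φ
        = ((volume : Measure (EuclideanSpace ℝ (Fin n))).map φ).withDensity
          fun y => ENNReal.ofReal (p (φ.symm y)) := by
      ext s hs
      rw [φ.map_apply, withDensity_apply _ (φ.measurable hs), withDensity_apply _ hs,
        φ.measurableEmbedding.restrict_map, lintegral_map_equiv]
      simp
    change (volume.withDensity fun x => ENNReal.ofReal (p x)).map φ = _
    have hm2 : Measurable fun y => ENNReal.ofReal (p (φ.symm y)) :=
      (hm.comp φ.symm.measurable).ennreal_ofReal
    rw [h2, hvol, withDensity_smul_measure, ← withDensity_smul _ hm2]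
    congr 1
    ext y
    simp [ENNReal.ofReal_mul hc0.le]

/-- The barycenter of a measure, coordinate by coordinate. -/
def bary (μ : Measure (EuclideanSpace ℝ (Fin n))) : EuclideanSpace ℝ (Fin n) :=
  WithLp.toLp 2 fun i => ∫ x, x i ∂μ

/-- The covariance matrix. -/
def covMat (μ : Measure (EuclideanSpace ℝ (Fin n))) : Matrix (Fin n) (Fin n) ℝ :=
  Matrix.of fun i j => ∫ x, (x i - bary μ i) * (x j - bary μ j) ∂μ

/-- The centred third-moment tensor. -/
def third (μ : Measure (EuclideanSpace ℝ (Fin n))) (a b c : Fin n) : ℝ :=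
  ∫ x, (x a - bary μ a) * ((x b - bary μ b) * (x c - bary μ c)) ∂μ

lemma symmTensor_third (μ : Measure (EuclideanSpace ℝ (Fin n))) : SymmTensor (third μ) := by
  constructor <;> intro a b c <;> simp only [third] <;> congr 1 <;> ext x <;> ring

lemma covMat_isHermitian (μ : Measure (EuclideanSpace ℝ (Fin n))) : (covMat μ).IsHermitian := by
  ext i j
  simp only [covMat, conjTranspose_apply, of_apply, star_trivial]
  congr 1; ext x; ring

/-- The measures occurring along the localization: log-concave probability measures
carried by `K`. -/
structure LocState (K : Set (EuclideanSpace ℝ (Fin n)))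
    (μ : Measure (EuclideanSpace ℝ (Fin n))) : Prop where
  prob : IsProbabilityMeasure μ
  lc : IsLogConcaveMeasure μ
  supp : μ Kᶜ = 0

variable {K : Set (EuclideanSpace ℝ (Fin n))} {μ : Measure (EuclideanSpace ℝ (Fin n))}

lemma LocState.ae_mem (h : LocState K μ) : ∀ᵐ x ∂μ, x ∈ K := by
  rw [ae_iff]; exact h.supp

lemma LocState.integrable (h : LocState K μ) (hK : IsCompact K)
    {f : EuclideanSpace ℝ (Fin n) → ℝ} (hf : Continuous f) : Integrable f μ := by
  have := h.prob
  have h1 : μ.restrict K = μ := Measure.restrict_eq_self_of_ae_mem h.ae_mem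
  rw [← h1]
  exact hf.continuousOn.integrableOn_compact hK

lemma LocState.abs_integral_le (h : LocState K μ) {f : EuclideanSpace ℝ (Fin n) → ℝ} {c : ℝ}
    (hc : ∀ x ∈ K, |f x| ≤ c) : |∫ x, f x ∂μ| ≤ c := by
  have := h.prob
  have h1 := norm_integral_le_of_norm_le_const (μ := μ) (f := f) (C := c)
    (h.ae_mem.mono fun x hx => hc x hx)
  simpa using h1

lemma LocState.bary_mem (h : LocState K μ) (hK : IsCompact K) (hconv : Convex ℝ K) :
    bary μ ∈ K := by
  have := h.prob
  have hInt : Integrable (fun x : EuclideanSpace ℝ (Fin n) => x) μ := by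
    have h1 : μ.restrict K = μ := Measure.restrict_eq_self_of_ae_mem h.ae_mem
    rw [← h1]
    exact continuous_id.continuousOn.integrableOn_compact hK
  have h2 : bary μ = ∫ x, x ∂μ := by
    ext i
    have := (EuclideanSpace.proj (𝕜 := ℝ) i).integral_comp_comm hInt
    simpa [bary] using this
  rw [h2]
  exact hconv.integral_mem hK.isClosed h.ae_mem hInt

lemma LocState.bounds (h : LocState K μ) (hK : IsCompact K) (hconv : Convex ℝ K) {ρ : ℝ}
    (hρ : ∀ x ∈ K, ‖x‖ ≤ ρ) :
    (∀ x ∈ K, ∀ i, |x i - bary μ i| ≤ 2 * ρ) ∧ (∀ i j, |covMat μ i j| ≤ (2 * ρ) ^ 2) ∧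
      ∀ a b c, |third μ a b c| ≤ (2 * ρ) ^ 3 := by
  have hb := hρ _ (h.bary_mem hK hconv)
  have h1 : ∀ x ∈ K, ∀ i, |x i - bary μ i| ≤ 2 * ρ := by
    intro x hx i
    have e1 : |x i| ≤ ‖x‖ := PiLp.norm_apply_le x i
    have e2 : |bary μ i| ≤ ‖bary μ‖ := PiLp.norm_apply_le (bary μ) i
    have := abs_sub (x i) (bary μ i)
    linarith [hρ x hx]
  have hρ0 : 0 ≤ ρ := (norm_nonneg _).trans hb
  refine ⟨h1, fun i j => h.abs_integral_le fun x hx => ?_,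
    fun a b c => h.abs_integral_le fun x hx => ?_⟩
  · rw [abs_mul, sq]
    exact mul_le_mul (h1 x hx i) (h1 x hx j) (abs_nonneg _) (by positivity)
  · rw [abs_mul, abs_mul, show (2 * ρ) ^ 3 = 2 * ρ * (2 * ρ * (2 * ρ)) by ring]
    exact mul_le_mul (h1 x hx a) (mul_le_mul (h1 x hx b) (h1 x hx c) (abs_nonneg _)
      (by positivity)) (by positivity) (by positivity)

/-- The definition of `κₙ`, applied to the whitening of `μ` by `S`. -/
lemma LocState.whitened_le (h : LocState K μ) (hK : IsCompact K) (hn : 0 < n)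
    (S : Matrix (Fin n) (Fin n) ℝ) (hS : S * covMat μ * Sᵀ = 1) :
    ∑ i, ∑ j, (S * contract (third μ) (S ⟨0, hn⟩) * Sᵀ) i j ^ 2 ≤ kappaConst n ^ 2 := by
  have hprob := h.prob
  have hS1 : S * S⁻¹ = 1 := by
    have : IsUnit S := by
      rw [Matrix.mul_assoc] at hS
      exact IsUnit.of_mul_eq_one _ hS
    exact Matrix.mul_nonsing_inv _ ((Matrix.isUnit_iff_isUnit_det _).1 this)
  have hS2 : S⁻¹ * S = 1 := mul_eq_one_comm.1 hS1
  set L : EuclideanSpace ℝ (Fin n) ≃L[ℝ] EuclideanSpace ℝ (Fin n) :=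
    (LinearEquiv.ofLinearMap (Matrix.toEuclideanLin S) (Matrix.toEuclideanLin S⁻¹)
      (by ext x; simp [Matrix.toLpLin_apply, Matrix.mulVec_mulVec, hS1])
      (by ext x; simp [Matrix.toLpLin_apply, Matrix.mulVec_mulVec, hS2])
      ).toContinuousLinearEquiv with hL
  set a := bary μ with ha
  have hLa : ∀ x i, L (x - a) i = ∑ k, S i k * (x k - a k) := by
    intro x i
    simp [hL, Matrix.toLpLin_apply, Matrix.mulVec, dotProduct, mul_sub, Finset.sum_sub_distrib]
  have hmeas : Measurable fun x => L (x - a) := by fun_prop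
  set ν := μ.map fun x => L (x - a) with hν
  have hνp : IsProbabilityMeasure ν := Measure.isProbabilityMeasure_map hmeas.aemeasurable
  have hInt : ∀ f : EuclideanSpace ℝ (Fin n) → ℝ, Continuous f →
      ∫ y, f y ∂ν = ∫ x, f (L (x - a)) ∂μ := by
    intro f hf
    rw [hν, integral_map hmeas.aemeasurable hf.aestronglyMeasurable]
  have hint1 : ∀ f : EuclideanSpace ℝ (Fin n) → ℝ, Continuous f → Integrable f μ :=
    fun f hf => h.integrable hK hf
  have hiso : IsIsotropicMeasure ν := by
    constructor
    · intro i
      rw [hInt _ (by fun_prop)]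
      simp_rw [hLa]
      rw [integral_finsetSum _ fun k _ => hint1 _ (by fun_prop)]
      refine Finset.sum_eq_zero fun k _ => ?_
      rw [integral_const_mul, integral_sub (hint1 _ (by fun_prop)) (hint1 _ (by fun_prop))]
      simp [ha, bary]
    · intro i j
      rw [hInt _ (by fun_prop), ← Matrix.one_apply, ← hS]
      simp_rw [hLa, Finset.sum_mul_sum]
      rw [integral_finsetSum _ fun k _ => hint1 _ (by fun_prop)]
      rw [Matrix.mul_assoc, Matrix.mul_apply]
      refine Finset.sum_congr rfl fun k _ => ?_
      rw [integral_finsetSum _ fun k _ => hint1 _ (by fun_prop), Matrix.mul_apply, Finset.mul_sum]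
      refine Finset.sum_congr rfl fun l _ => ?_
      rw [transpose_apply, covMat, of_apply, ← ha, ← mul_assoc, mul_right_comm,
        ← integral_const_mul]
      congr 1; ext x; ring
  have hk := le_csSup (bddAbove_kappa n) ⟨ν, hνp, h.lc.map_affine L a, hiso, hn, rfl⟩
  have hent : ∀ i j, ∫ y, y ⟨0, hn⟩ * (y i * y j) ∂ν
      = (S * contract (third μ) (S ⟨0, hn⟩) * Sᵀ) i j := by
    intro i j
    rw [hInt _ (by fun_prop)]
    have e : ∀ x, L (x - a) ⟨0, hn⟩ * (L (x - a) i * L (x - a) j) = ∑ k, ∑ l, ∑ b,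
        (S i k * (S ⟨0, hn⟩ b * S j l)) * ((x b - a b) * ((x k - a k) * (x l - a l))) := by
      intro x
      rw [hLa, hLa, hLa, Finset.sum_mul_sum, Finset.mul_sum]
      refine Finset.sum_congr rfl fun k _ => ?_
      rw [Finset.mul_sum]
      refine Finset.sum_congr rfl fun l _ => ?_
      rw [Finset.sum_mul]
      exact Finset.sum_congr rfl fun b _ => by ring
    simp_rw [e]
    rw [integral_finsetSum _ fun k _ => hint1 _ (by fun_prop), Matrix.mul_assoc, Matrix.mul_apply]
    refine Finset.sum_congr rfl fun k _ => ?_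
    rw [integral_finsetSum _ fun k _ => hint1 _ (by fun_prop), Matrix.mul_apply, Finset.mul_sum]
    refine Finset.sum_congr rfl fun l _ => ?_
    rw [integral_finsetSum _ fun k _ => hint1 _ (by fun_prop), contract, of_apply, transpose_apply,
      Finset.sum_mul, Finset.mul_sum]
    refine Finset.sum_congr rfl fun b _ => ?_
    rw [integral_const_mul, third, ← ha]
    ring
  have hk2 : hsNorm (Matrix.of fun i j => ∫ y, y ⟨0, hn⟩ * (y i * y j) ∂ν) ≤ kappaConst n := hk
  unfold hsNorm at hk2
  rw [sqrt_le_iff] at hk2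
  simp only [of_apply, hent] at hk2
  exact hk2.2

/-- The affine tilt of `μ` with density `1 + ⟨v, x - a⟩`, `a` the barycenter. -/
def tilt (μ : Measure (EuclideanSpace ℝ (Fin n))) (v : Fin n → ℝ) :
    Measure (EuclideanSpace ℝ (Fin n)) :=
  μ.withDensity fun x => ENNReal.ofReal (1 + ∑ a, v a * (x a - bary μ a))

lemma LocState.integral_tilt (h : LocState K μ) (hK : IsCompact K) {v : Fin n → ℝ}
    (hv : ∀ x ∈ K, 0 ≤ 1 + ∑ a, v a * (x a - bary μ a)) {f : EuclideanSpace ℝ (Fin n) → ℝ}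
    (hf : Continuous f) :
    ∫ x, f x ∂(tilt μ v) = ∫ x, f x ∂μ + ∑ a, v a * ∫ x, (x a - bary μ a) * f x ∂μ := by
  rw [tilt, integral_withDensity_eq_integral_toReal_smul (by fun_prop)
    (ae_of_all _ fun x => ENNReal.ofReal_lt_top)]
  have h1 : ∫ x, (ENNReal.ofReal (1 + ∑ a, v a * (x a - bary μ a))).toReal • f x ∂μ
      = ∫ x, f x + ∑ a, v a * ((x a - bary μ a) * f x) ∂μ := by
    refine integral_congr_ae (h.ae_mem.mono fun x hx => ?_)
    simp only
    rw [ENNReal.toReal_ofReal (hv x hx), smul_eq_mul, add_mul, one_mul, Finset.sum_mul]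
    simp only [mul_assoc]
  rw [h1, integral_add (h.integrable hK hf) (h.integrable hK (by fun_prop)),
    integral_finsetSum _ fun k _ => h.integrable hK (by fun_prop)]
  simp only [integral_const_mul]

lemma LocState.integral_centered (h : LocState K μ) (hK : IsCompact K) (i : Fin n) :
    ∫ x, (x i - bary μ i) ∂μ = 0 := by
  have := h.prob
  rw [integral_sub (h.integrable hK (by fun_prop)) (h.integrable hK (by fun_prop))]
  simp [bary]

lemma IsLogConcaveDensity.mul_affine {p : EuclideanSpace ℝ (Fin n) → ℝ}
    (hp : IsLogConcaveDensity p) (v : Fin n → ℝ) (b : EuclideanSpace ℝ (Fin n)) :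
    IsLogConcaveDensity fun x => p x * max (1 + ∑ a, v a * (x a - b a)) 0 := by
  refine ⟨fun x => mul_nonneg (hp.1 x) (le_max_right _ _), fun x y t h0 h1 => ?_⟩
  set ℓ : EuclideanSpace ℝ (Fin n) → ℝ := fun x => 1 + ∑ a, v a * (x a - b a) with hℓ
  have haff : ℓ (t • x + (1 - t) • y) = t * ℓ x + (1 - t) * ℓ y := by
    simp only [hℓ, mul_add, Finset.mul_sum, mul_one]
    rw [show t + ∑ i, t * (v i * (x i - b i)) + (1 - t + ∑ i, (1 - t) * (v i * (y i - b i)))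
      = 1 + (∑ i, t * (v i * (x i - b i)) + ∑ i, (1 - t) * (v i * (y i - b i))) by ring,
      ← Finset.sum_add_distrib]
    congr 1
    refine Finset.sum_congr rfl fun i _ => ?_
    simp
    ring
  have key : max (ℓ x) 0 ^ t * max (ℓ y) 0 ^ (1 - t) ≤ max (ℓ (t • x + (1 - t) • y)) 0 := by
    rcases h0.eq_or_lt with rfl | h0
    · simp
    rcases h1.eq_or_lt with rfl | h1
    · simp
    by_cases hx : 0 ≤ ℓ x
    · by_cases hy : 0 ≤ ℓ y
      · rw [max_eq_left hx, max_eq_left hy, haff]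
        exact (Real.geom_mean_le_arith_mean2_weighted h0.le (by linarith) hx hy (by ring)).trans
          (le_max_left _ _)
      · rw [max_eq_right (not_le.1 hy).le, zero_rpow (by linarith), mul_zero]
        exact le_max_right _ _
    · rw [max_eq_right (not_le.1 hx).le, zero_rpow (by linarith), zero_mul]
      exact le_max_right _ _
  rw [mul_rpow (hp.1 _) (le_max_right _ _), mul_rpow (hp.1 _) (le_max_right _ _)]
  calc _ = (p x ^ t * p y ^ (1 - t)) * (max (ℓ x) 0 ^ t * max (ℓ y) 0 ^ (1 - t)) := by
        simp only [hℓ]; ring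
    _ ≤ _ := mul_le_mul (hp.2 x y t h0 h1) key
      (mul_nonneg (rpow_nonneg (le_max_right _ _) _) (rpow_nonneg (le_max_right _ _) _)) (hp.1 _)

lemma LocState.tilt (h : LocState K μ) (hK : IsCompact K) {v : Fin n → ℝ}
    (hv : ∀ x ∈ K, 0 ≤ 1 + ∑ a, v a * (x a - bary μ a)) : LocState K (tilt μ v) := by
  have := h.prob
  refine ⟨⟨?_⟩, ?_, ?_⟩
  · rw [_root_.tilt, withDensity_apply _ MeasurableSet.univ, setLIntegral_univ,
      ← ofReal_integral_eq_lintegral_ofReal (h.integrable hK (by fun_prop))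
        (h.ae_mem.mono fun x hx => hv x hx), integral_add (integrable_const _)
        (h.integrable hK (by fun_prop)),
      integral_finsetSum _ fun k _ => h.integrable hK (by fun_prop)]
    simp [integral_const_mul, h.integral_centered hK]
  · obtain ⟨p, hm, hp, hμ⟩ := h.lc
    refine ⟨_, ?_, hp.mul_affine v (bary μ), ?_⟩
    · fun_prop
    · rw [_root_.tilt]
      conv_lhs => rw [hμ]
      rw [← withDensity_mul _ (by fun_prop) (by fun_prop), ← hμ]
      congr 1
      ext x
      rw [Pi.mul_apply, ENNReal.ofReal_mul (hp.1 x)]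
      congr 1
      simp [ENNReal.ofReal, Real.toNNReal]
  · exact withDensity_absolutelyContinuous _ _ h.supp

lemma LocState.bary_tilt (h : LocState K μ) (hK : IsCompact K) {v : Fin n → ℝ}
    (hv : ∀ x ∈ K, 0 ≤ 1 + ∑ a, v a * (x a - bary μ a)) (i : Fin n) :
    bary (_root_.tilt μ v) i = bary μ i + (covMat μ *ᵥ v) i := by
  have h1 : bary (_root_.tilt μ v) i = ∫ x, x i ∂(_root_.tilt μ v) := rfl
  rw [h1, h.integral_tilt hK hv (by fun_prop)]
  congr 1
  simp only [mulVec, dotProduct, covMat, of_apply]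
  refine Finset.sum_congr rfl fun a _ => ?_
  rw [mul_comm]
  congr 1
  have e : ∀ x : EuclideanSpace ℝ (Fin n), (x a - bary μ a) * x i
      = (x i - bary μ i) * (x a - bary μ a) + (x a - bary μ a) * bary μ i := fun x => by ring
  simp_rw [e]
  rw [integral_add (h.integrable hK (by fun_prop)) (h.integrable hK (by fun_prop)),
    integral_mul_const, h.integral_centered hK]
  simp

lemma LocState.covMat_tilt (h : LocState K μ) (hK : IsCompact K) {v : Fin n → ℝ}
    (hv : ∀ x ∈ K, 0 ≤ 1 + ∑ a, v a * (x a - bary μ a)) :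
    covMat (_root_.tilt μ v) = covMat μ + contract (third μ) v
      - vecMulVec (covMat μ *ᵥ v) (covMat μ *ᵥ v) := by
  ext i j
  set q := covMat μ *ᵥ v with hq
  have hs := h.tilt hK hv
  have hpr := hs.prob
  have e1 : ∀ x : EuclideanSpace ℝ (Fin n),
      (x i - bary (_root_.tilt μ v) i) * (x j - bary (_root_.tilt μ v) j)
      = (x i - bary μ i) * (x j - bary μ j) - q j * (x i - bary (_root_.tilt μ v) i)
        - q i * (x j - bary (_root_.tilt μ v) j) - q i * q j := by
    intro x
    rw [h.bary_tilt hK hv, h.bary_tilt hK hv]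
    ring
  have e2 : ∀ i, ∫ x, (x i - bary (_root_.tilt μ v) i) ∂(_root_.tilt μ v) = 0 :=
    fun i => hs.integral_centered hK i
  simp only [Matrix.sub_apply, Matrix.add_apply, vecMulVec_apply]
  rw [covMat, of_apply]
  simp_rw [e1]
  rw [integral_sub (hs.integrable hK (by fun_prop)) (hs.integrable hK (by fun_prop)),
    integral_sub (hs.integrable hK (by fun_prop)) (hs.integrable hK (by fun_prop)),
    integral_sub (hs.integrable hK (by fun_prop)) (hs.integrable hK (by fun_prop)),
    integral_const_mul, integral_const_mul, e2, e2, h.integral_tilt hK hv (by fun_prop)]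
  simp [covMat, contract, third]

end States

/-! ### Gaussian integrals -/

section GaussianFacts

open Matrix

variable {n : ℕ}

/-- The standard Gaussian measure, in Mathlib's characteristic-function form. -/
abbrev gau (n : ℕ) : Measure (EuclideanSpace ℝ (Fin n)) :=
  ProbabilityTheory.stdGaussian (EuclideanSpace ℝ (Fin n))

lemma gau_integrable_norm_pow (k : ℕ) : Integrable (fun g => ‖g‖ ^ k) (gau n) := by
  have h := ProbabilityTheory.IsGaussian.memLp_id (gau n) (k : ℝ≥0∞) (by simp)
  by_cases hk : k = 0
  · subst hk; simp
  · have := h.integrable_norm_pow hk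
    simpa using this

/-- Continuous functions of at most polynomial growth are Gaussian integrable. -/
lemma gau_integrable {f : EuclideanSpace ℝ (Fin n) → ℝ} (hf : Continuous f) (c : ℝ) (k : ℕ)
    (hb : ∀ g, |f g| ≤ c * (1 + ‖g‖ ^ k)) : Integrable f (gau n) := by
  refine Integrable.mono' (((integrable_const (1:ℝ)).add (gau_integrable_norm_pow k)).const_mul c)
    hf.aestronglyMeasurable (ae_of_all _ fun g => ?_)
  simpa using hb g

lemma gau_integrable_mul (i j : Fin n) : Integrable (fun g => g i * g j) (gau n) := by
  refine gau_integrable (by fun_prop) 1 2 fun g => ?_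
  have h1 : |g i| ≤ ‖g‖ := PiLp.norm_apply_le g i
  have h2 : |g j| ≤ ‖g‖ := PiLp.norm_apply_le g j
  rw [abs_mul]
  nlinarith [mul_le_mul h1 h2 (abs_nonneg _) (norm_nonneg _)]

lemma gau_integral_mul (i j : Fin n) :
    ∫ g, g i * g j ∂(gau n) = if i = j then 1 else 0 := by
  have h := ProbabilityTheory.covarianceBilin_apply
    (ProbabilityTheory.IsGaussian.memLp_two_id (μ := gau n))
    (EuclideanSpace.single i (1:ℝ)) (EuclideanSpace.single j (1:ℝ))
  rw [ProbabilityTheory.covarianceBilin_stdGaussian] at h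
  have h0 : ∫ x, id x ∂(gau n) = 0 := ProbabilityTheory.integral_id_stdGaussian
  simp only [h0, sub_zero] at h
  simp only [EuclideanSpace.inner_single_left, map_one, one_mul] at h
  rw [← h]
  change ⟪EuclideanSpace.single i (1:ℝ), EuclideanSpace.single j (1:ℝ)⟫ = _
  rw [EuclideanSpace.inner_single_left]
  simp

/-- Odd functions have vanishing integral over symmetric sets. -/
lemma gau_setIntegral_odd {f : EuclideanSpace ℝ (Fin n) → ℝ} (hodd : ∀ g, f (-g) = - f g)
    {s : Set (EuclideanSpace ℝ (Fin n))} (hs : ∀ g, -g ∈ s ↔ g ∈ s) :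
    ∫ g in s, f g ∂(gau n) = 0 := by
  have h1 : MeasurePreserving (LinearIsometryEquiv.neg ℝ :
      EuclideanSpace ℝ (Fin n) ≃ₗᵢ[ℝ] EuclideanSpace ℝ (Fin n)) (gau n) (gau n) :=
    ⟨by fun_prop, ProbabilityTheory.stdGaussian_map _⟩
  have h2 := h1.setIntegral_preimage_emb
    (LinearIsometryEquiv.neg ℝ : EuclideanSpace ℝ (Fin n) ≃ₗᵢ[ℝ] _).toHomeomorph.measurableEmbedding f s
  have h3 : (LinearIsometryEquiv.neg ℝ :
      EuclideanSpace ℝ (Fin n) ≃ₗᵢ[ℝ] EuclideanSpace ℝ (Fin n)) ⁻¹' s = s := by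
    ext g; simpa using hs g
  rw [h3] at h2
  simp only [LinearIsometryEquiv.coe_neg, hodd, integral_neg] at h2
  linarith

/-- The stability of the Gaussian law: scaled independent copies add in quadrature. -/
lemma gau_integral_add {f : EuclideanSpace ℝ (Fin n) → ℝ} (c d : ℝ)
    (hf : Continuous f)
    (hi : Integrable f ((gau n).map fun g => √(c ^ 2 + d ^ 2) • g)) :
    ∫ x, ∫ y, f (c • x + d • y) ∂(gau n) ∂(gau n)
      = ∫ g, f (√(c ^ 2 + d ^ 2) • g) ∂(gau n) := by
  have hc : ∀ c : ℝ, IsProbabilityMeasure ((gau n).map fun g => c • g) := fun c =>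
    Measure.isProbabilityMeasure_map (by fun_prop)
  have hconv : ((gau n).map fun g => c • g) ∗ ((gau n).map fun g => d • g)
      = (gau n).map fun g => √(c ^ 2 + d ^ 2) • g := by
    have := hc c
    have := hc d
    have := hc (√(c ^ 2 + d ^ 2))
    apply Measure.ext_of_charFun
    ext t
    rw [charFun_conv]
    rw [charFun_map_smul, charFun_map_smul, charFun_map_smul]
    simp only [ProbabilityTheory.charFun_stdGaussian]
    rw [← Complex.exp_add]
    congr 1
    simp only [norm_smul, Complex.ofReal_mul, mul_pow]
    norm_cast
    simp only [Real.norm_eq_abs, sq_abs, Real.sq_sqrt (by positivity : 0 ≤ c ^ 2 + d ^ 2)]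
    ring
  have := hc c
  have := hc d
  rw [← hconv] at hi
  have h1 := integral_conv hi
  rw [hconv, integral_map (by fun_prop) hf.aestronglyMeasurable, integral_map (by fun_prop)] at h1
  · rw [h1]
    congr 1; ext x
    rw [integral_map (by fun_prop) (by fun_prop)]
  · have hsm : StronglyMeasurable
        fun p : EuclideanSpace ℝ (Fin n) × EuclideanSpace ℝ (Fin n) => f (p.1 + p.2) :=
      (by fun_prop : Continuous _).stronglyMeasurable
    exact hsm.integral_prod_right'.aestronglyMeasurable

end GaussianFacts

/-! ### One Gaussian step of the localization -/

section GaussianStep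

open Matrix

variable {n : ℕ}

lemma gau_integrable_quad (N : Fin n → Fin n → ℝ) :
    Integrable (fun g => ∑ i, ∑ j, g i * g j * N i j) (gau n) :=
  integrable_finsetSum _ fun i _ => integrable_finsetSum _ fun j _ =>
    (gau_integrable_mul i j).mul_const _

lemma gau_integral_quad (N : Fin n → Fin n → ℝ) :
    ∫ g, ∑ i, ∑ j, g i * g j * N i j ∂(gau n) = ∑ i, N i i := by
  rw [integral_finsetSum _ fun i _ => integrable_finsetSum _ fun j _ =>
    (gau_integrable_mul i j).mul_const _]
  refine Finset.sum_congr rfl fun i _ => ?_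
  rw [integral_finsetSum _ fun j _ => (gau_integrable_mul i j).mul_const _]
  simp [integral_mul_const, gau_integral_mul]

lemma trace_mul_vecMulVec (M : Matrix (Fin n) (Fin n) ℝ) (g : Fin n → ℝ) :
    trace (M * vecMulVec g g) = ∑ i, ∑ j, g i * g j * M i j := by
  simp only [trace, diag_apply, Matrix.mul_apply, vecMulVec_apply]
  exact Finset.sum_congr rfl fun i _ => Finset.sum_congr rfl fun j _ => by ring

lemma trace_conj_vecMulVec (U : Matrix (Fin n) (Fin n) ℝ) (d g : Fin n → ℝ) :
    trace ((U * diagonal d * Uᵀ) * vecMulVec g g) = ∑ i, d i * (Uᵀ *ᵥ g) i ^ 2 := by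
  rw [trace_mul_vecMulVec]
  have h1 : ∀ i j, (U * diagonal d * Uᵀ) i j = ∑ p, d p * (U i p * U j p) := by
    intro i j
    rw [Matrix.mul_apply]
    exact Finset.sum_congr rfl fun p _ => by rw [mul_diagonal, transpose_apply]; ring
  simp only [h1, Finset.mul_sum]
  have h2 : ∀ p, d p * (Uᵀ *ᵥ g) p ^ 2 = ∑ i, ∑ j, g i * g j * (d p * (U i p * U j p)) := by
    intro p
    simp only [mulVec, dotProduct, transpose_apply, sq]
    rw [Finset.sum_mul_sum, Finset.mul_sum]
    refine Finset.sum_congr rfl fun i _ => ?_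
    rw [Finset.mul_sum]
    exact Finset.sum_congr rfl fun j _ => by ring
  rw [Finset.sum_congr rfl fun p _ => h2 p, Finset.sum_comm (γ := Fin n) (s := Finset.univ)
    (t := Finset.univ) (f := fun p i => ∑ j, g i * g j * (d p * (U i p * U j p)))]
  refine Finset.sum_congr rfl fun i _ => ?_
  rw [Finset.sum_comm]

lemma contract_mulVec (τ : Fin n → Fin n → Fin n → ℝ) {J : Matrix (Fin n) (Fin n) ℝ}
    (hJ : Jᵀ = J) (g : Fin n → ℝ) : contract τ (J *ᵥ g) = ∑ i, g i • contract τ (J i) := by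
  ext p q
  simp only [contract, of_apply, mulVec, dotProduct, Matrix.sum_apply, Matrix.smul_apply,
    smul_eq_mul, Finset.mul_sum, Finset.sum_mul]
  rw [Finset.sum_comm]
  refine Finset.sum_congr rfl fun i _ => Finset.sum_congr rfl fun a _ => ?_
  have : J a i = J i a := by conv_lhs => rw [← hJ, transpose_apply]
  rw [this]; ring

lemma trace_contract_quad (τ : Fin n → Fin n → Fin n → ℝ) {J : Matrix (Fin n) (Fin n) ℝ}
    (hJ : Jᵀ = J) (M : Matrix (Fin n) (Fin n) ℝ) (g : Fin n → ℝ) :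
    trace (M * contract τ (J *ᵥ g) * contract τ (J *ᵥ g))
      = ∑ i, ∑ j, g i * g j * trace (M * contract τ (J i) * contract τ (J j)) := by
  rw [contract_mulVec τ hJ]
  simp only [Finset.mul_sum, Finset.sum_mul, trace_sum, Matrix.mul_smul, Matrix.smul_mul,
    trace_smul, smul_eq_mul]
  rw [Finset.sum_comm]
  exact Finset.sum_congr rfl fun i _ => Finset.sum_congr rfl fun j _ => by ring

lemma continuous_contract_mulVec (τ : Fin n → Fin n → Fin n → ℝ) (J : Matrix (Fin n) (Fin n) ℝ) :
    Continuous fun g : EuclideanSpace ℝ (Fin n) => contract τ (J *ᵥ g) := by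
  refine continuous_matrix fun i j => ?_
  simp only [contract, of_apply, mulVec, dotProduct]
  fun_prop

lemma continuous_vecMulVec :
    Continuous fun g : EuclideanSpace ℝ (Fin n) => vecMulVec (g : Fin n → ℝ) g := by
  refine continuous_matrix fun i j => ?_
  simp only [vecMulVec_apply]
  fun_prop

/-- Expected growth of the even trace `tr B^(k+2)` over one truncated Gaussian step. The linear
term vanishes by symmetry and the quadratic terms are controlled by `κ² tr B^k`. -/
lemma gau_trace_step (hn : 0 < n) {k : ℕ} (hk : Even k) {b C κ : ℝ} (hC0 : 0 ≤ C) (hb : 1 ≤ b)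
    (hC : ∀ (B T Q : Matrix (Fin n) (Fin n) ℝ) (s e : ℝ), B.IsHermitian → Tᵀ = T →
      Qᵀ = Q → 0 ≤ s → 0 ≤ e → e * s ≤ 1 → (∀ i j, |B i j| ≤ b) → (∀ i j, |T i j| ≤ b * s) →
      (∀ i j, |Q i j| ≤ b * s ^ 2) →
      trace ((B + (e • T - e ^ 2 • Q)) ^ (k + 2)) ≤ trace (B ^ (k + 2))
        + e * ((k + 2) * trace (B ^ (k + 1) * T))
        + e ^ 2 * (-(k + 2) * trace (B ^ (k + 1) * Q)
          + (k + 2) * (k + 1) / 2 * trace (B ^ k * T * T))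
        + C * (e * s) ^ 3)
    {τ : Fin n → Fin n → Fin n → ℝ} (hτ : SymmTensor τ)
    {U : Matrix (Fin n) (Fin n) ℝ} (h1 : Uᵀ * U = 1)
    (h2 : U * Uᵀ = 1) (l : Fin n → ℝ) (hl : ∀ i, |l i| < 1 / 2)
    (hκ : ∀ S : Matrix (Fin n) (Fin n) ℝ, S * (1 + U * diagonal l * Uᵀ) * Sᵀ = 1 →
      ∑ i, ∑ j, (S * contract τ (S ⟨0, hn⟩) * Sᵀ) i j ^ 2 ≤ κ ^ 2)
    {B J : Matrix (Fin n) (Fin n) ℝ} (hBdef : B = U * diagonal l * Uᵀ)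
    (hJdef : J = U * diagonal (fun i => (1 + l i)⁻¹) * Uᵀ)
    (hBb : ∀ i j, |B i j| ≤ b)
    (hTb : ∀ g : EuclideanSpace ℝ (Fin n), ∀ i j, |contract τ (J *ᵥ g) i j| ≤ b * ‖g‖)
    {ε R : ℝ} (hε : 0 < ε) (hR : R ≤ 1) :
    ∫ g in {g : EuclideanSpace ℝ (Fin n) | ε * ‖g‖ ≤ R},
        trace ((B + (ε • contract τ (J *ᵥ g) - ε ^ 2 • vecMulVec (g : Fin n → ℝ) g)) ^ (k + 2))
        ∂(gau n)
      ≤ trace (B ^ (k + 2)) + ε ^ 2 * ((k + 2) * trace (B ^ k)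
          + (k + 2) * (k + 1) / 2 * (9 / 2 * κ ^ 2 * trace (B ^ k)))
        + C * ε ^ 3 * ∫ g, ‖g‖ ^ 3 ∂(gau n) := by
  set G := {g : EuclideanSpace ℝ (Fin n) | ε * ‖g‖ ≤ R} with hG
  have hJ : Jᵀ = J := by rw [hJdef]; simp [Matrix.mul_assoc]
  have hBh : B.IsHermitian := by
    rw [hBdef, IsHermitian, conjTranspose_eq_transpose_of_trivial]; simp [Matrix.mul_assoc]
  have hBk : ∀ j, B ^ j = U * diagonal (fun i => l i ^ j) * Uᵀ := fun j => by
    rw [hBdef, conj_diag_pow h1 h2]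
  have hGcl : IsClosed G := isClosed_le (by fun_prop) (by fun_prop)
  have hGc : IsCompact G := by
    refine (isCompact_closedBall (0 : EuclideanSpace ℝ (Fin n)) (R / ε)).of_isClosed_subset hGcl ?_
    intro g hg
    rw [mem_closedBall_zero_iff, le_div_iff₀ hε, mul_comm]
    exact hg
  set Q1 : EuclideanSpace ℝ (Fin n) → ℝ := fun g => ∑ i, ∑ j, g i * g j * (B ^ k) i j with hQ1
  set Q2 : EuclideanSpace ℝ (Fin n) → ℝ := fun g => ∑ i, ∑ j, g i * g j *
    trace (B ^ k * contract τ (J i) * contract τ (J j)) with hQ2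
  set L : EuclideanSpace ℝ (Fin n) → ℝ := fun g =>
    ε * ((k + 2) * trace (B ^ (k + 1) * contract τ (J *ᵥ g))) with hL
  have hQ1e : ∀ g : EuclideanSpace ℝ (Fin n), Q1 g = ∑ i, l i ^ k * (Uᵀ *ᵥ g) i ^ 2 := by
    intro g
    rw [← trace_conj_vecMulVec, trace_mul_vecMulVec]
    simp only [hQ1, hBk k]
  have hQ1n : ∀ g, 0 ≤ Q1 g := fun g => by
    rw [hQ1e]
    exact Finset.sum_nonneg fun i _ => mul_nonneg (hk.pow_nonneg _) (sq_nonneg _)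
  have hQ2e : ∀ g : EuclideanSpace ℝ (Fin n),
      Q2 g = trace (B ^ k * contract τ (J *ᵥ g) * contract τ (J *ᵥ g)) := fun g =>
    (trace_contract_quad τ hJ _ _).symm
  have hQ2n : ∀ g, 0 ≤ Q2 g := fun g => by
    obtain ⟨r, rfl⟩ := hk
    rw [hQ2e, pow_add, trace_sq_sq _ _ _ (contract_transpose hτ _)]
    · positivity
    · rw [transpose_pow]
      have : Bᵀ = B := by rw [← conjTranspose_eq_transpose_of_trivial]; exact hBh
      rw [this]
  have hlin : ∀ g : EuclideanSpace ℝ (Fin n),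
      -trace (B ^ (k + 1) * vecMulVec (g : Fin n → ℝ) g) ≤ Q1 g := fun g => by
    rw [hQ1e, hBk, trace_conj_vecMulVec, ← Finset.sum_neg_distrib]
    refine Finset.sum_le_sum fun i _ => ?_
    have e1 := hk.pow_nonneg (l i)
    have e2 := (abs_lt.1 (hl i)).1
    have e3 : -(l i ^ (k + 1)) ≤ l i ^ k := by
      rw [pow_succ]; nlinarith
    nlinarith [sq_nonneg ((Uᵀ *ᵥ (g : Fin n → ℝ)) i)]
  have hpt : ∀ g ∈ G,
      trace ((B + (ε • contract τ (J *ᵥ g) - ε ^ 2 • vecMulVec (g : Fin n → ℝ) g)) ^ (k + 2))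
      ≤ trace (B ^ (k + 2)) + L g + (ε ^ 2 * ((k + 2) * Q1 g
          + (k + 2) * (k + 1) / 2 * Q2 g) + C * ε ^ 3 * ‖g‖ ^ 3) := by
    intro g hg
    have h := hC B (contract τ (J *ᵥ g)) (vecMulVec (g : Fin n → ℝ) g) ‖g‖ ε hBh
      (contract_transpose hτ _) (by ext i j; simp [vecMulVec_apply, mul_comm]) (norm_nonneg _) hε.le
      (le_trans hg hR) hBb (hTb g) (fun i j => by
        have e1 : |g i| ≤ ‖g‖ := PiLp.norm_apply_le g i
        have e2 : |g j| ≤ ‖g‖ := PiLp.norm_apply_le g j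
        rw [vecMulVec_apply, abs_mul]
        have := mul_le_mul e1 e2 (abs_nonneg _) (norm_nonneg _)
        nlinarith [sq_nonneg ‖g‖])
    refine h.trans ?_
    rw [← hQ2e g]
    have h3 := hlin g
    have h4 : ε ^ 2 * (k + 2) * (-trace (B ^ (k + 1) * vecMulVec (g : Fin n → ℝ) g))
        ≤ ε ^ 2 * (k + 2) * Q1 g := mul_le_mul_of_nonneg_left h3 (by positivity)
    simp only [hL]
    rw [mul_pow]
    linarith
  have hLc : Continuous L := by
    have := continuous_contract_mulVec τ J
    simp only [hL]
    exact (((continuous_const.matrix_mul this).matrix_trace).const_mul _).const_mul _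
  have hPi : Integrable (fun g => ε ^ 2 * ((k + 2) * Q1 g
          + (k + 2) * (k + 1) / 2 * Q2 g) + C * ε ^ 3 * ‖g‖ ^ 3) (gau n) :=
    ((((gau_integrable_quad _).const_mul _).add ((gau_integrable_quad _).const_mul _)).const_mul
      _).add ((gau_integrable_norm_pow 3).const_mul _)
  have hPn : ∀ g, 0 ≤ ε ^ 2 * ((k + 2) * Q1 g
          + (k + 2) * (k + 1) / 2 * Q2 g) + C * ε ^ 3 * ‖g‖ ^ 3 := fun g => by
    have := hQ1n g
    have := hQ2n g
    positivity
  have hLi : IntegrableOn L G (gau n) := hLc.continuousOn.integrableOn_compact hGc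
  have hΨc : Continuous fun g : EuclideanSpace ℝ (Fin n) =>
      trace ((B + (ε • contract τ (J *ᵥ g) - ε ^ 2 • vecMulVec (g : Fin n → ℝ) g)) ^ (k + 2)) := by
    have e1 := continuous_contract_mulVec τ J
    have e2 := continuous_vecMulVec (n := n)
    exact ((continuous_const.add ((e1.const_smul ε).sub (e2.const_smul (ε ^ 2)))).pow
      _).matrix_trace
  have hL0 : ∫ g in G, L g ∂(gau n) = 0 := by
    refine gau_setIntegral_odd (fun g => ?_) (fun g => by simp [hG])
    have : contract τ (J *ᵥ ((-g : EuclideanSpace ℝ (Fin n)) : Fin n → ℝ))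
        = - contract τ (J *ᵥ (g : Fin n → ℝ)) := by
      have := contract_smul τ (-1) (J *ᵥ (g : Fin n → ℝ))
      simpa [mulVec_neg] using this
    simp only [hL, this]
    simp
  have hΦ := trace_pow_even_nonneg hBh (m := k + 2) (hk.add even_two)
  calc _ ≤ ∫ g in G, (trace (B ^ (k + 2)) + L g + (ε ^ 2 * ((k + 2) * Q1 g
          + (k + 2) * (k + 1) / 2 * Q2 g) + C * ε ^ 3 * ‖g‖ ^ 3)) ∂(gau n) := by
        refine setIntegral_mono_on (hΨc.continuousOn.integrableOn_compact hGc)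
          (((integrable_const _).add hLi).add hPi.integrableOn) hGcl.measurableSet hpt
    _ = (gau n).real G * trace (B ^ (k + 2)) + 0 + ∫ g in G, (ε ^ 2 * ((k + 2) * Q1 g
          + (k + 2) * (k + 1) / 2 * Q2 g) + C * ε ^ 3 * ‖g‖ ^ 3) ∂(gau n) := by
        have e1 : Integrable (fun g => trace (B ^ (k + 2)) + L g) ((gau n).restrict G) :=
          (integrable_const _).add hLi
        rw [integral_add e1 hPi.integrableOn, integral_add (integrable_const _) hLi, hL0]
        simp
    _ ≤ 1 * trace (B ^ (k + 2)) + 0 + ∫ g, (ε ^ 2 * ((k + 2) * Q1 g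
          + (k + 2) * (k + 1) / 2 * Q2 g) + C * ε ^ 3 * ‖g‖ ^ 3) ∂(gau n) := by
        have e1 := setIntegral_le_integral (s := G) hPi (ae_of_all _ hPn)
        have e2 : (gau n).real G ≤ 1 := measureReal_le_one
        exact add_le_add (add_le_add (mul_le_mul_of_nonneg_right e2 hΦ) le_rfl) e1
    _ = trace (B ^ (k + 2)) + ε ^ 2 * ((k + 2) * trace (B ^ k)
          + (k + 2) * (k + 1) / 2 * ∑ i, trace (B ^ k * contract τ (J i) * contract τ (J i)))
        + C * ε ^ 3 * ∫ g, ‖g‖ ^ 3 ∂(gau n) := by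
        have e1 : Integrable Q1 (gau n) := gau_integrable_quad _
        have e2 : Integrable Q2 (gau n) := gau_integrable_quad _
        have e3 : ∫ g, Q1 g ∂(gau n) = trace (B ^ k) := gau_integral_quad _
        have e4 : ∫ g, Q2 g ∂(gau n)
            = ∑ i, trace (B ^ k * contract τ (J i) * contract τ (J i)) :=
          gau_integral_quad fun i j => trace (B ^ k * contract τ (J i) * contract τ (J j))
        have e5 : Integrable (fun g => ε ^ 2 * ((k + 2) * Q1 g
          + (k + 2) * (k + 1) / 2 * Q2 g)) (gau n) :=
          ((e1.const_mul _).add (e2.const_mul _)).const_mul _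
        rw [integral_add e5 ((gau_integrable_norm_pow 3).const_mul _), integral_const_mul,
          integral_const_mul, integral_add (e1.const_mul _) (e2.const_mul _), integral_const_mul,
          integral_const_mul, e3, e4]
        ring
    _ ≤ _ := by
        have := sum_trace_contract_le hn hτ h1 h2 l hl hκ hk
        rw [← hJdef, ← hBdef] at this
        gcongr

end GaussianStep

section LocStep

open Matrix

variable {n : ℕ}

lemma orthogonal_entry_le {U : Matrix (Fin n) (Fin n) ℝ} (h : U * Uᵀ = 1) (i p : Fin n) :
    |U i p| ≤ 1 := by
  have h1 : ∑ p, U i p ^ 2 = 1 := by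
    have := congrFun (congrFun h i) i
    simpa [Matrix.mul_apply, sq] using this
  have h2 : U i p ^ 2 ≤ 1 := by
    rw [← h1]
    exact Finset.single_le_sum (f := fun p => U i p ^ 2) (fun _ _ => sq_nonneg _)
      (Finset.mem_univ p)
  exact (sq_le_one_iff_abs_le_one _).1 h2

lemma inv_entry_le {U : Matrix (Fin n) (Fin n) ℝ} (h : U * Uᵀ = 1) {l : Fin n → ℝ}
    (hl : ∀ i, |l i| < 1 / 2) (i j : Fin n) :
    |(U * diagonal (fun i => (1 + l i)⁻¹) * Uᵀ) i j| ≤ 2 * n := by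
  rw [Matrix.mul_apply]
  refine (Finset.abs_sum_le_sum_abs _ _).trans ?_
  have : ∀ p ∈ (Finset.univ : Finset (Fin n)),
      |(U * diagonal (fun i => (1 + l i)⁻¹)) i p * Uᵀ p j| ≤ 2 := by
    intro p _
    rw [mul_diagonal, transpose_apply, abs_mul, abs_mul]
    have e1 := orthogonal_entry_le h i p
    have e2 := orthogonal_entry_le h j p
    have e3 := abs_lt.1 (hl p)
    have e4 : |(1 + l p)⁻¹| ≤ 2 := by
      rw [abs_of_pos (inv_pos.2 (by linarith)), inv_le_comm₀ (by linarith) (by norm_num)]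
      linarith
    calc |U i p| * |(1 + l p)⁻¹| * |U j p| ≤ 1 * 2 * 1 := by gcongr
      _ = 2 := by norm_num
  refine (Finset.sum_le_sum this).trans ?_
  simp [mul_comm]

variable {K : Set (EuclideanSpace ℝ (Fin n))}

/-- One step of the localization started at a measure whose covariance is close to the identity:
every barycentre displacement `ε • g` with `ε‖g‖ ≤ R` is realized by a tilted measure, and the
even trace of the covariance defect grows in a controlled way on average. -/
lemma LocState.step (hn : 0 < n) (hK : IsCompact K) (hconv : Convex ℝ K) {k : ℕ} (hk : Even k) :
    ∃ R : ℝ, 0 < R ∧ ∃ C : ℝ, 0 ≤ C ∧ ∀ μ, LocState K μ →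
      trace ((covMat μ - 1) ^ (k + 2)) < (1 / 2) ^ (k + 2) → ∀ ε : ℝ, 0 < ε →
      ∃ Ψ : EuclideanSpace ℝ (Fin n) → ℝ, Continuous Ψ ∧
        (∀ g, ε * ‖g‖ ≤ R → ∃ ν, LocState K ν ∧ bary ν = bary μ + ε • g ∧
          trace ((covMat ν - 1) ^ (k + 2)) = Ψ g) ∧
        ∫ g in {g : EuclideanSpace ℝ (Fin n) | ε * ‖g‖ ≤ R}, Ψ g ∂(gau n)
          ≤ trace ((covMat μ - 1) ^ (k + 2))
            + ε ^ 2 * (4 * (k + 2) ^ 2 * kappaConst n ^ 2 * trace ((covMat μ - 1) ^ k))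
            + C * ε ^ 3 := by
  obtain ⟨ρ, hρ0, hρ⟩ := hK.isBounded.exists_pos_norm_le
  set b : ℝ := 1 + (2 * ρ) ^ 2 + 2 * n ^ 3 * (2 * ρ) ^ 3 with hb
  have hb1 : 1 ≤ b := by
    have : 0 ≤ 2 * (n:ℝ) ^ 3 * (2 * ρ) ^ 3 := by positivity
    rw [hb]
    nlinarith [sq_nonneg (2 * ρ)]
  obtain ⟨C, hC0, hC⟩ := trace_pow_step hn k hk b (by linarith)
  refine ⟨1 / (4 * n ^ 3 * ρ + 1), by positivity, C * ∫ g, ‖g‖ ^ 3 ∂(gau n),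
    mul_nonneg hC0 (integral_nonneg fun g => by positivity), ?_⟩
  set R : ℝ := 1 / (4 * n ^ 3 * ρ + 1) with hR
  have hR1 : R ≤ 1 := by
    rw [hR, div_le_one (by positivity)]
    have : 0 ≤ 4 * (n:ℝ) ^ 3 * ρ := by positivity
    linarith
  have hRρ : 4 * n ^ 3 * ρ * R ≤ 1 := by
    rw [hR, mul_one_div, div_le_one (by positivity)]; linarith
  intro μ hμ hgood ε hε
  obtain ⟨hb1', hb2, hb3⟩ := hμ.bounds hK hconv hρ
  have hBh : (covMat μ - 1).IsHermitian := (covMat_isHermitian μ).sub isHermitian_one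
  obtain ⟨U, l, h1, h2, hBe, hl⟩ := eigen_of_trace_lt hBh (hk.add even_two) hgood
  set B := covMat μ - 1 with hBdef
  have hA : covMat μ = 1 + B := by rw [hBdef]; abel
  set J := U * diagonal (fun i => (1 + l i)⁻¹) * Uᵀ with hJ
  have hAJ : covMat μ * J = 1 := by
    have e1 : 1 + B = U * diagonal (fun i => 1 + l i) * Uᵀ := by
      have : diagonal (fun i => 1 + l i) = 1 + diagonal l := by
        rw [← diagonal_one, diagonal_add]
      rw [this, Matrix.mul_add, Matrix.add_mul, Matrix.mul_one, h2, hBe]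
    rw [hA, e1, hJ, conj_mul_conj h1]
    have : (fun i => (1 + l i) * (1 + l i)⁻¹) = fun _ => (1:ℝ) := by
      ext i
      exact mul_inv_cancel₀ (by linarith [(abs_lt.1 (hl i)).1])
    rw [this, diagonal_one, Matrix.mul_one, h2]
  have hJg : ∀ g : EuclideanSpace ℝ (Fin n), ∀ a, |(J *ᵥ g) a| ≤ 2 * n ^ 2 * ‖g‖ := by
    intro g a
    rw [mulVec, dotProduct]
    refine (Finset.abs_sum_le_sum_abs _ _).trans ?_
    have : ∀ i ∈ (Finset.univ : Finset (Fin n)), |J a i * g i| ≤ 2 * n * ‖g‖ := fun i _ => by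
      rw [abs_mul]
      have e1 : |g i| ≤ ‖g‖ := PiLp.norm_apply_le g i
      have e2 := inv_entry_le h2 hl a i
      gcongr
    refine (Finset.sum_le_sum this).trans (le_of_eq ?_)
    simp; ring
  have hTb : ∀ g : EuclideanSpace ℝ (Fin n), ∀ i j,
      |contract (third μ) (J *ᵥ g) i j| ≤ b * ‖g‖ := by
    intro g i j
    have e0 : |contract (third μ) (J *ᵥ g) i j| ≤ 2 * n ^ 3 * (2 * ρ) ^ 3 * ‖g‖ := by
      rw [contract, of_apply]
      refine (Finset.abs_sum_le_sum_abs _ _).trans ?_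
      have : ∀ a ∈ (Finset.univ : Finset (Fin n)), |(J *ᵥ g) a * third μ a i j|
          ≤ 2 * n ^ 2 * ‖g‖ * (2 * ρ) ^ 3 := fun a _ => by
        rw [abs_mul]
        have e1 := hJg g a
        have e2 := hb3 a i j
        gcongr
      refine (Finset.sum_le_sum this).trans (le_of_eq ?_)
      simp; ring
    refine e0.trans ?_
    rw [hb]
    have := norm_nonneg g
    nlinarith [sq_nonneg (2 * ρ), mul_nonneg (sq_nonneg (2 * ρ)) this]
  have hBb : ∀ i j, |B i j| ≤ b := by
    intro i j
    have e1 : |(1 : Matrix (Fin n) (Fin n) ℝ) i j| ≤ 1 := by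
      rw [Matrix.one_apply]; split_ifs <;> simp
    have e2 := hb2 i j
    have e3 : |B i j| ≤ |covMat μ i j| + |(1 : Matrix (Fin n) (Fin n) ℝ) i j| := by
      rw [hBdef, Matrix.sub_apply]; exact abs_sub _ _
    have : 0 ≤ 2 * (n:ℝ) ^ 3 * (2 * ρ) ^ 3 := by positivity
    rw [hb]; linarith
  refine ⟨fun g => trace ((B + (ε • contract (third μ) (J *ᵥ g)
    - ε ^ 2 • vecMulVec (g : Fin n → ℝ) g)) ^ (k + 2)), ?_, ?_, ?_⟩
  · have e1 := continuous_contract_mulVec (third μ) J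
    have e2 := continuous_vecMulVec (n := n)
    exact ((continuous_const.add ((e1.const_smul ε).sub (e2.const_smul (ε ^ 2)))).pow
      _).matrix_trace
  · intro g hg
    have hv : ∀ x ∈ K, 0 ≤ 1 + ∑ a, (ε • (J *ᵥ (g : Fin n → ℝ))) a * (x a - bary μ a) := by
      intro x hx
      have e1 : |∑ a, (ε • (J *ᵥ (g : Fin n → ℝ))) a * (x a - bary μ a)| ≤ 1 := by
        refine (Finset.abs_sum_le_sum_abs _ _).trans ?_
        have : ∀ a ∈ (Finset.univ : Finset (Fin n)),
            |(ε • (J *ᵥ (g : Fin n → ℝ))) a * (x a - bary μ a)|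
              ≤ ε * (2 * n ^ 2 * ‖g‖) * (2 * ρ) := fun a _ => by
          rw [abs_mul, Pi.smul_apply, smul_eq_mul, abs_mul, abs_of_pos hε]
          have e1 := hJg g a
          have e2 := hb1' x hx a
          gcongr
        refine (Finset.sum_le_sum this).trans ?_
        simp only [Finset.sum_const, Finset.card_univ, Fintype.card_fin, nsmul_eq_mul]
        calc (n:ℝ) * (ε * (2 * n ^ 2 * ‖g‖) * (2 * ρ)) = 4 * n ^ 3 * ρ * (ε * ‖g‖) := by ring
          _ ≤ 4 * n ^ 3 * ρ * R := by gcongr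
          _ ≤ 1 := hRρ
      linarith [(abs_le.1 e1).1]
    have hAv : covMat μ *ᵥ (ε • (J *ᵥ (g : Fin n → ℝ))) = ε • (g : Fin n → ℝ) := by
      rw [mulVec_smul, mulVec_mulVec, hAJ, one_mulVec]
    refine ⟨_root_.tilt μ (ε • (J *ᵥ g)), hμ.tilt hK hv, ?_, ?_⟩
    · ext i
      rw [hμ.bary_tilt hK hv, hAv]
      simp
    · rw [hμ.covMat_tilt hK hv, hAv, contract_smul]
      congr 2
      rw [hBdef, smul_vecMulVec, vecMulVec_smul, smul_smul, ← sq]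
      abel
  · refine (gau_trace_step hn hk hC0 hb1 hC (symmTensor_third μ) h1 h2 l hl (κ := kappaConst n)
      (fun S hS => ?_) hBe hJ hBb hTb hε hR1).trans ?_
    · rw [← hBe, ← hA] at hS
      exact hμ.whitened_le hK hn S hS
    · have e1 := trace_pow_even_nonneg hBh hk
      have e2 := two_le_kappa hn
      have e3 : (k + 2) * trace (B ^ k)
          + (k + 2) * (k + 1) / 2 * (9 / 2 * kappaConst n ^ 2 * trace (B ^ k))
          ≤ 4 * (k + 2) ^ 2 * kappaConst n ^ 2 * trace (B ^ k) := by
        have e4 : (4:ℝ) ≤ kappaConst n ^ 2 := by nlinarith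
        have e5 : (0:ℝ) ≤ k := by positivity
        have e6 : ((k:ℝ) + 2) + (k + 2) * (k + 1) / 2 * (9 / 2 * kappaConst n ^ 2)
            ≤ 4 * (k + 2) ^ 2 * kappaConst n ^ 2 := by
          have e7 : ((k:ℝ) + 2) ≤ (k + 2) * kappaConst n ^ 2 := by nlinarith
          have e8 : ((k:ℝ) + 2) + (k + 2) * (k + 1) * 9 / 4 ≤ 4 * (k + 2) ^ 2 := by nlinarith
          have := mul_le_mul_of_nonneg_right e8 (by positivity : 0 ≤ kappaConst n ^ 2)
          linarith
        have := mul_le_mul_of_nonneg_right e6 e1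
        linarith
      have := mul_le_mul_of_nonneg_left e3 (sq_nonneg ε)
      linarith

end LocStep

/-! ### Iterating the step -/

section Iterate

open Matrix

variable {n : ℕ}

/-- A continuous sublinear functional with linear growth rate `L`. -/
structure SubLin (h : EuclideanSpace ℝ (Fin n) → ℝ) (L : ℝ) : Prop where
  cont : Continuous h
  nonneg : ∀ x, 0 ≤ h x
  add_le : ∀ x y, h (x + y) ≤ h x + h y
  smul : ∀ c : ℝ, 0 ≤ c → ∀ x, h (c • x) = c * h x
  le : ∀ x, h x ≤ L * ‖x‖
  rate : 0 ≤ L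

variable {h : EuclideanSpace ℝ (Fin n) → ℝ} {L : ℝ}

/-- The Gaussian average of `h` at scale `c` around `a`. -/
def gauAvg (h : EuclideanSpace ℝ (Fin n) → ℝ) (c : ℝ) (a : EuclideanSpace ℝ (Fin n)) : ℝ :=
  ∫ g, h (a + c • g) ∂(gau n)

lemma SubLin.integrable (H : SubLin h L) (a : EuclideanSpace ℝ (Fin n)) (c : ℝ) :
    Integrable (fun g => h (a + c • g)) (gau n) := by
  have hc := H.cont
  refine gau_integrable (by fun_prop) (L * (‖a‖ + |c|)) 1 fun g => ?_
  rw [abs_of_nonneg (H.nonneg _)]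
  refine (H.le _).trans ?_
  rw [mul_assoc]
  refine mul_le_mul_of_nonneg_left ?_ H.rate
  refine (norm_add_le _ _).trans ?_
  rw [norm_smul, Real.norm_eq_abs]
  nlinarith [norm_nonneg a, norm_nonneg g, abs_nonneg c, mul_nonneg (norm_nonneg a) (norm_nonneg g)]

lemma SubLin.gauAvg_nonneg (H : SubLin h L) (c : ℝ) (a : EuclideanSpace ℝ (Fin n)) :
    0 ≤ gauAvg h c a := integral_nonneg fun _ => H.nonneg _

lemma SubLin.gauAvg_le (H : SubLin h L) {c : ℝ} (hc : 0 ≤ c) (a : EuclideanSpace ℝ (Fin n)) :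
    gauAvg h c a ≤ h a + c * ∫ g, h g ∂(gau n) := by
  have h0 : Integrable h (gau n) := by simpa using H.integrable 0 1
  calc gauAvg h c a ≤ ∫ g, (h a + c * h g) ∂(gau n) := by
        refine integral_mono (H.integrable a c) ((integrable_const _).add (h0.const_mul _))
          fun g => ?_
        have := H.add_le a (c • g)
        rwa [H.smul c hc] at this
    _ = _ := by
        rw [integral_add (integrable_const _) (h0.const_mul _), integral_const_mul]; simp

lemma SubLin.gauAvg_zero (H : SubLin h L) {c : ℝ} (hc : 0 ≤ c) :
    gauAvg h c 0 = c * ∫ g, h g ∂(gau n) := by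
  simp only [gauAvg, zero_add, H.smul c hc, integral_const_mul]

lemma SubLin.gauAvg_integrable (H : SubLin h L) {d : ℝ} (hd : 0 ≤ d) (c : ℝ)
    (a : EuclideanSpace ℝ (Fin n)) : Integrable (fun x => gauAvg h d (a + c • x)) (gau n) := by
  have hc := H.cont
  have hsm : StronglyMeasurable fun p : EuclideanSpace ℝ (Fin n) × EuclideanSpace ℝ (Fin n) =>
      h (a + c • p.1 + d • p.2) := (by fun_prop : Continuous _).stronglyMeasurable
  refine Integrable.mono' ((H.integrable a c).add (integrable_const (d * ∫ g, h g ∂(gau n))))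
    (hsm.integral_prod_right' (ν := gau n)).aestronglyMeasurable (ae_of_all _ fun x => ?_)
  rw [Real.norm_eq_abs, abs_of_nonneg (H.gauAvg_nonneg _ _)]
  exact H.gauAvg_le hd _

lemma SubLin.gauAvg_add (H : SubLin h L) (c d : ℝ) (a : EuclideanSpace ℝ (Fin n)) :
    gauAvg h (√(c ^ 2 + d ^ 2)) a = ∫ x, gauAvg h d (a + c • x) ∂(gau n) := by
  have hc := H.cont
  have := gau_integral_add (n := n) (f := fun x => h (a + x)) c d (by fun_prop) (by
    rw [integrable_map_measure (by fun_prop) (by fun_prop)]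
    exact H.integrable a _)
  simp only [gauAvg]
  rw [← this]
  simp only [add_assoc]

variable {K : Set (EuclideanSpace ℝ (Fin n))}

/-- The localization argument: if `h ≤ 1` on `K`, the Gaussian average of `h` at scale `√T`
around the barycentre is `1` up to the probability that the covariance degenerates. -/
lemma gau_mean_le (hn : 0 < n) (hK : IsCompact K) (hconv : Convex ℝ K) {k : ℕ} (hk : Even k)
    (H : SubLin h L) (hh : ∀ x ∈ K, h x ≤ 1) {T x₀ lam c : ℝ} (hT : 0 < T) (hx₀ : 0 < x₀)
    (hlam : lam = 4 * (k + 2) ^ 2 * kappaConst n ^ 2 / x₀ ^ 2) (hc : c = n * x₀ ^ (k + 2))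
    {μ₀ : Measure (EuclideanSpace ℝ (Fin n))} (hμ₀ : LocState K μ₀) (hb₀ : bary μ₀ = 0)
    (hcov₀ : covMat μ₀ = 1) :
    √T * ∫ g, h g ∂(gau n)
      ≤ 1 + √T * (∫ g, h g ∂(gau n)) * (Real.exp (lam * T) * 2 ^ (k + 2) * c) := by
  obtain ⟨R, hR, C₁, hC₁, hstep⟩ := LocState.step hn hK hconv hk
  set U := √T * ∫ g, h g ∂(gau n) with hU
  have hE : 0 ≤ ∫ g, h g ∂(gau n) := integral_nonneg H.nonneg
  have hU0 : 0 ≤ U := by positivity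
  have hlam0 : 0 ≤ lam := by rw [hlam]; positivity
  have hc0 : 0 ≤ c := by rw [hc]; positivity
  have htail : Integrable (fun g => (1 + U + L * ‖g‖) * ‖g‖ ^ 3) (gau n) := by
    have e1 := ((gau_integrable_norm_pow (n := n) 3).const_mul (1 + U)).add
      ((gau_integrable_norm_pow (n := n) 4).const_mul L)
    refine e1.congr (ae_of_all _ fun g => ?_)
    simp only [Pi.add_apply]
    ring
  set Ct := (∫ g, (1 + U + L * ‖g‖) * ‖g‖ ^ 3 ∂(gau n)) / R ^ 3 with hCt
  have hL := H.rate
  have hCt0 : 0 ≤ Ct := div_nonneg (integral_nonneg fun g => by positivity) (by positivity)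
  set C := U * 2 ^ (k + 2) * C₁ + Ct with hC
  have hC0 : 0 ≤ C := by positivity
  -- Backward induction on the number `j` of steps left, uniformly in the current measure `μ`;
  -- `(1 + ε² lam)^j (Φ + c)` is a supersolution of the growth recursion for `Φ`.
  have claim : ∀ ε : ℝ, 0 < ε → ε ≤ 1 → ∀ j : ℕ, ε * √j ≤ √T → ∀ μ, LocState K μ →
      gauAvg h (ε * √j) (bary μ) ≤ 1
        + U * (1 + ε ^ 2 * lam) ^ j * 2 ^ (k + 2) * (trace ((covMat μ - 1) ^ (k + 2)) + c)
        + (1 + ε ^ 2 * lam) ^ j * j * C * ε ^ 3 := by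
    intro ε hε hε1 j
    have hq1 : 1 ≤ 1 + ε ^ 2 * lam := by
      have : 0 ≤ ε ^ 2 * lam := by positivity
      linarith
    set q := 1 + ε ^ 2 * lam with hq
    have hΦn : ∀ μ : Measure (EuclideanSpace ℝ (Fin n)), 0 ≤ trace ((covMat μ - 1) ^ (k + 2)) :=
      fun μ => trace_pow_even_nonneg ((covMat_isHermitian μ).sub isHermitian_one)
        (hk.add even_two)
    induction j with
    | zero =>
      intro _ μ hμ
      have e1 : gauAvg h (ε * √((0:ℕ):ℝ)) (bary μ) = h (bary μ) := by simp [gauAvg]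
      have e2 := hh _ (hμ.bary_mem hK hconv)
      have e3 := hΦn μ
      rw [e1]
      have : 0 ≤ U * q ^ 0 * 2 ^ (k + 2) * (trace ((covMat μ - 1) ^ (k + 2)) + c) := by positivity
      simp only [Nat.cast_zero, mul_zero, zero_mul, add_zero]
      linarith
    | succ j ih =>
      intro hj μ hμ
      have hjle : ε * √(j:ℝ) ≤ √T := by
        refine le_trans ?_ hj
        gcongr
        simp
      have hΦ := hΦn μ
      have hha := hh _ (hμ.bary_mem hK hconv)
      set a := bary μ with ha
      set Φ := trace ((covMat μ - 1) ^ (k + 2)) with hΦdef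
      have hqj : 1 ≤ q ^ (j + 1) := one_le_pow₀ hq1
      have hqj0 : 1 ≤ q ^ j := one_le_pow₀ hq1
      by_cases hbad : (1 / 2 : ℝ) ^ (k + 2) ≤ Φ
        -- The walk is abandoned: subadditivity bounds the remaining average by `1 + U`, and the
        -- factor `2 ^ (k + 2) * Φ ≥ 1` pays for `U`.
      · have e1 := H.gauAvg_le (c := ε * √((j + 1 : ℕ) : ℝ)) (by positivity) a
        have e2 : ε * √((j + 1 : ℕ) : ℝ) * ∫ g, h g ∂(gau n) ≤ U :=
          mul_le_mul_of_nonneg_right hj hE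
        have e3 : 1 ≤ 2 ^ (k + 2) * (Φ + c) := by
          have : (2:ℝ) ^ (k + 2) * (1 / 2) ^ (k + 2) = 1 := by rw [← mul_pow]; norm_num
          have : (2:ℝ) ^ (k + 2) * (1 / 2) ^ (k + 2) ≤ 2 ^ (k + 2) * (Φ + c) := by
            gcongr; linarith
          linarith
        have e4 : U ≤ U * q ^ (j + 1) * 2 ^ (k + 2) * (Φ + c) := by
          have : U * 1 * 1 ≤ U * q ^ (j + 1) * (2 ^ (k + 2) * (Φ + c)) := by gcongr
          linarith
        have e5 : 0 ≤ q ^ (j + 1) * (j + 1 : ℕ) * C * ε ^ 3 := by positivity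
        linarith
      · push Not at hbad
        obtain ⟨Ψ, hΨc, hΨ, hΨi⟩ := hstep μ hμ hbad ε hε
        set G := {g : EuclideanSpace ℝ (Fin n) | ε * ‖g‖ ≤ R} with hG
        have hGcl : IsClosed G := isClosed_le (by fun_prop) (by fun_prop)
        have hGc : IsCompact G := by
          refine (isCompact_closedBall (0 : EuclideanSpace ℝ (Fin n)) (R / ε)).of_isClosed_subset
            hGcl ?_
          intro g hg
          rw [mem_closedBall_zero_iff, le_div_iff₀ hε, mul_comm]
          exact hg
        have hsq : ε * √((j + 1 : ℕ) : ℝ) = √(ε ^ 2 + (ε * √(j:ℝ)) ^ 2) := by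
          rw [mul_pow, Real.sq_sqrt (by positivity),
            show ε ^ 2 + ε ^ 2 * (j:ℝ) = ε ^ 2 * ((j + 1 : ℕ) : ℝ) by push_cast; ring,
            Real.sqrt_mul (sq_nonneg _), Real.sqrt_sq hε.le]
        have hInt := H.gauAvg_integrable (d := ε * √(j:ℝ)) (by positivity) ε a
        rw [hsq, H.gauAvg_add, ← integral_add_compl hGcl.measurableSet hInt]
        have hmain : ∫ x in G, gauAvg h (ε * √(j:ℝ)) (a + ε • x) ∂(gau n)
            ≤ (1 + U * q ^ j * 2 ^ (k + 2) * c + q ^ j * j * C * ε ^ 3)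
              + U * q ^ j * 2 ^ (k + 2) * ∫ g in G, Ψ g ∂(gau n) := by
          have hΨint : IntegrableOn Ψ G (gau n) := hΨc.continuousOn.integrableOn_compact hGc
          set α := 1 + U * q ^ j * 2 ^ (k + 2) * c + q ^ j * j * C * ε ^ 3 with hα
          have hα0 : 0 ≤ α := by positivity
          calc _ ≤ ∫ g in G, (α + U * q ^ j * 2 ^ (k + 2) * Ψ g) ∂(gau n) := by
                refine setIntegral_mono_on hInt.integrableOn
                  ((integrable_const _).add (hΨint.const_mul _)) hGcl.measurableSet ?_
                intro g hg
                obtain ⟨ν, hν, hνb, hνΦ⟩ := hΨ g hg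
                have := ih hjle ν hν
                rw [hνb, hνΦ] at this
                rw [hα]
                linarith
            _ = (gau n).real G * α + U * q ^ j * 2 ^ (k + 2) * ∫ g in G, Ψ g ∂(gau n) := by
                rw [integral_add (integrable_const _) (hΨint.const_mul _), integral_const_mul]
                simp
            _ ≤ _ := by
                have : (gau n).real G ≤ 1 := measureReal_le_one
                have := mul_le_mul_of_nonneg_right this hα0
                linarith
        have htl : ∫ x in Gᶜ, gauAvg h (ε * √(j:ℝ)) (a + ε • x) ∂(gau n) ≤ Ct * ε ^ 3 := by
          have e0 : Integrable (fun g => ε ^ 3 / R ^ 3 * ((1 + U + L * ‖g‖) * ‖g‖ ^ 3)) (gau n) :=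
            htail.const_mul _
          calc _ ≤ ∫ g in Gᶜ, ε ^ 3 / R ^ 3 * ((1 + U + L * ‖g‖) * ‖g‖ ^ 3) ∂(gau n) := by
                refine setIntegral_mono_on hInt.integrableOn e0.integrableOn
                  hGcl.measurableSet.compl ?_
                intro g hg
                have hg' : R < ε * ‖g‖ := not_le.1 hg
                have e1 := H.gauAvg_le (c := ε * √(j:ℝ)) (by positivity) (a + ε • g)
                have e2 : ε * √(j:ℝ) * ∫ g, h g ∂(gau n) ≤ U :=
                  mul_le_mul_of_nonneg_right hjle hE
                have e3 := H.add_le a (ε • g)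
                rw [H.smul ε hε.le] at e3
                have e4 : ε * h g ≤ 1 * (L * ‖g‖) :=
                  mul_le_mul hε1 (H.le g) (H.nonneg g) zero_le_one
                have e5 : (1:ℝ) ≤ (ε * ‖g‖ / R) ^ 3 :=
                  one_le_pow₀ ((one_le_div hR).2 hg'.le)
                have e6 : 0 ≤ 1 + U + L * ‖g‖ := by positivity
                have e7 := mul_le_mul_of_nonneg_left e5 e6
                have e8 : ε ^ 3 / R ^ 3 * ((1 + U + L * ‖g‖) * ‖g‖ ^ 3)
                    = (1 + U + L * ‖g‖) * (ε * ‖g‖ / R) ^ 3 := by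
                  field_simp
                rw [e8]
                linarith
            _ ≤ ∫ g, ε ^ 3 / R ^ 3 * ((1 + U + L * ‖g‖) * ‖g‖ ^ 3) ∂(gau n) :=
                setIntegral_le_integral e0 (ae_of_all _ fun g => by
                  simp only [Pi.zero_apply]; positivity)
            _ = Ct * ε ^ 3 := by
                rw [integral_const_mul, hCt]; field_simp
        have hcomp := trace_pow_compare (B := covMat μ - 1)
          ((covMat_isHermitian μ).sub isHermitian_one) hk hx₀
        rw [← hc, ← hΦdef] at hcomp
        have hlamc : 4 * (k + 2) ^ 2 * kappaConst n ^ 2 * trace ((covMat μ - 1) ^ k)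
            ≤ lam * (Φ + c) := by
          have e1 : 4 * (k + 2) ^ 2 * kappaConst n ^ 2 * trace ((covMat μ - 1) ^ k)
              = lam * (x₀ ^ 2 * trace ((covMat μ - 1) ^ k)) := by
            rw [hlam]; field_simp
          rw [e1]
          exact mul_le_mul_of_nonneg_left hcomp hlam0
        have hΨ2 : ∫ g in G, Ψ g ∂(gau n) ≤ Φ + ε ^ 2 * (lam * (Φ + c)) + C₁ * ε ^ 3 := by
          have := mul_le_mul_of_nonneg_left hlamc (sq_nonneg ε)
          linarith
        have hΨ3 := mul_le_mul_of_nonneg_left hΨ2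
          (by positivity : 0 ≤ U * q ^ j * 2 ^ (k + 2))
        have f1 : U * q ^ j * 2 ^ (k + 2) * (Φ + ε ^ 2 * (lam * (Φ + c)) + C₁ * ε ^ 3)
            + U * q ^ j * 2 ^ (k + 2) * c
            = U * q ^ (j + 1) * 2 ^ (k + 2) * (Φ + c) + q ^ j * (U * 2 ^ (k + 2) * C₁) * ε ^ 3 := by
          rw [pow_succ, hq]; ring
        have hqq : q ^ j ≤ q ^ (j + 1) := pow_le_pow_right₀ hq1 (Nat.le_succ j)
        have f2 : q ^ j * (U * 2 ^ (k + 2) * C₁) * ε ^ 3 + Ct * ε ^ 3 ≤ q ^ (j + 1) * C * ε ^ 3 := by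
          have g1 : q ^ j * (U * 2 ^ (k + 2) * C₁) ≤ q ^ (j + 1) * (U * 2 ^ (k + 2) * C₁) := by
            gcongr
          have g2 : 1 * Ct ≤ q ^ (j + 1) * Ct := by gcongr
          have g3 : q ^ j * (U * 2 ^ (k + 2) * C₁) + Ct ≤ q ^ (j + 1) * C := by
            rw [hC]; linarith
          have := mul_le_mul_of_nonneg_right g3 (by positivity : 0 ≤ ε ^ 3)
          linarith
        have f3 : q ^ j * j * C * ε ^ 3 ≤ q ^ (j + 1) * j * C * ε ^ 3 := by gcongr
        push_cast
        linarith
  -- Let the number of steps tend to infinity with `N ε² = T`.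
  have hlim : Filter.Tendsto (fun N : ℕ => 1 + U * (Real.exp (lam * T) * 2 ^ (k + 2) * c)
      + Real.exp (lam * T) * T * C * √(T / N)) Filter.atTop
      (nhds (1 + U * (Real.exp (lam * T) * 2 ^ (k + 2) * c)
        + Real.exp (lam * T) * T * C * √0)) := by
    have : Filter.Tendsto (fun N : ℕ => T / (N:ℝ)) Filter.atTop (nhds 0) :=
      tendsto_const_div_atTop_nhds_zero_nat T
    exact ((this.sqrt).const_mul _).const_add _
  rw [Real.sqrt_zero, mul_zero, add_zero] at hlim
  refine ge_of_tendsto hlim ?_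
  obtain ⟨N₀, hN₀⟩ := exists_nat_ge T
  filter_upwards [Filter.eventually_ge_atTop (max N₀ 1)] with N hN
  have hN1 : (1:ℝ) ≤ N := by exact_mod_cast (le_max_right _ _).trans hN
  have hNT : T ≤ N := hN₀.trans (by exact_mod_cast (le_max_left _ _).trans hN)
  set ε := √(T / N) with hεdef
  have hε : 0 < ε := Real.sqrt_pos.2 (by positivity)
  have hε2 : ε ^ 2 = T / N := Real.sq_sqrt (by positivity)
  have hε1 : ε ≤ 1 := by
    rw [hεdef, Real.sqrt_le_left (by norm_num), one_pow, div_le_one (by linarith)]; exact hNT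
  have hεN : ε * √(N:ℝ) = √T := by
    rw [hεdef, ← Real.sqrt_mul (by positivity), div_mul_cancel₀ _ (by linarith)]
  have := claim ε hε hε1 N hεN.le μ₀ hμ₀
  rw [hεN, hb₀, H.gauAvg_zero (Real.sqrt_nonneg _), hcov₀, sub_self, zero_pow (by omega),
    trace_zero, zero_add, ← hU] at this
  have hqN : (1 + ε ^ 2 * lam) ^ N ≤ Real.exp (lam * T) := by
    have e1 : 1 + ε ^ 2 * lam ≤ Real.exp (ε ^ 2 * lam) := by
      linarith [Real.add_one_le_exp (ε ^ 2 * lam)]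
    calc _ ≤ Real.exp (ε ^ 2 * lam) ^ N := pow_le_pow_left₀ (by positivity) e1 N
      _ = Real.exp (lam * T) := by
        rw [← Real.exp_nat_mul, hε2]; congr 1; field_simp
  refine this.trans ?_
  have e2 : (1 + ε ^ 2 * lam) ^ N * N * C * ε ^ 3
      = (1 + ε ^ 2 * lam) ^ N * (T * C * ε) := by
    have : (N:ℝ) * ε ^ 2 = T := by rw [hε2]; field_simp
    calc _ = (1 + ε ^ 2 * lam) ^ N * (((N:ℝ) * ε ^ 2) * C * ε) := by ring
      _ = _ := by rw [this]
  rw [e2]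
  have e3 : (1 + ε ^ 2 * lam) ^ N * (T * C * ε) ≤ Real.exp (lam * T) * (T * C * ε) := by gcongr
  have e4 : U * (1 + ε ^ 2 * lam) ^ N * 2 ^ (k + 2) * c
      ≤ U * Real.exp (lam * T) * 2 ^ (k + 2) * c := by gcongr
  linarith

end Iterate

/-! ### Isotropic convex bodies -/

section Body

open Matrix

variable {n : ℕ} {K : Set (EuclideanSpace ℝ (Fin n))}

lemma IsConvexBody.volume_pos (hK : IsConvexBody K) : 0 < volume K :=
  (isOpen_interior.measure_pos volume hK.2.2).trans_le (measure_mono interior_subset)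

lemma IsConvexBody.locState_unifOn (hK : IsConvexBody K) : LocState K (unifOn K) := by
  have h0 := hK.volume_pos
  have h1 : volume K < ⊤ := hK.1.measure_lt_top
  have hm : MeasurableSet K := hK.1.isClosed.measurableSet
  refine ⟨⟨?_⟩, ⟨K.indicator fun _ => (volume K).toReal⁻¹, measurable_const.indicator hm, ⟨?_, ?_⟩, ?_⟩,
    ?_⟩
  · rw [unifOn, Measure.smul_apply, Measure.restrict_apply_univ, smul_eq_mul,
      ENNReal.inv_mul_cancel h0.ne' h1.ne]
  · intro x
    exact Set.indicator_nonneg (fun _ _ => by positivity) x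
  · intro x y t ht0 ht1
    have hpos : 0 < (volume K).toReal⁻¹ := inv_pos.2 (ENNReal.toReal_pos h0.ne' h1.ne)
    rcases ht0.eq_or_lt with rfl | ht0'
    · simp
    rcases ht1.eq_or_lt with rfl | ht1'
    · simp
    by_cases hx : x ∈ K
    · by_cases hy : y ∈ K
      · have hz : t • x + (1 - t) • y ∈ K := hK.2.1 hx hy ht0 (by linarith) (by ring)
        rw [Set.indicator_of_mem hx, Set.indicator_of_mem hy, Set.indicator_of_mem hz,
          ← Real.rpow_add hpos]
        simp
      · rw [Set.indicator_of_notMem hy, Real.zero_rpow (by linarith), mul_zero]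
        exact Set.indicator_nonneg (fun _ _ => hpos.le) _
    · rw [Set.indicator_of_notMem hx, Real.zero_rpow ht0'.ne', zero_mul]
      exact Set.indicator_nonneg (fun _ _ => hpos.le) _
  · have : (fun x => ENNReal.ofReal (K.indicator (fun _ => (volume K).toReal⁻¹) x))
        = K.indicator fun _ => (volume K)⁻¹ := by
      ext x
      by_cases hx : x ∈ K
      · rw [Set.indicator_of_mem hx, Set.indicator_of_mem hx,
          ENNReal.ofReal_inv_of_pos (ENNReal.toReal_pos h0.ne' h1.ne), ENNReal.ofReal_toReal h1.ne]
      · rw [Set.indicator_of_notMem hx, Set.indicator_of_notMem hx, ENNReal.ofReal_zero]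
    rw [this, withDensity_indicator hm, withDensity_const, unifOn]
  · rw [unifOn, Measure.smul_apply, Measure.restrict_apply hm.compl]
    simp

lemma IsIsotropicBody.bary_unifOn (hiso : IsIsotropicBody K) : bary (unifOn K) = 0 := by
  ext i
  exact hiso.1 i

lemma IsIsotropicBody.covMat_unifOn (hiso : IsIsotropicBody K) : covMat (unifOn K) = 1 := by
  ext i j
  simp only [covMat, of_apply, hiso.bary_unifOn]
  simpa [Matrix.one_apply] using hiso.2 i j

/-- A supporting functional at the barycentre would have vanishing mean and constant sign. -/
lemma IsIsotropicBody.zero_mem_interior (hK : IsConvexBody K) (hiso : IsIsotropicBody K) :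
    (0 : EuclideanSpace ℝ (Fin n)) ∈ interior K := by
  by_contra hcon
  obtain ⟨f, hf⟩ := geometric_hahn_banach_open_point hK.2.1.interior isOpen_interior hcon
  simp only [map_zero] at hf
  have hs := hK.locState_unifOn
  have hprob := hs.prob
  have hfle : ∀ x ∈ K, f x ≤ 0 := by
    intro x hx
    have hx' : x ∈ closure (interior K) := by
      rw [hK.2.1.closure_interior_eq_closure_of_nonempty_interior hK.2.2]
      exact subset_closure hx
    exact closure_minimal (fun y hy => (hf y hy).le) (isClosed_le f.continuous continuous_const) hx'
  have hexp : ∀ x, f x = ∑ i, x i * f (EuclideanSpace.single i 1) := by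
    intro x
    conv_lhs => rw [← (EuclideanSpace.basisFun (Fin n) ℝ).sum_repr x]
    simp
  have hInt : ∫ x, f x ∂(unifOn K) = 0 := by
    rw [integral_congr_ae (ae_of_all _ hexp),
      integral_finsetSum _ fun i _ => hs.integrable hK.1 (by fun_prop)]
    refine Finset.sum_eq_zero fun i _ => ?_
    rw [integral_mul_const, hiso.1 i, zero_mul]
  have h2 : ∫ x, -f x ∂(unifOn K) = 0 := by rw [integral_neg, hInt, neg_zero]
  rw [integral_eq_zero_iff_of_nonneg_ae (hs.ae_mem.mono fun x hx => by
    simpa using hfle x hx) (hs.integrable hK.1 (by fun_prop))] at h2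
  have h3 : unifOn K (interior K) = 0 := by
    refine measure_mono_null (fun x hx => ?_) (ae_iff.1 h2)
    have := hf x hx
    simp only [Pi.zero_apply, neg_eq_zero]
    exact this.ne
  rw [unifOn, Measure.smul_apply, Measure.restrict_apply isOpen_interior.measurableSet,
    Set.inter_eq_left.2 interior_subset, smul_eq_mul, mul_eq_zero] at h3
  rcases h3 with h3 | h3
  · exact (ENNReal.inv_ne_zero.2 hK.1.measure_lt_top.ne) h3
  · exact (isOpen_interior.measure_pos volume hK.2.2).ne' h3

lemma subLin_gauge (hK : IsConvexBody K) (h0 : (0 : EuclideanSpace ℝ (Fin n)) ∈ interior K) :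
    ∃ L, SubLin (gauge K) L := by
  have hn : K ∈ nhds (0 : EuclideanSpace ℝ (Fin n)) := mem_interior_iff_mem_nhds.1 h0
  obtain ⟨r, hr, hb⟩ := Metric.mem_nhds_iff.1 hn
  refine ⟨r⁻¹, continuous_gauge hK.2.1 hn, fun x => gauge_nonneg x,
    gauge_add_le hK.2.1 (absorbent_nhds_zero hn), fun c hc x => gauge_smul_of_nonneg hc x,
    fun x => ?_, by positivity⟩
  rw [← div_eq_inv_mul, le_div_iff₀ hr, mul_comm]
  exact mul_gauge_le_norm hb

end Body

/-! ### Polar coordinates -/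

section Polar

variable {n : ℕ}

lemma charFun_frozen_gaussian (t : EuclideanSpace ℝ (Fin n)) :
    charFun (stdGaussian n) t = Complex.exp (-‖t‖ ^ 2 / 2) := by
  rw [charFun_apply, stdGaussian, integral_withDensity_eq_integral_toReal_smul (by fun_prop)
    (ae_of_all _ fun x => ENNReal.ofReal_lt_top)]
  have h := GaussianFourier.integral_cexp_neg_mul_sq_norm_add (V := EuclideanSpace ℝ (Fin n))
    (b := 1 / 2) (by norm_num) Complex.I t
  have hpos : (0:ℝ) < 2 * π := by positivity
  have h1 : ∀ x : EuclideanSpace ℝ (Fin n),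
      (ENNReal.ofReal ((2 * π) ^ (-(n : ℝ) / 2) * Real.exp (-‖x‖ ^ 2 / 2))).toReal •
        Complex.exp (⟪x, t⟫ * Complex.I)
      = (((2 * π) ^ (-(n : ℝ) / 2) : ℝ) : ℂ) *
        Complex.exp (-(1 / 2) * ‖x‖ ^ 2 + Complex.I * ⟪t, x⟫) := by
    intro x
    rw [ENNReal.toReal_ofReal (by positivity), Complex.real_smul, Complex.ofReal_mul, mul_assoc,
      Complex.ofReal_exp, ← Complex.exp_add, real_inner_comm]
    congr 2
    push_cast
    ring
  simp_rw [h1]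
  rw [integral_const_mul, h, ← mul_assoc]
  have h2 : (((2 * π) ^ (-(n : ℝ) / 2) : ℝ) : ℂ) * ((π : ℂ) / (1 / 2)) ^
      ((Module.finrank ℝ (EuclideanSpace ℝ (Fin n)) : ℂ) / 2) = 1 := by
    have e1 : ((π : ℂ) / (1 / 2)) = ((2 * π : ℝ) : ℂ) := by push_cast; ring
    have e2 : ((Module.finrank ℝ (EuclideanSpace ℝ (Fin n)) : ℂ) / 2) = (((n:ℝ) / 2 : ℝ) : ℂ) := by
      simp
    rw [e1, e2, ← Complex.ofReal_cpow hpos.le, ← Complex.ofReal_mul, ← Real.rpow_add hpos]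
    norm_num
    rw [neg_div, neg_add_cancel, Real.rpow_zero]
  rw [h2, one_mul]
  congr 1
  rw [Complex.I_sq]; ring

lemma gau_eq_density : gau n = stdGaussian n := by
  have hi : Integrable (fun x : EuclideanSpace ℝ (Fin n) =>
      (2 * π) ^ (-(n : ℝ) / 2) * Real.exp (-‖x‖ ^ 2 / 2)) := by
    have h := (GaussianFourier.integrable_cexp_neg_mul_sq_norm_add
      (V := EuclideanSpace ℝ (Fin n)) (b := 1 / 2) (by norm_num) 0 0).re
    refine Integrable.const_mul (h.congr (ae_of_all _ fun x => ?_)) _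
    have : (-(1 / 2 : ℂ) * (‖x‖ : ℂ) ^ 2 + 0 * ((⟪(0 : EuclideanSpace ℝ (Fin n)), x⟫ : ℝ) : ℂ))
        = ((-‖x‖ ^ 2 / 2 : ℝ) : ℂ) := by push_cast; ring
    beta_reduce
    rw [this]
    exact Complex.exp_ofReal_re _
  have : IsFiniteMeasure (stdGaussian n) := by
    rw [stdGaussian]
    exact isFiniteMeasure_withDensity_ofReal hi.2
  apply Measure.ext_of_charFun
  ext t
  rw [charFun_frozen_gaussian, ProbabilityTheory.charFun_stdGaussian]

/-- The radial factor in the Gaussian integral of a positively homogeneous function. -/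
def radialFactor (n : ℕ) : ℝ :=
  ∫ r : Set.Ioi (0:ℝ), (2 * π) ^ (-(n : ℝ) / 2) * Real.exp (-(r:ℝ) ^ 2 / 2) * r
    ∂(Measure.volumeIoiPow (Module.finrank ℝ (EuclideanSpace ℝ (Fin n)) - 1))

lemma gau_integral_homogeneous (hn : 0 < n) {h : EuclideanSpace ℝ (Fin n) → ℝ}
    (hs : ∀ c : ℝ, 0 ≤ c → ∀ x, h (c • x) = c * h x) :
    ∫ g, h g ∂(gau n) = (∫ θ : Metric.sphere (0 : EuclideanSpace ℝ (Fin n)) 1, h θ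
      ∂(volume : Measure (EuclideanSpace ℝ (Fin n))).toSphere) * radialFactor n := by
  have : Nonempty (Fin n) := ⟨⟨0, hn⟩⟩
  rw [gau_eq_density, stdGaussian, integral_withDensity_eq_integral_toReal_smul (by fun_prop)
    (ae_of_all _ fun x => ENNReal.ofReal_lt_top)]
  set F : EuclideanSpace ℝ (Fin n) → ℝ := fun x =>
    (ENNReal.ofReal ((2 * π) ^ (-(n : ℝ) / 2) * Real.exp (-‖x‖ ^ 2 / 2))).toReal • h x with hF
  have h1 : ∫ x, F x = ∫ x : ({(0)}ᶜ : Set (EuclideanSpace ℝ (Fin n))), F x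
      ∂((volume : Measure (EuclideanSpace ℝ (Fin n))).comap (↑)) := by
    rw [integral_subtype_comap (measurableSet_singleton _).compl F, restrict_compl_singleton]
  rw [h1]
  have h2 := (volume : Measure (EuclideanSpace ℝ
    (Fin n))).measurePreserving_homeomorphUnitSphereProd.integral_comp
      (Homeomorph.measurableEmbedding _)
      (fun p => h p.1 * ((2 * π) ^ (-(n : ℝ) / 2) * Real.exp (-(p.2:ℝ) ^ 2 / 2) * p.2))
  rw [integral_prod_mul (f := fun θ : Metric.sphere (0 : EuclideanSpace ℝ (Fin n)) 1 => h θ)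
    (g := fun r : Set.Ioi (0:ℝ) => (2 * π) ^ (-(n : ℝ) / 2) * Real.exp (-(r:ℝ) ^ 2 / 2) * r)] at h2
  rw [radialFactor, ← h2]
  congr 1
  ext x
  have hx : x.1 ≠ 0 := x.2
  have hx' : 0 < ‖x.1‖ := norm_pos_iff.2 hx
  simp only [hF, homeomorphUnitSphereProd_apply_fst_coe, homeomorphUnitSphereProd_apply_snd_coe]
  rw [ENNReal.toReal_ofReal (by positivity), smul_eq_mul, hs _ (by positivity)]
  field_simp

end Polar

/-! ### Mean width of the Gaussian -/

section GaussNorm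

variable {n : ℕ}

/-- The first absolute moment of a standard normal variable. -/
def absMoment : ℝ := ∫ t, |t| ∂(ProbabilityTheory.gaussianReal 0 1)

lemma absMoment_pos : 0 < absMoment := by
  have hm : Integrable (fun t : ℝ => |t|) (ProbabilityTheory.gaussianReal 0 1) := by
    have := (ProbabilityTheory.IsGaussian.memLp_id (ProbabilityTheory.gaussianReal 0 1) 1
      (by simp)).integrable le_rfl
    exact this.abs
  have : NullSingletonClass (ProbabilityTheory.gaussianReal 0 1) :=
    ProbabilityTheory.nullSingletonClass_gaussianReal (by simp)
  rw [absMoment, integral_pos_iff_support_of_nonneg (fun t => abs_nonneg t) hm]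
  have h1 : Function.support (fun t : ℝ => |t|) = {0}ᶜ := by ext t; simp
  rw [h1, prob_compl_eq_one_sub (measurableSet_singleton _), measure_singleton]
  simp

lemma gau_integral_abs (i : Fin n) : ∫ g, |g i| ∂(gau n) = absMoment := by
  have h := ProbabilityTheory.measurePreserving_eval_multivariateGaussian
    (μ := (0 : EuclideanSpace ℝ (Fin n))) (S := (1 : Matrix (Fin n) (Fin n) ℝ))
    Matrix.PosSemidef.one (i := i)
  rw [ProbabilityTheory.multivariateGaussian_zero_one] at h
  simp only [PiLp.zero_apply, Matrix.one_apply_eq, Real.toNNReal_one] at h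
  rw [absMoment, ← h.map_eq, integral_map (by fun_prop) (by fun_prop)]

lemma sqrt_mul_absMoment_le (hn : 0 < n) : √n * absMoment ≤ ∫ g, ‖g‖ ∂(gau n) := by
  have hnr : (0:ℝ) < n := by exact_mod_cast hn
  have hi : ∀ i : Fin n, Integrable (fun g => |g i|) (gau n) := fun i =>
    gau_integrable (by fun_prop) 1 1 fun g => by
      have h1 : |g i| ≤ ‖g‖ := PiLp.norm_apply_le g i
      rw [abs_abs]; linarith
  have h1 : ∫ g, ∑ i, |g i| ∂(gau n) = n * absMoment := by
    rw [integral_finsetSum _ fun i _ => hi i]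
    simp [gau_integral_abs]
  have h2 : ∀ g : EuclideanSpace ℝ (Fin n), ∑ i, |g i| ≤ √n * ‖g‖ := by
    intro g
    rw [EuclideanSpace.norm_eq, ← Real.sqrt_mul hnr.le]
    refine Real.le_sqrt_of_sq_le ?_
    have := sq_sum_le_card_mul_sum_sq (s := (Finset.univ : Finset (Fin n))) (f := fun i => |g i|)
    simpa using this
  have h3 : n * absMoment ≤ √n * ∫ g, ‖g‖ ∂(gau n) := by
    rw [← h1, ← integral_const_mul]
    refine integral_mono (integrable_finsetSum _ fun i _ => hi i) ?_ h2
    have := gau_integrable_norm_pow (n := n) 1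
    simp only [pow_one] at this
    exact this.const_mul _
  have h4 : (n:ℝ) = √n * √n := (Real.mul_self_sqrt hnr.le).symm
  have h5 : 0 < √(n:ℝ) := Real.sqrt_pos.2 hnr
  have h6 : √(n:ℝ) * (√n * absMoment) ≤ √n * ∫ g, ‖g‖ ∂(gau n) := by
    rw [← mul_assoc, ← h4]; exact h3
  exact le_of_mul_le_mul_left h6 h5

lemma Mparam_mul_eq (hn : 0 < n) {K : Set (EuclideanSpace ℝ (Fin n))} :
    Mparam n K * ∫ g, ‖g‖ ∂(gau n) = ∫ g, gauge K g ∂(gau n) := by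
  have : Nonempty (Fin n) := ⟨⟨0, hn⟩⟩
  rw [gau_integral_homogeneous hn (h := gauge K) fun c hc x => by
      rw [gauge_smul_of_nonneg hc, smul_eq_mul],
    gau_integral_homogeneous hn (h := fun x => ‖x‖) fun c hc x => by
      rw [norm_smul, Real.norm_of_nonneg hc], Mparam, integral_smul_measure]
  set σ := (volume : Measure (EuclideanSpace ℝ (Fin n))).toSphere with hσ
  have h1 : ∫ θ : Metric.sphere (0 : EuclideanSpace ℝ (Fin n)) 1, ‖(θ : EuclideanSpace ℝ (Fin n))‖ ∂σ
      = (σ Set.univ).toReal := by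
    simp [Measure.real]
  have h2 : (σ Set.univ).toReal ≠ 0 := by
    refine (ENNReal.toReal_pos ?_ (measure_ne_top _ _)).ne'
    rw [hσ, Measure.toSphere_apply_univ]
    have := Metric.measure_ball_pos (volume : Measure (EuclideanSpace ℝ (Fin n))) 0 one_pos
    simp [hn.ne', this.ne']
  rw [h1, ENNReal.toReal_inv, smul_eq_mul]
  field_simp

end GaussNorm

/-! ### Choice of parameters -/

/-- The Gaussian mean of the gauge of an isotropic body. The exponent `m = 2⌈log (n+1)⌉` makes
`n e^{-m} ≤ 1/2`, and the time `T = m / lam` makes the growth factor `exp (lam T) = e^m`. -/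
lemma gau_integral_gauge_le {n : ℕ} (hn : 2 ≤ n) {K : Set (EuclideanSpace ℝ (Fin n))}
    (hK : IsConvexBody K) (hiso : IsIsotropicBody K) :
    ∫ g, gauge K g ∂(gau n) ≤
      8 / (Real.exp (-2) / 2) * kappaConst n * Real.sqrt (Real.log (n + 1)) := by
  have hn0 : 0 < n := by omega
  have hnr : (2:ℝ) ≤ n := by exact_mod_cast hn
  have hκ := two_le_kappa hn0
  set κ := kappaConst n with hκdef
  have hl : 1 ≤ Real.log (n + 1) := by
    rw [Real.le_log_iff_exp_le (by linarith)]
    linarith [Real.exp_one_lt_d9]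
  set l := Real.log (n + 1) with hldef
  obtain ⟨j, hj⟩ : ∃ j, ⌈l⌉₊ = j + 1 :=
    Nat.exists_eq_succ_of_ne_zero (Nat.ceil_pos.2 (by linarith)).ne'
  have hj1 : l ≤ (j:ℝ) + 1 := by
    have := Nat.le_ceil l
    rw [hj] at this; exact_mod_cast this
  have hj2 : (j:ℝ) + 1 < l + 1 := by
    have := Nat.ceil_lt_add_one (a := l) (by linarith)
    rw [hj] at this; exact_mod_cast this
  obtain ⟨L, H⟩ := subLin_gauge hK (hiso.zero_mem_interior hK)
  set x₀ : ℝ := Real.exp (-2) / 2 with hx₀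
  have hx₀p : 0 < x₀ := by positivity
  set m : ℝ := 2 * (j + 1) with hm
  have hmp : 0 < m := by positivity
  set T : ℝ := x₀ ^ 2 / (4 * m * κ ^ 2) with hTdef
  have hT : 0 < T := by positivity
  have main := gau_mean_le hn0 hK.1 hK.2.1 (k := 2 * j) (even_two_mul j) H
    (fun x hx => gauge_le_one_of_mem hx) (T := T) (x₀ := x₀) hT hx₀p rfl rfl
    hK.locState_unifOn hiso.bary_unifOn hiso.covMat_unifOn
  have hlamT : 4 * (((2 * j : ℕ) : ℝ) + 2) ^ 2 * kappaConst n ^ 2 / x₀ ^ 2 * T = m := by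
    rw [← hκdef, hTdef, hm]
    push_cast
    field_simp
  have hsmall : Real.exp m * 2 ^ (2 * j + 2) * (n * x₀ ^ (2 * j + 2)) ≤ 1 / 2 := by
    have e1 : Real.exp m * 2 ^ (2 * j + 2) * (n * x₀ ^ (2 * j + 2)) = n * Real.exp (-m) := by
      have : (2:ℝ) ^ (2 * j + 2) * x₀ ^ (2 * j + 2) = Real.exp (-2 * m) := by
        rw [← mul_pow, hx₀, mul_div_cancel₀ _ (two_ne_zero), ← Real.exp_nat_mul, hm]
        congr 1; push_cast; ring
      calc _ = n * (Real.exp m * (2 ^ (2 * j + 2) * x₀ ^ (2 * j + 2))) := by ring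
        _ = _ := by rw [this, ← Real.exp_add]; congr 2; ring
    have e2 : Real.exp (-m) ≤ (((n:ℝ) + 1) ^ 2)⁻¹ := by
      rw [Real.exp_neg]
      refine inv_anti₀ (by positivity) ?_
      rw [← Real.exp_log (show (0:ℝ) < n + 1 by linarith), ← Real.exp_nat_mul]
      refine Real.exp_le_exp.2 ?_
      rw [← hldef, hm]; push_cast; linarith
    rw [e1]
    calc (n:ℝ) * Real.exp (-m) ≤ n * (((n:ℝ) + 1) ^ 2)⁻¹ := by gcongr
      _ ≤ 1 / 2 := by
        rw [← div_eq_mul_inv, div_le_div_iff₀ (by positivity) (by norm_num)]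
        nlinarith
  rw [hlamT] at main
  set E := ∫ g, gauge K g ∂(gau n) with hE
  have hE0 : 0 ≤ E := integral_nonneg fun g => gauge_nonneg g
  have hU : √T * E ≤ 2 := by
    have h1 : 0 ≤ √T * E := by positivity
    nlinarith [mul_le_mul_of_nonneg_left hsmall h1]
  have hsT : √T = x₀ / (2 * κ * √m) := by
    have : T = (x₀ / (2 * κ * √m)) ^ 2 := by
      rw [hTdef, div_pow x₀ (2 * κ * √m), mul_pow, Real.sq_sqrt hmp.le]; ring
    rw [this, Real.sqrt_sq (by positivity)]
  have hsm : √m ≤ 2 * √l := by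
    have : (2:ℝ) = √4 := by
      rw [show (4:ℝ) = 2 ^ 2 by norm_num, Real.sqrt_sq (by norm_num)]
    rw [this, ← Real.sqrt_mul (by norm_num)]
    exact Real.sqrt_le_sqrt (by rw [hm]; linarith)
  have hm' : 0 < √m := Real.sqrt_pos.2 hmp
  have h3 : E ≤ 4 * κ * √m / x₀ := by
    rw [hsT, div_mul_eq_mul_div, div_le_iff₀ (by positivity)] at hU
    rw [le_div_iff₀ hx₀p]; linarith
  calc E ≤ 4 * κ * √m / x₀ := h3
    _ ≤ 4 * κ * (2 * √l) / x₀ := by gcongr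
    _ = 8 / x₀ * κ * √l := by ring

/-- For a convex body in isotropic position, `M(K) ≤ C κₙ √(log(n+1)) / √n`. -/
theorem M_bound_isotropic_kappa :
    ∃ C : ℝ, 0 < C ∧
      ∀ n : ℕ, 2 ≤ n → ∀ K : Set (EuclideanSpace ℝ (Fin n)),
        IsConvexBody K → IsIsotropicBody K →
        Mparam n K ≤ C * kappaConst n * Real.sqrt (Real.log (n + 1)) / Real.sqrt n := by
  have ha := absMoment_pos
  refine ⟨8 / (Real.exp (-2) / 2) / absMoment, by positivity, fun n hn K hK hiso => ?_⟩
  have hn0 : 0 < n := by omega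
  have hs : 0 < √(n:ℝ) := Real.sqrt_pos.2 (by exact_mod_cast hn0)
  have hM : 0 ≤ Mparam n K := by
    unfold Mparam
    exact integral_nonneg fun x => gauge_nonneg _
  have h1 := mul_le_mul_of_nonneg_left (sqrt_mul_absMoment_le hn0) hM
  rw [Mparam_mul_eq hn0] at h1
  have h2 := h1.trans (gau_integral_gauge_le hn hK hiso)
  rw [le_div_iff₀ hs]
  calc Mparam n K * √n = Mparam n K * (√n * absMoment) / absMoment := by field_simp
    _ ≤ 8 / (Real.exp (-2) / 2) * kappaConst n * Real.sqrt (Real.log (n + 1)) / absMoment := by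
      gcongr
    _ = _ := by ring

end
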